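/- (Topological Tverberg theorem for simplicial spheres.) Let r be a power of a prime and d ≥ 1. If X is a finite simplicial complex whose body |X| is topologically homeomorphic to the sphere S^{(d+1)(r-1)-1}, then X admits no almost r-embedding into ℝ^d; that is, for every continuous map f : |X| → ℝ^d there exist pairwise disjoint faces σ_1, …, σ_r of X such that f(σ_1) ∩ … ∩ f(σ_r) ≠ ∅. -/

import Mathlib

/-!
STATEMENT 0 (Topological Tverberg theorem for simplicial spheres).
If `r` is a prime power, `d ≥ 1`, and `X` is a finite simplicial complex whose body is
homeomorphic to the sphere `S^{(d+1)(r-1)-1}` (the unit sphere in `ℝ^{(d+1)(r-1)}`), then for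
every continuous map `f : |X| → ℝ^d` there are pairwise (vertex-)disjoint faces
`σ 0, …, σ (r-1)` of `X` whose images under `f` have a common point.
-/

open Geometry

/-!
Let `N = (d + 1) (r - 1)`, and use the field with `r` elements as the set of colours. Only two
properties of `X` matter: its homology vanishes below degree `N - 1`, and so does, in all degrees,
that of the complement of the open star of any nonempty face, by stereographic projection from an
interior point of the face. They yield a face with `N` vertices, built one vertex at a time, and
allow one to fill in coloured copies of `X`. The result is a sequence of chains `c₀, …, c_N`, where
`c_i` has simplices with `i + 1` vertices and `c₀` is a vertex. They live in the complex formed from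
one copy of `X` and one apex in each colour, where two copies of the same vertex are never joined,
and an apex is joined only to vertices of its own colour. The boundary of `c_{i+1}` is obtained from
`c_i` by an alternating power, `1` or `p - 1`, of the operator `∑ bᵢ (Tᵢ - 1)`, where the `bᵢ` are a
basis of the field over its prime field and `Tᵢ` shifts the colours by `bᵢ`.

If there are no Tverberg points, the test map sends every point to coordinates that are not the
same for all colours, so an equivariant approximation carries the `c_i` to chains on `d + 1` copies
of the set of colours whose simplices contain none of these copies entirely. Such simplices have at
most `N` vertices, so the image of `c_N` is degenerate. On such chains there is an operator that
satisfies the Weyl relation with `∑ bᵢ (Tᵢ - 1)`, which makes the alternating powers exact.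
Descending through the `c_i`, one concludes that the empty simplex is degenerate, which is absurd.
-/

noncomputable section

namespace Tverberg

/-! ### Ordered chains -/

section Chains

variable {R V W U M : Type*} [CommRing R] [AddCommMonoid M] [Module R M]

/-- Chains of the augmented ordered chain complex of the full simplex on the vertex set `V`. A list
of length `n` is an ordered simplex of dimension `n - 1`, possibly with repeated vertices, and the
empty list is the generator in degree `-1`. -/
abbrev Chain (R V : Type*) [CommRing R] := List V →₀ R

/-- The ordered simplex `l` as a generator of the chain module. -/
def simplex (l : List V) : Chain R V := Finsupp.single l 1

@[simp] lemma linearCombination_simplex (f : List V → M) (l : List V) :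
    Finsupp.linearCombination R f (simplex l) = f l := by
  simp [simplex]

lemma linearMap_ext {F G : Chain R V →ₗ[R] M} (h : ∀ l, F (simplex l) = G (simplex l)) :
    F = G :=
  Finsupp.lhom_ext' fun l => LinearMap.ext_ring (h l)

lemma linearMap_apply_eq {F G : Chain R V →ₗ[R] M} (h : ∀ l, F (simplex l) = G (simplex l))
    (c : Chain R V) : F c = G c := by
  rw [linearMap_ext h]

variable (R) in
/-- The chains all of whose simplices belong to `s`. -/
def chainsOn (s : Set (List V)) : Submodule R (Chain R V) := Finsupp.supported R R s

lemma mem_chainsOn {s : Set (List V)} {c : Chain R V} :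
    c ∈ chainsOn R s ↔ ∀ l ∈ c.support, l ∈ s :=
  Finsupp.mem_supported R c

lemma simplex_mem_chainsOn {s : Set (List V)} {l : List V} (h : l ∈ s) :
    (simplex l : Chain R V) ∈ chainsOn R s :=
  Finsupp.single_mem_supported R 1 h

lemma chainsOn_mono {s t : Set (List V)} (h : s ⊆ t) : chainsOn R s ≤ chainsOn R t :=
  Finsupp.supported_mono h

lemma mem_chainsOn_support (c : Chain R V) : c ∈ chainsOn R (c.support : Set (List V)) :=
  mem_chainsOn.2 fun _ hl => hl

lemma mem_chainsOn_inter {s t : Set (List V)} {c : Chain R V} (hs : c ∈ chainsOn R s)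
    (ht : c ∈ chainsOn R t) : c ∈ chainsOn R (s ∩ t) :=
  mem_chainsOn.2 fun l hl => ⟨mem_chainsOn.1 hs l hl, mem_chainsOn.1 ht l hl⟩

lemma linearMap_mem_of_mem_chainsOn {s : Set (List V)} {F : Chain R V →ₗ[R] M}
    {P : Submodule R M} (h : ∀ l ∈ s, F (simplex l) ∈ P) {c : Chain R V}
    (hc : c ∈ chainsOn R s) : F c ∈ P := by
  rw [chainsOn, Finsupp.supported_eq_span_single] at hc
  refine (Submodule.span_le (p := P.comap F)).2 ?_ hc
  rintro _ ⟨l, hl, rfl⟩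
  exact h l hl

lemma linearMap_apply_eq_of_mem_chainsOn {s : Set (List V)} {F G : Chain R V →ₗ[R] M}
    (h : ∀ l ∈ s, F (simplex l) = G (simplex l)) {c : Chain R V} (hc : c ∈ chainsOn R s) :
    F c = G c := by
  have hid : LinearMap.id c ∈ LinearMap.eqLocus F G := linearMap_mem_of_mem_chainsOn h hc
  exact hid

/-- The join of chains, which concatenates ordered simplices. -/
def join : Chain R V →ₗ[R] Chain R V →ₗ[R] Chain R V :=
  Finsupp.linearCombination R fun l => Finsupp.linearCombination R fun m => simplex (l ++ m)

@[simp] lemma join_simplex (l m : List V) :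
    join (simplex l : Chain R V) (simplex m) = simplex (l ++ m) := by
  simp [join]

lemma join_mem_chainsOn {s t u : Set (List V)} (h : ∀ l ∈ s, ∀ m ∈ t, l ++ m ∈ u)
    {c e : Chain R V} (hc : c ∈ chainsOn R s) (he : e ∈ chainsOn R t) :
    join c e ∈ chainsOn R u := by
  refine linearMap_mem_of_mem_chainsOn (F := join.flip e) (fun l hl => ?_) hc
  refine linearMap_mem_of_mem_chainsOn (F := join (simplex l)) (fun m hm => ?_) he
  simpa using simplex_mem_chainsOn (h l hl m hm)

@[simp] lemma nil_join (c : Chain R V) : join (simplex []) c = c :=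
  linearMap_apply_eq (F := join (simplex [])) (G := LinearMap.id) (by simp) c

lemma join_nil (c : Chain R V) : join c (simplex []) = c :=
  linearMap_apply_eq (F := join.flip (simplex [])) (G := LinearMap.id) (by simp) c

lemma join_assoc (a b c : Chain R V) : join (join a b) c = join a (join b c) := by
  have hsimplex (l m : List V) :
      join (join (simplex l) (simplex m)) c = join (simplex l) (join (simplex m) c) :=
    linearMap_apply_eq (F := join (join (simplex l) (simplex m)))
      (G := join (simplex l) ∘ₗ join (simplex m)) (by simp) c
  have hleft (l : List V) : join (join (simplex l) b) c = join (simplex l) (join b c) :=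
    linearMap_apply_eq (F := join.flip c ∘ₗ join (simplex l))
      (G := join (simplex l) ∘ₗ join.flip c) (by simpa using hsimplex l) b
  exact linearMap_apply_eq (F := join.flip c ∘ₗ join.flip b) (G := join.flip (join b c))
    (by simpa using hleft) a

/-- The cone over a chain with apex `a`, placed as first vertex. -/
def cone (a : V) : Chain R V →ₗ[R] Chain R V := join (simplex [a])

@[simp] lemma cone_simplex (a : V) (l : List V) :
    cone a (simplex l : Chain R V) = simplex (a :: l) := by
  simp [cone]

lemma cone_mem_chainsOn {a : V} {s t : Set (List V)} (h : ∀ l ∈ s, a :: l ∈ t) {c : Chain R V}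
    (hc : c ∈ chainsOn R s) : cone a c ∈ chainsOn R t :=
  join_mem_chainsOn (s := {[a]}) (by simpa using h) (simplex_mem_chainsOn rfl) hc

lemma join_cone (a : V) (c e : Chain R V) : join (cone a c) e = cone a (join c e) :=
  join_assoc _ _ _

lemma simplex_cons_join (a : V) (l : List V) (c : Chain R V) :
    join (simplex (a :: l)) c = cone a (join (simplex l) c) := by
  rw [← cone_simplex, join_cone]

/-- The boundary of an ordered simplex, from the Leibniz rule `∂(a * l) = l - a * ∂l`. -/
def boundarySimplex : List V → Chain R V
  | [] => 0
  | a :: l => simplex l - cone a (boundarySimplex l)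

/-- The boundary operator of the augmented ordered chain complex. -/
def boundary : Chain R V →ₗ[R] Chain R V := Finsupp.linearCombination R boundarySimplex

@[simp] lemma boundary_nil : boundary (simplex [] : Chain R V) = 0 := by
  simp [boundary, boundarySimplex]

lemma boundary_cons (a : V) (l : List V) :
    boundary (simplex (a :: l) : Chain R V) = simplex l - cone a (boundary (simplex l)) := by
  simp [boundary, boundarySimplex]

lemma boundary_cone (a : V) (c : Chain R V) : boundary (cone a c) = c - cone a (boundary c) :=
  linearMap_apply_eq (F := boundary ∘ₗ cone a) (G := LinearMap.id - cone a ∘ₗ boundary)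
    (by simp [boundary_cons]) c

@[simp] lemma boundary_boundary (c : Chain R V) : boundary (boundary c) = 0 := by
  refine linearMap_apply_eq (F := boundary ∘ₗ boundary) (G := 0) (fun l => ?_) c
  induction l with
  | nil => simp
  | cons a l ih =>
    simp only [LinearMap.comp_apply, LinearMap.zero_apply] at ih
    simp [boundary_cons, boundary_cone, ih]

lemma boundary_simplex_mem (l : List V) :
    boundary (simplex l : Chain R V) ∈
      chainsOn R {m : List V | m.length + 1 = l.length ∧ m.Sublist l} := by
  induction l with
  | nil => simp
  | cons a l ih =>
    rw [boundary_cons]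
    refine sub_mem (simplex_mem_chainsOn ⟨by simp, by simp⟩) (cone_mem_chainsOn ?_ ih)
    rintro m ⟨hlen, hsub⟩
    exact ⟨by simp [hlen], by simpa using hsub⟩

lemma boundary_mem_chainsOn {s t : Set (List V)}
    (h : ∀ l ∈ s, ∀ m : List V, m.Sublist l → m.length + 1 = l.length → m ∈ t)
    {c : Chain R V} (hc : c ∈ chainsOn R s) : boundary c ∈ chainsOn R t :=
  linearMap_mem_of_mem_chainsOn
    (fun l hl => chainsOn_mono (fun m hm => h l hl m hm.2 hm.1) (boundary_simplex_mem l)) hc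

lemma linearMap_ext_of_boundary {F G : Chain R V →ₗ[R] M}
    (h_nil : F (simplex []) = G (simplex []))
    (h_step : ∀ l ≠ [], F (boundary (simplex l)) = G (boundary (simplex l)) →
      F (simplex l) = G (simplex l)) : F = G := by
  have h_length (n : ℕ) : ∀ l : List V, l.length = n → F (simplex l) = G (simplex l) := by
    induction n with
    | zero => intro l hl; rwa [List.length_eq_zero_iff.1 hl]
    | succ n ih =>
      intro l hl
      refine h_step l (by rintro rfl; simp at hl) ?_
      refine linearMap_apply_eq_of_mem_chainsOn ?_ (boundary_simplex_mem l)
      rintro m ⟨hlen, -⟩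
      exact ih m (by lia)
  exact linearMap_ext fun l => h_length _ l rfl

lemma boundary_join_simplex (l : List V) (e : Chain R V) :
    boundary (join (simplex l) e) =
      join (boundary (simplex l)) e + (-1 : R) ^ l.length • join (simplex l) (boundary e) := by
  induction l with
  | nil => simp
  | cons a l ih =>
    rw [simplex_cons_join, boundary_cone, ih, simplex_cons_join, boundary_cons]
    simp only [map_sub, map_add, LinearMap.sub_apply, join_cone, map_smul, List.length_cons,
      pow_succ, mul_neg, mul_one, neg_smul]
    abel

lemma boundary_join {n : ℕ} {c : Chain R V} (hc : c ∈ chainsOn R {l : List V | l.length = n})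
    (e : Chain R V) :
    boundary (join c e) = join (boundary c) e + (-1 : R) ^ n • join c (boundary e) := by
  refine linearMap_apply_eq_of_mem_chainsOn (F := boundary ∘ₗ join.flip e)
    (G := join.flip e ∘ₗ boundary + (-1 : R) ^ n • join.flip (boundary e)) ?_ hc
  rintro l rfl
  simpa using boundary_join_simplex l e

/-- The chain map induced by a map of vertices. -/
def push (g : V → W) : Chain R V →ₗ[R] Chain R W := Finsupp.lmapDomain R R (List.map g)

@[simp] lemma push_simplex (g : V → W) (l : List V) :
    push g (simplex l : Chain R V) = simplex (l.map g) := by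
  simp [push, simplex]

lemma push_join (g : V → W) (a b : Chain R V) : push g (join a b) = join (push g a) (push g b) := by
  have hsimplex (l : List V) : push g (join (simplex l) b) = join (push g (simplex l)) (push g b) :=
    linearMap_apply_eq (F := push g ∘ₗ join (simplex l))
      (G := join (push g (simplex l)) ∘ₗ push g) (by simp) b
  exact linearMap_apply_eq (F := push g ∘ₗ join.flip b) (G := join.flip (push g b) ∘ₗ push g)
    (by simpa using hsimplex) a

lemma push_cone (g : V → W) (a : V) (c : Chain R V) :
    push g (cone a c) = cone (g a) (push g c) := by
  simp [cone, push_join]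

lemma push_boundary (g : V → W) (c : Chain R V) : push g (boundary c) = boundary (push g c) := by
  refine linearMap_apply_eq (F := push g ∘ₗ boundary) (G := boundary ∘ₗ push g) (fun l => ?_) c
  induction l with
  | nil => simp
  | cons a l ih =>
    simp only [LinearMap.comp_apply, push_simplex] at ih
    simp [boundary_cons, push_cone, ih]

lemma push_push (g : V → W) (k : W → U) (c : Chain R V) : push k (push g c) = push (k ∘ g) c :=
  linearMap_apply_eq (F := push k ∘ₗ push g) (by simp) c

lemma push_mem_chainsOn {g : V → W} {s : Set (List V)} {t : Set (List W)}
    (h : ∀ l ∈ s, l.map g ∈ t) {c : Chain R V} (hc : c ∈ chainsOn R s) :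
    push g c ∈ chainsOn R t :=
  linearMap_mem_of_mem_chainsOn (fun l hl => by simpa using simplex_mem_chainsOn (h l hl)) hc

lemma push_congr {g k : V → W} {c : Chain R V} {s : Set (List V)} (hc : c ∈ chainsOn R s)
    (h : ∀ l ∈ s, ∀ x ∈ l, g x = k x) : push g c = push k c :=
  linearMap_apply_eq_of_mem_chainsOn
    (fun l hl => by rw [push_simplex, push_simplex, List.map_congr_left (h l hl)]) hc

lemma push_id (c : Chain R V) : push id c = c :=
  linearMap_apply_eq (G := LinearMap.id) (by simp) c

/-- The lists of length `n` with entries in `S`. -/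
def listsIn (S : Set V) (n : ℕ) : Set (List V) := {l | l.length = n ∧ ∀ x ∈ l, x ∈ S}

lemma listsIn_mono {S T : Set V} (h : S ⊆ T) (n : ℕ) : listsIn S n ⊆ listsIn T n :=
  fun _ hl => ⟨hl.1, fun x hx => h (hl.2 x hx)⟩

lemma map_mem_listsIn {g : V → W} {S : Set V} {T : Set W} (h : Set.MapsTo g S T) {n : ℕ}
    {l : List V} (hl : l ∈ listsIn S n) : l.map g ∈ listsIn T n :=
  ⟨by simp [hl.1], by simpa using fun x hx => h (hl.2 x hx)⟩

end Chains

section ConeRecursion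

variable {R V W : Type*} [CommRing R]

/-- The operator `F` given on simplices of length at most `n` by the recursion of `coneRec`. -/
def coneRecAux (p : List V → W) (Ψ : Chain R V →ₗ[R] Chain R W) : ℕ → Chain R V →ₗ[R] Chain R W
  | 0 => 0
  | n + 1 => Finsupp.linearCombination R fun l =>
      if l.length = n + 1 then
        cone (p l) (Ψ (simplex l) - coneRecAux p Ψ n (boundary (simplex l))) else 0

/-- The operator `F` with `F [] = 0` and `F l = p l * (Ψ l - F (∂ l))`. For a chain map `Ψ`
vanishing on the empty simplex it is a null-homotopy of `Ψ`. -/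
def coneRec (p : List V → W) (Ψ : Chain R V →ₗ[R] Chain R W) : Chain R V →ₗ[R] Chain R W :=
  Finsupp.linearCombination R fun l => coneRecAux p Ψ l.length (simplex l)

@[simp] lemma coneRec_nil (p : List V → W) (Ψ : Chain R V →ₗ[R] Chain R W) :
    coneRec p Ψ (simplex []) = 0 := by
  simp [coneRec, coneRecAux]

lemma coneRec_simplex (p : List V → W) (Ψ : Chain R V →ₗ[R] Chain R W) {l : List V}
    (h : l ≠ []) :
    coneRec p Ψ (simplex l) =
      cone (p l) (Ψ (simplex l) - coneRec p Ψ (boundary (simplex l))) := by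
  obtain ⟨n, hn⟩ : ∃ n, l.length = n + 1 := Nat.exists_eq_succ_of_ne_zero (by simpa using h)
  have hfacets :
      coneRecAux p Ψ n (boundary (simplex l)) = coneRec p Ψ (boundary (simplex l)) := by
    refine linearMap_apply_eq_of_mem_chainsOn ?_ (boundary_simplex_mem l)
    rintro m ⟨hlen, -⟩
    obtain rfl : m.length = n := by lia
    simp [coneRec]
  rw [← hfacets]
  simp [coneRec, hn, coneRecAux]

lemma boundary_coneRec_add (p : List V → W) {Ψ : Chain R V →ₗ[R] Chain R W}
    (hΨ : ∀ c, boundary (Ψ c) = Ψ (boundary c)) (hΨ_nil : Ψ (simplex []) = 0) (c : Chain R V) :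
    boundary (coneRec p Ψ c) + coneRec p Ψ (boundary c) = Ψ c := by
  suffices boundary ∘ₗ coneRec p Ψ + coneRec p Ψ ∘ₗ boundary = Ψ from LinearMap.congr_fun this c
  refine linearMap_ext_of_boundary (by simp [hΨ_nil]) fun l hl ih => ?_
  simp only [LinearMap.add_apply, LinearMap.comp_apply, boundary_boundary, map_zero,
    add_zero] at ih ⊢
  rw [coneRec_simplex p Ψ hl, boundary_cone, map_sub, ih, hΨ, sub_self, map_zero, sub_zero,
    sub_add_cancel]

lemma coneRec_simplex_mem {p : List V → W} {Ψ : Chain R V →ₗ[R] Chain R W}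
    {C : List V → Set W} (hC : ∀ {m l : List V}, m.Sublist l → C m ⊆ C l)
    (hp : ∀ l ≠ [], p l ∈ C l) {l : List V}
    (hΨ : ∀ m, m.Sublist l → Ψ (simplex m) ∈ chainsOn R (listsIn (C m) m.length)) :
    coneRec p Ψ (simplex l) ∈ chainsOn R (listsIn (C l) (l.length + 1)) := by
  induction hn : l.length generalizing l with
  | zero => simp [List.length_eq_zero_iff.1 hn]
  | succ n ih =>
    have hne : l ≠ [] := by rintro rfl; simp at hn
    rw [coneRec_simplex p Ψ hne]
    have hfacets : coneRec p Ψ (boundary (simplex l)) ∈ chainsOn R (listsIn (C l) (n + 1)) := by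
      refine linearMap_mem_of_mem_chainsOn ?_ (boundary_simplex_mem l)
      rintro m ⟨hlen, hsub⟩
      exact chainsOn_mono (listsIn_mono (hC hsub) _)
        (ih (fun k hk => hΨ k (hk.trans hsub)) (by lia))
    refine cone_mem_chainsOn ?_ (sub_mem (hn ▸ hΨ l (List.Sublist.refl l)) hfacets)
    rintro m ⟨hlen, hmem⟩
    exact ⟨by simp [hlen], by simpa using ⟨hp l hne, hmem⟩⟩

end ConeRecursion

/-! ### Barycentric subdivision -/

section Subdivision

variable {R E E₁ : Type*} [CommRing R] [AddCommGroup E] [Module ℝ E] [AddCommGroup E₁]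
  [Module ℝ E₁]

/-- The barycenter of the entries of a list, counted with multiplicity. -/
def barycenter (l : List E) : E := (l.length : ℝ)⁻¹ • l.sum

lemma barycenter_mem_of_convex {l : List E} (h : l ≠ []) {C : Set E} (hC : Convex ℝ C)
    (hl : ∀ x ∈ l, x ∈ C) : barycenter l ∈ C := by
  have hn : (l.length : ℝ) ≠ 0 := by simpa using h
  have hsum : barycenter l = ∑ i : Fin l.length, (l.length : ℝ)⁻¹ • l[i] := by
    rw [← Finset.smul_sum, barycenter]
    exact congrArg _ (Fin.sum_univ_getElem l).symm
  rw [hsum]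
  exact hC.sum_mem (fun _ _ => by positivity) (by simp [hn]) fun i _ => hl _ (by simp)

lemma barycenter_map (A : E →ₗ[ℝ] E₁) (l : List E) : barycenter (l.map A) = A (barycenter l) := by
  simp [barycenter, map_list_sum]

/-- The chain homotopy between the identity and `subdiv`. -/
def subdivHomotopy : Chain R E →ₗ[R] Chain R E := coneRec barycenter LinearMap.id

/-- Barycentric subdivision. -/
def subdiv : Chain R E →ₗ[R] Chain R E :=
  LinearMap.id - boundary ∘ₗ subdivHomotopy - subdivHomotopy ∘ₗ boundary

lemma subdiv_apply (c : Chain R E) :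
    subdiv c = c - boundary (subdivHomotopy c) - subdivHomotopy (boundary c) := rfl

lemma boundary_subdiv (c : Chain R E) : boundary (subdiv c) = subdiv (boundary c) := by
  simp [subdiv_apply]

lemma subdivHomotopy_nil : subdivHomotopy (simplex [] : Chain R E) = 0 := coneRec_nil _ _

lemma subdivHomotopy_simplex {l : List E} (h : l ≠ []) :
    subdivHomotopy (simplex l : Chain R E) =
      cone (barycenter l) (simplex l - subdivHomotopy (boundary (simplex l))) :=
  coneRec_simplex _ _ h

lemma subdiv_nil : subdiv (simplex [] : Chain R E) = simplex [] := by
  simp [subdiv_apply, subdivHomotopy_nil]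

lemma subdiv_simplex {l : List E} (h : l ≠ []) :
    subdiv (simplex l : Chain R E) = cone (barycenter l) (subdiv (boundary (simplex l))) := by
  simp only [subdiv_apply, subdivHomotopy_simplex h, boundary_cone, boundary_boundary, map_sub,
    map_zero]
  abel

lemma subdivHomotopy_mem {C : Set E} (hC : Convex ℝ C) {n : ℕ} {c : Chain R E}
    (hc : c ∈ chainsOn R (listsIn C n)) :
    subdivHomotopy c ∈ chainsOn R (listsIn C (n + 1)) := by
  refine linearMap_mem_of_mem_chainsOn ?_ hc
  rintro l ⟨rfl, hl⟩
  have hhull : subdivHomotopy (simplex l : Chain R E) ∈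
      chainsOn R (listsIn (convexHull ℝ {x | x ∈ l}) (l.length + 1)) :=
    coneRec_simplex_mem (C := fun l : List E => convexHull ℝ {x | x ∈ l})
      (fun hsub => convexHull_mono fun _ hx => hsub.subset hx)
      (fun l hne => barycenter_mem_of_convex hne (convex_convexHull ℝ _)
        fun _ hx => subset_convexHull ℝ _ hx)
      fun m _ => simplex_mem_chainsOn ⟨rfl, fun _ hx => subset_convexHull ℝ _ hx⟩
  exact chainsOn_mono (listsIn_mono (convexHull_min hl hC) _) hhull

lemma push_subdivHomotopy (A : E →ₗ[ℝ] E₁) (c : Chain R E) :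
    push A (subdivHomotopy c) = subdivHomotopy (push A c) := by
  suffices push A ∘ₗ subdivHomotopy = subdivHomotopy (R := R) ∘ₗ push A from
    LinearMap.congr_fun this c
  refine linearMap_ext_of_boundary (by simp [subdivHomotopy_nil]) fun l hl ih => ?_
  simp only [LinearMap.comp_apply] at ih ⊢
  have hl' : l.map A ≠ [] := by simpa using hl
  rw [subdivHomotopy_simplex hl, push_cone, map_sub, ih, push_simplex,
    subdivHomotopy_simplex hl', barycenter_map, push_boundary, push_simplex]

/-- The `M`-fold barycentric subdivision. -/
def iterSubdiv (M : ℕ) : Chain R E →ₗ[R] Chain R E := subdiv ^ M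

/-- The chain homotopy between the identity and `iterSubdiv M`. -/
def iterHomotopy : ℕ → Chain R E →ₗ[R] Chain R E
  | 0 => 0
  | M + 1 => iterHomotopy M + subdivHomotopy ∘ₗ iterSubdiv M

lemma iterSubdiv_zero (c : Chain R E) : iterSubdiv 0 c = c := rfl

lemma iterSubdiv_succ (M : ℕ) (c : Chain R E) : iterSubdiv (M + 1) c = subdiv (iterSubdiv M c) := by
  simp [iterSubdiv, pow_succ']

lemma boundary_iterSubdiv (M : ℕ) (c : Chain R E) :
    boundary (iterSubdiv M c) = iterSubdiv M (boundary c) := by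
  induction M with
  | zero => simp [iterSubdiv_zero]
  | succ M ih => rw [iterSubdiv_succ, iterSubdiv_succ, boundary_subdiv, ih]

lemma iterSubdiv_nil (M : ℕ) : iterSubdiv M (simplex [] : Chain R E) = simplex [] := by
  induction M with
  | zero => simp [iterSubdiv_zero]
  | succ M ih => rw [iterSubdiv_succ, ih, subdiv_nil]

lemma iterSubdiv_eq (M : ℕ) (c : Chain R E) :
    iterSubdiv M c = c - boundary (iterHomotopy M c) - iterHomotopy M (boundary c) := by
  induction M with
  | zero => simp [iterSubdiv_zero, iterHomotopy]
  | succ M ih =>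
    rw [iterSubdiv_succ, subdiv_apply, boundary_iterSubdiv]
    nth_rewrite 1 [ih]
    simp only [iterHomotopy, LinearMap.add_apply, LinearMap.comp_apply, map_add]
    abel

lemma push_iterSubdiv (A : E →ₗ[ℝ] E₁) (M : ℕ) (c : Chain R E) :
    push A (iterSubdiv M c) = iterSubdiv M (push A c) := by
  induction M with
  | zero => simp [iterSubdiv_zero]
  | succ M ih =>
    rw [iterSubdiv_succ, iterSubdiv_succ, ← ih, subdiv_apply, subdiv_apply]
    simp only [map_sub, push_boundary, push_subdivHomotopy]

end Subdivision

section Mesh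

/-- The lists whose entries are pairwise at distance at most `δ`. -/
def fineLists {X : Type*} [PseudoMetricSpace X] (δ : ℝ) : Set (List X) :=
  {l | ∀ x ∈ l, ∀ y ∈ l, dist x y ≤ δ}

lemma fineLists_mono {X : Type*} [PseudoMetricSpace X] {δ ε : ℝ} (h : δ ≤ ε) :
    (fineLists δ : Set (List X)) ⊆ fineLists ε :=
  fun _ hl x hx y hy => (hl x hx y hy).trans h

lemma cons_mem_fineLists {X : Type*} [PseudoMetricSpace X] {a : X} {l : List X} {δ : ℝ}
    (hδ : 0 ≤ δ) (ha : ∀ x ∈ l, x ∈ Metric.closedBall a δ) (hl : l ∈ fineLists δ) :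
    a :: l ∈ fineLists δ := by
  intro x hx y hy
  rw [List.mem_cons] at hx hy
  rcases hx with rfl | hx <;> rcases hy with rfl | hy
  · simpa using hδ
  · rw [dist_comm]; exact ha y hy
  · exact ha x hx
  · exact hl x hx y hy

lemma push_mem_chainsOn_fineLists {R X Y : Type*} [CommRing R] [PseudoMetricSpace X]
    [PseudoMetricSpace Y] {g : X → Y} {S : Set X} {T : Set Y} (hg : Set.MapsTo g S T) {δ ε : ℝ}
    (hdist : ∀ x ∈ S, ∀ y ∈ S, dist x y ≤ δ → dist (g x) (g y) ≤ ε) {n : ℕ} {c : Chain R X}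
    (hc : c ∈ chainsOn R (listsIn S n ∩ fineLists δ)) :
    push g c ∈ chainsOn R (listsIn T n ∩ fineLists ε) := by
  refine push_mem_chainsOn ?_ hc
  rintro l ⟨hl, hfine⟩
  refine ⟨map_mem_listsIn hg hl, ?_⟩
  simp only [fineLists, Set.mem_ofPred_eq, List.forall_mem_map]
  exact fun x hx y hy => hdist x (hl.2 x hx) y (hl.2 y hy) (hfine x hx y hy)

lemma exists_mem_chainsOn_fineLists {R X : Type*} [CommRing R] [PseudoMetricSpace X]
    (c : Chain R X) : ∃ Δ : ℝ, c ∈ chainsOn R (fineLists Δ) := by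
  have hlist (l : List X) : ∃ Δ : ℝ, l ∈ fineLists Δ := by
    obtain ⟨Δ, hΔ⟩ := Metric.isBounded_iff.1 (List.finite_toSet l).isBounded
    exact ⟨Δ, fun x hx y hy => hΔ hx hy⟩
  choose Δ hΔ using hlist
  obtain ⟨B, hB⟩ := (c.support.finite_toSet.image Δ).bddAbove
  exact ⟨B, mem_chainsOn.2 fun l hl => fineLists_mono (hB ⟨l, hl, rfl⟩) (hΔ l)⟩

/-- The factor by which barycentric subdivision shrinks the mesh of simplices with `n` vertices. -/
def meshRatio (n : ℕ) : ℝ := n / (n + 1)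

lemma meshRatio_nonneg (n : ℕ) : 0 ≤ meshRatio n := by unfold meshRatio; positivity

lemma meshRatio_lt_one (n : ℕ) : meshRatio n < 1 := by
  rw [meshRatio, div_lt_one (by positivity)]
  linarith

lemma meshRatio_mono : Monotone meshRatio := by
  intro m n h
  have : (m : ℝ) ≤ n := by exact_mod_cast h
  rw [meshRatio, meshRatio, div_le_div_iff₀ (by positivity) (by positivity)]
  linarith

lemma exists_meshRatio_pow_mul_le (n : ℕ) (Δ : ℝ) {δ : ℝ} (hδ : 0 < δ) :
    ∃ M, meshRatio n ^ M * Δ ≤ δ := by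
  have hlim := (tendsto_pow_atTop_nhds_zero_of_lt_one (meshRatio_nonneg n)
    (meshRatio_lt_one n)).mul_const Δ
  rw [zero_mul] at hlim
  obtain ⟨M, hM⟩ := (hlim.eventually (gt_mem_nhds hδ)).exists
  exact ⟨M, hM.le⟩

variable {R E : Type*} [CommRing R] [SeminormedAddCommGroup E] [NormedSpace ℝ E]

lemma dist_barycenter_le {l : List E} {δ : ℝ} (hl : l ∈ fineLists δ) {y : E} (hy : y ∈ l) :
    dist (barycenter l) y ≤ meshRatio l.length * δ := by
  have hpos : 0 < l.length := List.length_pos_of_mem hy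
  have hn : (0 : ℝ) < l.length := by exact_mod_cast hpos
  have hδ : 0 ≤ δ := dist_nonneg.trans (hl y hy y hy)
  obtain ⟨i, hi, rfl⟩ := List.getElem_of_mem hy
  have hsub : barycenter l - l[i] = (l.length : ℝ)⁻¹ • ∑ j : Fin l.length, (l[j] - l[i]) := by
    have hs : ∑ j : Fin l.length, l[j] = l.sum := Fin.sum_univ_getElem l
    rw [barycenter, Finset.sum_sub_distrib, smul_sub, hs]
    simp [← Nat.cast_smul_eq_nsmul ℝ, smul_smul, hn.ne']
  have hsum : ‖∑ j : Fin l.length, (l[j] - l[i])‖ ≤ (l.length - 1) * δ := by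
    rw [← Finset.add_sum_erase _ _ (Finset.mem_univ (⟨i, hi⟩ : Fin l.length))]
    simp only [Fin.getElem_fin, sub_self, zero_add]
    refine (norm_sum_le_of_le (n := fun _ => δ) _ fun j _ => ?_).trans ?_
    · rw [← dist_eq_norm]
      exact hl _ (by simp) _ (by simp)
    · simp [Finset.card_erase_of_mem, Nat.cast_sub hpos]
  calc
    dist (barycenter l) l[i] = (l.length : ℝ)⁻¹ * ‖∑ j : Fin l.length, (l[j] - l[i])‖ := by
      rw [dist_eq_norm, hsub, norm_smul, norm_inv, Real.norm_natCast]
    _ ≤ (l.length : ℝ)⁻¹ * ((l.length - 1) * δ) := by gcongr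
    _ = (l.length - 1) / l.length * δ := by ring
    _ ≤ meshRatio l.length * δ := by
      rw [meshRatio]
      gcongr ?_ * δ
      rw [div_le_div_iff₀ hn (by positivity)]
      nlinarith

lemma subdiv_mem_fineLists {C : Set E} (hC : Convex ℝ C) {n : ℕ} {δ : ℝ} {c : Chain R E}
    (hc : c ∈ chainsOn R (listsIn C n ∩ fineLists δ)) :
    subdiv c ∈ chainsOn R (listsIn C n ∩ fineLists (meshRatio n * δ)) := by
  induction n generalizing c C with
  | zero =>
    refine linearMap_mem_of_mem_chainsOn ?_ hc
    rintro l ⟨⟨hlen, -⟩, -⟩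
    rw [List.length_eq_zero_iff.1 hlen, subdiv_nil]
    exact simplex_mem_chainsOn ⟨⟨rfl, by simp⟩, by simp [fineLists]⟩
  | succ n ih =>
    refine linearMap_mem_of_mem_chainsOn ?_ hc
    rintro l ⟨⟨hlen, hlC⟩, hfine⟩
    have hne : l ≠ [] := by rintro rfl; simp at hlen
    have hδ : 0 ≤ δ := by
      obtain ⟨x, hx⟩ := List.exists_mem_of_ne_nil l hne
      exact dist_nonneg.trans (hfine x hx x hx)
    set B := Metric.closedBall (barycenter l) (meshRatio (n + 1) * δ)
    have hfacets : boundary (simplex l : Chain R E) ∈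
        chainsOn R (listsIn (C ∩ B) n ∩ fineLists δ) := by
      refine chainsOn_mono ?_ (boundary_simplex_mem l)
      rintro m ⟨hm, hsub⟩
      refine ⟨⟨by lia, fun x hx => ⟨hlC x (hsub.subset hx), ?_⟩⟩,
        fun x hx y hy => hfine x (hsub.subset hx) y (hsub.subset hy)⟩
      rw [Metric.mem_closedBall, dist_comm, ← hlen]
      exact dist_barycenter_le hfine (hsub.subset hx)
    rw [subdiv_simplex hne]
    refine cone_mem_chainsOn ?_ (ih (hC.inter (convex_closedBall _ _)) hfacets)
    rintro m ⟨⟨hm, hmem⟩, hmfine⟩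
    refine ⟨⟨by simp [hm], ?_⟩, cons_mem_fineLists (mul_nonneg (meshRatio_nonneg _) hδ)
      (fun x hx => (hmem x hx).2) (fineLists_mono ?_ hmfine)⟩
    · simpa using ⟨barycenter_mem_of_convex hne hC hlC, fun x hx => (hmem x hx).1⟩
    · gcongr
      exact meshRatio_mono n.le_succ

lemma iterSubdiv_mem_fineLists {C : Set E} (hC : Convex ℝ C) {n : ℕ} {δ : ℝ} {c : Chain R E}
    (M : ℕ) (hc : c ∈ chainsOn R (listsIn C n ∩ fineLists δ)) :
    iterSubdiv M c ∈ chainsOn R (listsIn C n ∩ fineLists (meshRatio n ^ M * δ)) := by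
  induction M with
  | zero => simpa [iterSubdiv_zero] using hc
  | succ M ih =>
    rw [iterSubdiv_succ, pow_succ', mul_assoc]
    exact subdiv_mem_fineLists hC ih

lemma iterSubdiv_mem {C : Set E} (hC : Convex ℝ C) {n : ℕ} {c : Chain R E} (M : ℕ)
    (hc : c ∈ chainsOn R (listsIn C n)) : iterSubdiv M c ∈ chainsOn R (listsIn C n) := by
  obtain ⟨Δ, hΔ⟩ := exists_mem_chainsOn_fineLists c
  exact chainsOn_mono Set.inter_subset_left
    (iterSubdiv_mem_fineLists hC M (mem_chainsOn_inter hc hΔ))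

lemma iterHomotopy_mem {C : Set E} (hC : Convex ℝ C) {n : ℕ} {c : Chain R E} (M : ℕ)
    (hc : c ∈ chainsOn R (listsIn C n)) : iterHomotopy M c ∈ chainsOn R (listsIn C (n + 1)) := by
  induction M with
  | zero => simp [iterHomotopy]
  | succ M ih => exact add_mem ih (subdivHomotopy_mem hC (iterSubdiv_mem hC M hc))

lemma iterHomotopy_mem_fineLists {C : Set E} (hC : Convex ℝ C) {n : ℕ} {c : Chain R E} (M : ℕ)
    {δ : ℝ} (hc : c ∈ chainsOn R (listsIn C n ∩ fineLists δ)) :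
    iterHomotopy M c ∈ chainsOn R (listsIn C (n + 1) ∩ fineLists δ) := by
  refine linearMap_mem_of_mem_chainsOn ?_ hc
  rintro l ⟨⟨hlen, hlC⟩, hfine⟩
  have hhull : iterHomotopy M (simplex l : Chain R E) ∈
      chainsOn R (listsIn (convexHull ℝ {x | x ∈ l}) (n + 1)) :=
    iterHomotopy_mem (convex_convexHull ℝ _) M
      (simplex_mem_chainsOn ⟨hlen, fun x hx => subset_convexHull ℝ _ hx⟩)
  refine chainsOn_mono ?_ hhull
  intro m hm
  refine ⟨listsIn_mono (convexHull_min hlC hC) _ hm, fun x hx y hy => ?_⟩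
  obtain ⟨x', hx', y', hy', hle⟩ := convexHull_exists_dist_ge2 (hm.2 x hx) (hm.2 y hy)
  exact hle.trans (hfine x' hx' y' hy')

lemma exists_iterSubdiv_mem_fineLists {C : Set E} (hC : Convex ℝ C) {n : ℕ} {c : Chain R E}
    (hc : c ∈ chainsOn R (listsIn C n)) {δ : ℝ} (hδ : 0 < δ) :
    ∃ M, iterSubdiv M c ∈ chainsOn R (listsIn C n ∩ fineLists δ) := by
  obtain ⟨Δ, hΔ⟩ := exists_mem_chainsOn_fineLists c
  obtain ⟨M, hM⟩ := exists_meshRatio_pow_mul_le n Δ hδ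
  exact ⟨M, chainsOn_mono (Set.inter_subset_inter_right _ (fineLists_mono hM))
    (iterSubdiv_mem_fineLists hC M (mem_chainsOn_inter hc hΔ))⟩

end Mesh

section FineAcyclicity

variable {R E : Type*} [CommRing R]

variable (R) in
/-- A Vietoris-style acyclicity condition, in degree `n - 1`, for a subset `B` of a metric space:
every sufficiently fine cycle of ordered simplices with vertices in `B` bounds a chain of
prescribed fineness. -/
def FinelyAcyclic [PseudoMetricSpace E] (B : Set E) (n : ℕ) : Prop :=
  ∀ δ > 0, ∃ ε > 0, ∀ c ∈ chainsOn R (listsIn B n ∩ fineLists ε), boundary c = 0 →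
    ∃ b ∈ chainsOn R (listsIn B (n + 1) ∩ fineLists δ), boundary b = c

variable [SeminormedAddCommGroup E] [NormedSpace ℝ E]

lemma exists_fine_filling_of_convex {C : Set E} (hC : Convex ℝ C) (hne : C.Nonempty) {n : ℕ}
    {δ : ℝ} (hδ : 0 < δ) {c : Chain R E} (hc : c ∈ chainsOn R (listsIn C n ∩ fineLists δ))
    (hz : boundary c = 0) :
    ∃ b ∈ chainsOn R (listsIn C (n + 1) ∩ fineLists δ), boundary b = c := by
  obtain ⟨p, hp⟩ := hne
  have hcone : cone p c ∈ chainsOn R (listsIn C (n + 1)) := by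
    refine cone_mem_chainsOn ?_ hc
    rintro l ⟨⟨hlen, hl⟩, -⟩
    exact ⟨by simp [hlen], by simpa using ⟨hp, hl⟩⟩
  obtain ⟨M, hM⟩ := exists_iterSubdiv_mem_fineLists hC hcone hδ
  refine ⟨iterSubdiv M (cone p c) + iterHomotopy M c,
    add_mem hM (iterHomotopy_mem_fineLists hC M hc), ?_⟩
  rw [map_add, boundary_iterSubdiv, boundary_cone, hz, map_zero, sub_zero, iterSubdiv_eq, hz]
  simp

lemma finelyAcyclic_of_convex {C : Set E} (hC : Convex ℝ C) (hne : C.Nonempty) (n : ℕ) :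
    FinelyAcyclic R C n :=
  fun δ hδ => ⟨δ, hδ, fun _ hc hz => exists_fine_filling_of_convex hC hne hδ hc hz⟩

end FineAcyclicity

/-! ### Simplicial approximation -/

section Realization

variable {R V : Type*} [CommRing R] [Fintype V]

/-- The face of the standard simplex spanned by the vertices in `s`. -/
def stdFace (s : Finset V) : Set (V → ℝ) := stdSimplex ℝ V ∩ {y | ∀ v ∉ s, y v = 0}

/-- The geometric realization, inside the standard simplex, of an abstract simplicial complex `A`,
given as a set of finite vertex sets. Complexes are the lower sets; the empty face may belong to
`A` and contributes no points. -/
def realization (A : Set (Finset V)) : Set (V → ℝ) := ⋃ s ∈ A, stdFace s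

/-- The set of coordinates at which `y` is positive, which is the vertex set of the carrier of a
point `y` of the standard simplex. -/
def posSupport (y : V → ℝ) : Finset V := {v | 0 < y v}

lemma mem_posSupport {y : V → ℝ} {v : V} : v ∈ posSupport y ↔ 0 < y v := by simp [posSupport]

lemma posSupport_nonempty {y : V → ℝ} (hy : y ∈ stdSimplex ℝ V) :
    (posSupport y).Nonempty := by
  obtain ⟨v, -, hv⟩ := Finset.exists_lt_of_sum_lt (s := Finset.univ) (f := fun _ => (0 : ℝ))
    (g := y) (by simp [hy.2])
  exact ⟨v, mem_posSupport.2 hv⟩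

lemma convex_stdFace (s : Finset V) : Convex ℝ (stdFace s) := by
  refine (convex_stdSimplex ℝ V).inter fun x hx y hy a b _ _ _ v hv => ?_
  simp [hx v hv, hy v hv]

lemma isCompact_stdFace (s : Finset V) : IsCompact (stdFace s) := by
  refine (isCompact_stdSimplex ℝ V).inter_right ?_
  simp only [Set.ofPred_forall]
  exact isClosed_biInter fun v _ => isClosed_eq (continuous_apply v) continuous_const

lemma isCompact_realization (A : Set (Finset V)) : IsCompact (realization A) :=
  A.toFinite.isCompact_biUnion fun s _ => isCompact_stdFace s

lemma stdFace_mono {s t : Finset V} (h : s ⊆ t) : stdFace s ⊆ stdFace t :=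
  fun _ hy => ⟨hy.1, fun v hv => hy.2 v fun hs => hv (h hs)⟩

lemma realization_mono {A B : Set (Finset V)} (h : A ⊆ B) : realization A ⊆ realization B :=
  Set.biUnion_subset_biUnion_left h

lemma realization_subset_stdSimplex (A : Set (Finset V)) : realization A ⊆ stdSimplex ℝ V :=
  Set.iUnion₂_subset fun _ _ _ hy => hy.1

lemma stdFace_subset_realization {A : Set (Finset V)} {s : Finset V} (h : s ∈ A) :
    stdFace s ⊆ realization A :=
  Set.subset_biUnion_of_mem (u := fun s => stdFace s) h

lemma mem_stdFace_posSupport {y : V → ℝ} (hy : y ∈ stdSimplex ℝ V) : y ∈ stdFace (posSupport y) :=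
  ⟨hy, fun v hv => le_antisymm (by simpa [mem_posSupport] using hv) (hy.1 v)⟩

lemma posSupport_subset {s : Finset V} {y : V → ℝ} (hy : y ∈ stdFace s) : posSupport y ⊆ s := by
  intro v hv
  by_contra h
  rw [mem_posSupport, hy.2 v h] at hv
  exact lt_irrefl _ hv

lemma mem_realization_iff {A : Set (Finset V)} (hA : IsLowerSet A) {y : V → ℝ} :
    y ∈ realization A ↔ y ∈ stdSimplex ℝ V ∧ posSupport y ∈ A := by
  refine ⟨fun hy => ?_, fun ⟨hy, h⟩ => stdFace_subset_realization h (mem_stdFace_posSupport hy)⟩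
  obtain ⟨s, hs, h⟩ := Set.mem_iUnion₂.1 hy
  exact ⟨h.1, hA (posSupport_subset h) hs⟩

variable [DecidableEq V]

/-- The vertex `v` of the standard simplex. -/
def vertex (v : V) : V → ℝ := Pi.single v 1

lemma vertex_mem_stdFace {s : Finset V} {v : V} (h : v ∈ s) : vertex v ∈ stdFace s :=
  ⟨single_mem_stdSimplex ℝ v, fun w hw => by simp [vertex, ne_of_mem_of_not_mem h hw |>.symm]⟩

variable (R) in
lemma exists_iterSubdiv_vertices_mem (N : ℕ) {δ : ℝ} (hδ : 0 < δ) :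
    ∃ M, ∀ l : List V, l.length ≤ N → iterSubdiv M (simplex (l.map vertex) : Chain R (V → ℝ)) ∈
      chainsOn R (listsIn (stdFace l.toFinset) l.length ∩ fineLists δ) := by
  obtain ⟨Δ, hΔ⟩ := Metric.isBounded_iff.1 (isCompact_stdSimplex ℝ V).isBounded
  obtain ⟨M, hM⟩ := exists_meshRatio_pow_mul_le N (max Δ 0) hδ
  refine ⟨M, fun l hl => ?_⟩
  have hmesh : meshRatio l.length ^ M * max Δ 0 ≤ δ := by
    refine le_trans ?_ hM
    gcongr
    · exact meshRatio_nonneg _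
    · exact meshRatio_mono hl
  have hmem : l.map vertex ∈ listsIn (stdFace l.toFinset) l.length :=
    map_mem_listsIn (S := {v | v ∈ l}) (fun v hv => vertex_mem_stdFace (by simpa using hv))
      ⟨rfl, fun _ hv => hv⟩
  refine chainsOn_mono (Set.inter_subset_inter_right _ (fineLists_mono hmesh))
    (iterSubdiv_mem_fineLists (convex_stdFace _) M (simplex_mem_chainsOn ⟨hmem, ?_⟩))
  exact fun x hx y hy => (hΔ (hmem.2 x hx).1 (hmem.2 y hy).1).trans (le_max_left _ _)

end Realization

section Acyclicity

variable {R V W : Type*} [CommRing R] [DecidableEq V]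

/-- The chain map of a simplicial approximation: subdivide the standard simplex `M` times and send
the vertices of the subdivision to `W` by `η`. -/
def approx (η : (V → ℝ) → W) (M : ℕ) : Chain R V →ₗ[R] Chain R W :=
  push η ∘ₗ iterSubdiv M ∘ₗ push vertex

lemma approx_apply (η : (V → ℝ) → W) (M : ℕ) (c : Chain R V) :
    approx η M c = push η (iterSubdiv M (push vertex c)) := rfl

lemma approx_nil (η : (V → ℝ) → W) (M : ℕ) : approx η M (simplex [] : Chain R V) = simplex [] := by
  simp [approx_apply, iterSubdiv_nil]

lemma boundary_approx (η : (V → ℝ) → W) (M : ℕ) (c : Chain R V) :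
    boundary (approx η M c) = approx η M (boundary c) := by
  simp [approx_apply, push_boundary, ← boundary_iterSubdiv]

/-- The lists of length `n` whose entries span a face of `A`; these are the ordered simplices of
dimension `n - 1` of `A`. -/
def orderedFaces (A : Set (Finset V)) (n : ℕ) : Set (List V) := {l | l.length = n ∧ l.toFinset ∈ A}

variable (R) in
/-- The reduced homology of `A` with coefficients in `R` vanishes in degree `n - 1`. -/
def Acyclic (A : Set (Finset V)) (n : ℕ) : Prop :=
  ∀ c ∈ chainsOn R (orderedFaces A n), boundary c = 0 →
    ∃ b ∈ chainsOn R (orderedFaces A (n + 1)), boundary b = c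

/-- The method of acyclic carriers, with the full simplex on the vertices of a face as carrier. -/
lemma exists_boundary_eq_sub [Nonempty V] {A : Set (Finset V)} (hA : IsLowerSet A)
    {θ : Chain R V →ₗ[R] Chain R V} (hθ : ∀ c, boundary (θ c) = θ (boundary c))
    (hθ_nil : θ (simplex []) = simplex [])
    (hcarrier : ∀ l : List V, l.toFinset ∈ A →
      θ (simplex l) ∈ chainsOn R (listsIn {x | x ∈ l} l.length))
    {n : ℕ} {c : Chain R V} (hc : c ∈ chainsOn R (orderedFaces A n)) (hz : boundary c = 0) :
    ∃ e ∈ chainsOn R (orderedFaces A (n + 1)), boundary e = θ c - c := by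
  let p : List V → V := fun l => l.head?.getD (Classical.arbitrary V)
  have hp : ∀ l ≠ [], p l ∈ {x | x ∈ l} := by
    rintro (_ | ⟨a, l⟩) hl
    · exact absurd rfl hl
    · simp [p]
  refine ⟨coneRec p (θ - LinearMap.id) c, linearMap_mem_of_mem_chainsOn ?_ hc, ?_⟩
  · rintro l ⟨rfl, hl⟩
    have hmem : coneRec p (θ - LinearMap.id) (simplex l) ∈
        chainsOn R (listsIn {x | x ∈ l} (l.length + 1)) :=
      coneRec_simplex_mem (C := fun l => {x | x ∈ l}) (fun hsub _ hx => hsub.subset hx) hp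
        fun m hm => sub_mem
          (hcarrier m (hA (fun x hx => by simpa using hm.subset (by simpa using hx)) hl))
          (simplex_mem_chainsOn ⟨rfl, fun _ hx => hx⟩)
    refine chainsOn_mono ?_ hmem
    rintro m ⟨hlen, hm⟩
    exact ⟨hlen, hA (fun x hx => by simpa using hm x (by simpa using hx)) hl⟩
  · have hhom := boundary_coneRec_add p (Ψ := θ - LinearMap.id) (by simp [hθ]) (by simp [hθ_nil]) c
    simpa only [hz, map_zero, add_zero, LinearMap.sub_apply, LinearMap.id_apply] using hhom

variable [Fintype V]

lemma iterSubdiv_vertices_mem (M : ℕ) (l : List V) :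
    iterSubdiv M (simplex (l.map vertex) : Chain R (V → ℝ)) ∈
      chainsOn R (listsIn (stdFace l.toFinset) l.length) :=
  iterSubdiv_mem (convex_stdFace _) M (simplex_mem_chainsOn (map_mem_listsIn
    (S := {v | v ∈ l}) (fun v hv => vertex_mem_stdFace (by simpa using hv)) ⟨rfl, fun _ hv => hv⟩))

lemma approx_simplex_mem {A : Set (Finset V)} {η : (V → ℝ) → V}
    (hη : ∀ y ∈ realization A, η y ∈ posSupport y) (M : ℕ) {l : List V} (hl : l.toFinset ∈ A) :
    approx η M (simplex l : Chain R V) ∈ chainsOn R (listsIn {x | x ∈ l} l.length) := by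
  rw [approx_apply, push_simplex]
  refine push_mem_chainsOn (fun m hm => map_mem_listsIn (fun y hy => ?_) hm)
    (iterSubdiv_vertices_mem M l)
  simpa using posSupport_subset hy (hη y (stdFace_subset_realization hl hy))

lemma exists_dist_lt_of_continuousOn {X Y : Type*} [PseudoMetricSpace X] [PseudoMetricSpace Y]
    {S : Set X} (hS : IsCompact S) {u : X → Y} (hu : ContinuousOn u S) {δ : ℝ} (hδ : 0 < δ) :
    ∃ ε > 0, ∀ x ∈ S, ∀ y ∈ S, dist x y ≤ ε → dist (u x) (u y) < δ := by
  obtain ⟨ε, hε, h⟩ :=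
    Metric.uniformContinuousOn_iff.1 (hS.uniformContinuousOn_of_continuous hu) δ hδ
  exact ⟨ε / 2, by positivity, fun x hx y hy hxy => h x hx y hy (by linarith)⟩

lemma exists_pos_forall_exists_le {E I : Type*} [TopologicalSpace E] [Finite I] {B : Set E}
    (hB : IsCompact B) {κ : E → I → ℝ} (hκ : ContinuousOn κ B)
    (hpos : ∀ b ∈ B, ∃ v, 0 < κ b v) : ∃ τ > 0, ∀ b ∈ B, ∃ v, τ ≤ κ b v := by
  rcases B.eq_empty_or_nonempty with rfl | hne
  · exact ⟨1, one_pos, by simp⟩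
  have := Fintype.ofFinite I
  have hI : Nonempty I := (hpos _ hne.some_mem).nonempty
  have hmax : ContinuousOn (fun b => Finset.univ.sup' Finset.univ_nonempty (κ b)) B :=
    ContinuousOn.finset_sup'_apply _ fun i _ => (continuous_apply i).comp_continuousOn hκ
  obtain ⟨b₀, hb₀, hmin⟩ := hB.exists_isMinOn hne hmax
  refine ⟨Finset.univ.sup' Finset.univ_nonempty (κ b₀), ?_, fun b hb => ?_⟩
  · obtain ⟨v, hv⟩ := hpos b₀ hb₀
    exact hv.trans_le (Finset.le_sup' (κ b₀) (Finset.mem_univ v))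
  · obtain ⟨v, -, hv⟩ := Finset.exists_mem_eq_sup' Finset.univ_nonempty (κ b)
    exact ⟨v, hv ▸ hmin hb⟩

lemma approx_mem_fineLists {E : Type*} [PseudoMetricSpace E] {A : Set (Finset V)} {B : Set E}
    {u : (V → ℝ) → E} (hu : ContinuousOn u (realization A)) (huB : Set.MapsTo u (realization A) B)
    (n : ℕ) {δ : ℝ} (hδ : 0 < δ) :
    ∃ M, ∀ c ∈ chainsOn R (orderedFaces A n),
      approx u M c ∈ chainsOn R (listsIn B n ∩ fineLists δ) := by
  obtain ⟨ε, hε, hdist⟩ := exists_dist_lt_of_continuousOn (isCompact_realization A) hu hδ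
  obtain ⟨M, hM⟩ := exists_iterSubdiv_vertices_mem R (V := V) n hε
  refine ⟨M, fun c hc => linearMap_mem_of_mem_chainsOn ?_ hc⟩
  rintro l ⟨rfl, hl⟩
  have hface := stdFace_subset_realization hl
  rw [approx_apply, push_simplex]
  exact push_mem_chainsOn_fineLists (huB.mono_left hface)
    (fun x hx y hy h => (hdist x (hface hx) y (hface hy) h).le) (hM l le_rfl)

/-- A cycle of `A` is homologous to the cycle obtained by pushing a fine subdivision through `u` and
then sending each point of `B` to a vertex at which `κ` is large. -/
lemma acyclic_of_finelyAcyclic {E : Type*} [PseudoMetricSpace E] {A : Set (Finset V)}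
    (hA : IsLowerSet A) {B : Set E} (hB : IsCompact B) (hne : B.Nonempty) {u : (V → ℝ) → E}
    {κ : E → V → ℝ} (hu : ContinuousOn u (realization A)) (huB : Set.MapsTo u (realization A) B)
    (hκ : ContinuousOn κ B) (hpos : ∀ b ∈ B, ∃ v, 0 < κ b v)
    (hκA : ∀ b ∈ B, posSupport (κ b) ∈ A)
    (hcarrier : ∀ y ∈ realization A, posSupport (κ (u y)) ⊆ posSupport y) {n : ℕ}
    (hBn : FinelyAcyclic R B n) : Acyclic R A n := by
  intro c hc hz
  have : Nonempty V := (hpos _ hne.some_mem).nonempty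
  obtain ⟨τ, hτ, hτB⟩ := exists_pos_forall_exists_le hB hκ hpos
  choose! η hη using hτB
  obtain ⟨δ, hδ, hδB⟩ := exists_dist_lt_of_continuousOn hB hκ hτ
  obtain ⟨ε, hε, hfill⟩ := hBn δ hδ
  obtain ⟨M, hM⟩ := approx_mem_fineLists (R := R) hu huB n hε
  have hmem (y) (hy : y ∈ realization A) : (η ∘ u) y ∈ posSupport y :=
    hcarrier y hy (mem_posSupport.2 (hτ.trans_le (hη _ (huB hy))))
  obtain ⟨e, he, hbe⟩ := exists_boundary_eq_sub hA (boundary_approx (η ∘ u) M)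
    (approx_nil (η ∘ u) M) (fun l hl => approx_simplex_mem hmem M hl) hc hz
  obtain ⟨b, hb, hbb⟩ := hfill _ (hM c hc) (by rw [boundary_approx, hz, map_zero])
  refine ⟨push η b - e, sub_mem (push_mem_chainsOn ?_ hb) he, ?_⟩
  · rintro (_ | ⟨b₀, m⟩) ⟨⟨hlen, hmB⟩, hfine⟩
    · simp at hlen
    refine ⟨by simpa using hlen, hA ?_ (hκA b₀ (hmB b₀ (by simp)))⟩
    intro x hx
    obtain ⟨b', hb', rfl⟩ := List.mem_map.1 (List.mem_toFinset.1 hx)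
    have hclose := (dist_le_pi_dist (κ b') (κ b₀) (η b')).trans_lt
      (hδB b' (hmB b' hb') b₀ (hmB b₀ (by simp)) (hfine b' hb' b₀ (by simp)))
    rw [Real.dist_eq, abs_lt] at hclose
    rw [mem_posSupport]
    linarith [hη b' (hmB b' hb')]
  · rw [map_sub, hbe, ← push_boundary, hbb]
    simp [approx_apply, push_push]

end Acyclicity

/-! ### Homology of spheres and costars -/

section Costar

variable {V : Type*}

/-- The complement in `X` of the open star of `σ`. -/
def costar (X : Set (Finset V)) (σ : Finset V) : Set (Finset V) := {s | s ∈ X ∧ ¬ σ ⊆ s}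

lemma isLowerSet_costar {X : Set (Finset V)} (hX : IsLowerSet X) (σ : Finset V) :
    IsLowerSet (costar X σ) :=
  fun _ _ hst hs => ⟨hX hst hs.1, fun h => hs.2 (h.trans hst)⟩

lemma costar_subset (X : Set (Finset V)) (σ : Finset V) : costar X σ ⊆ X := fun _ hs => hs.1

variable [DecidableEq V]

/-- The barycenter of the face of the standard simplex spanned by `σ`. -/
def faceBarycenter (σ : Finset V) (v : V) : ℝ := if v ∈ σ then (σ.card : ℝ)⁻¹ else 0

variable {σ : Finset V} (hσ : σ.Nonempty)

/-- Subtracts from the coordinates in `σ` their minimum. This pushes every point of the standard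
simplex other than the barycenter of `σ` away from the open star of `σ`, up to scaling. -/
def subtractMin (y : V → ℝ) (v : V) : ℝ := y v - if v ∈ σ then σ.inf' hσ y else 0

lemma continuous_subtractMin : Continuous (subtractMin hσ) := by
  refine continuous_pi fun v => (continuous_apply v).sub ?_
  split_ifs
  · exact Continuous.finset_inf'_apply hσ fun i _ => continuous_apply i
  · exact continuous_const

variable [Fintype V]

include hσ in
lemma faceBarycenter_mem_stdFace : faceBarycenter σ ∈ stdFace σ := by
  have hcard : (σ.card : ℝ) ≠ 0 := by simpa using hσ.ne_empty
  refine ⟨⟨fun v => ?_, by simp [faceBarycenter, hcard]⟩, fun v hv => by simp [faceBarycenter, hv]⟩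
  unfold faceBarycenter
  split_ifs <;> positivity

lemma posSupport_faceBarycenter : posSupport (faceBarycenter σ) = σ := by
  ext v
  by_cases hv : v ∈ σ
  · simpa [mem_posSupport, faceBarycenter, hv] using ⟨v, hv⟩
  · simp [mem_posSupport, faceBarycenter, hv]

lemma posSupport_subtractMin_subset {y : V → ℝ} (hy : 0 ≤ y) :
    posSupport (subtractMin hσ y) ⊆ posSupport y := by
  have hmin : 0 ≤ σ.inf' hσ y := Finset.le_inf' _ _ fun v _ => hy v
  intro v hv
  simp only [mem_posSupport, subtractMin] at hv ⊢
  split_ifs at hv <;> linarith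

lemma not_subset_posSupport_subtractMin (y : V → ℝ) :
    ¬ σ ⊆ posSupport (subtractMin hσ y) := by
  intro hsub
  obtain ⟨v, hv, hmin⟩ := Finset.exists_mem_eq_inf' hσ y
  simpa [mem_posSupport, subtractMin, hv, hmin] using hsub hv

lemma exists_subtractMin_pos {y : V → ℝ} (hy : y ∈ stdSimplex ℝ V) (hne : y ≠ faceBarycenter σ) :
    ∃ v, 0 < subtractMin hσ y v := by
  by_contra! h
  have hon : ∀ v ∈ σ, y v = σ.inf' hσ y := fun v hv =>
    le_antisymm (by simpa [subtractMin, hv] using h v) (Finset.inf'_le _ hv)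
  have hoff : ∀ v ∉ σ, y v = 0 := fun v hv =>
    le_antisymm (by simpa [subtractMin, hv] using h v) (hy.1 v)
  have hsum : (σ.card : ℝ) * σ.inf' hσ y = 1 := by
    rw [← hy.2, ← Finset.sum_subset (Finset.subset_univ σ) fun v _ hv => hoff v hv,
      Finset.sum_congr rfl hon]
    simp
  refine hne (funext fun v => ?_)
  by_cases hv : v ∈ σ
  · rw [hon v hv, faceBarycenter, if_pos hv]
    exact eq_inv_of_mul_eq_one_right hsum
  · rw [hoff v hv, faceBarycenter, if_neg hv]

end Costar

section Sphere

open NormedSpace (norm_normalize norm_smul_normalize normalize_eq_self_of_norm_eq_one)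
open Metric (sphere closedBall)
open scoped InnerProductSpace

variable {R E : Type*} [CommRing R] [NormedAddCommGroup E] [InnerProductSpace ℝ E]

/-- The maps `s` and `t` are stereographic projection from `P` and its inverse. -/
lemma exists_stereographic_chart [FiniteDimensional ℝ E] {P : E} (hP : ‖P‖ = 1) {Q : Set E}
    (hQ : IsCompact Q) (hQS : Q ⊆ sphere 0 1) (hPQ : P ∉ Q) :
    ∃ (B : Set (ℝ ∙ P)ᗮ) (s : E → (ℝ ∙ P)ᗮ) (t : (ℝ ∙ P)ᗮ → E),
      IsCompact B ∧ Convex ℝ B ∧ B.Nonempty ∧ ContinuousOn s Q ∧ Set.MapsTo s Q B ∧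
      Continuous t ∧ (∀ w, t w ∈ sphere 0 1) ∧ (∀ w, t w ≠ P) ∧ ∀ x ∈ Q, t (s x) = x := by
  have hs : ContinuousOn (stereoToFun P) Q := by
    refine continuousOn_stereoToFun.mono fun x hx h => hPQ ?_
    have hPx : P = x := (inner_eq_one_iff_of_norm_eq_one hP (by simpa using hQS hx)).1 h
    rwa [hPx]
  obtain ⟨ρ, hρ⟩ := (hQ.image_of_continuousOn hs).isBounded.subset_closedBall 0
  refine ⟨closedBall 0 (max ρ 0), stereoToFun P, fun w => (stereoInvFun hP w : E),
    isCompact_closedBall _ _, convex_closedBall _ _, ⟨0, by simp⟩, hs,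
    fun x hx => Metric.closedBall_subset_closedBall (le_max_left _ _) (hρ ⟨x, hx, rfl⟩),
    continuous_subtype_val.comp (continuous_stereoInvFun hP), fun w => (stereoInvFun hP w).2,
    fun w h => stereoInvFun_ne_north_pole hP w (Subtype.ext h), fun x hx => ?_⟩
  exact congrArg Subtype.val (stereo_left_inv hP (x := ⟨x, hQS hx⟩) (ne_of_mem_of_not_mem hx hPQ))

lemma exists_fine_filling_of_notMem [FiniteDimensional ℝ E] {P : E} (hP : ‖P‖ = 1) {Q : Set E}
    (hQ : IsCompact Q) (hQS : Q ⊆ sphere 0 1) (hPQ : P ∉ Q) (n : ℕ) {δ : ℝ} (hδ : 0 < δ) :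
    ∃ ε > 0, ∀ c ∈ chainsOn R (listsIn Q n ∩ fineLists ε), boundary c = 0 →
      ∃ b ∈ chainsOn R (listsIn (sphere (0 : E) 1) (n + 1) ∩ fineLists δ), boundary b = c := by
  obtain ⟨B, s, t, hB, hBconv, hBne, hs, hsB, ht, htS, -, hts⟩ :=
    exists_stereographic_chart hP hQ hQS hPQ
  obtain ⟨δ', hδ', ht'⟩ := exists_dist_lt_of_continuousOn hB ht.continuousOn hδ
  obtain ⟨ε, hε, hs'⟩ := exists_dist_lt_of_continuousOn hQ hs hδ'
  refine ⟨ε, hε, fun c hc hz => ?_⟩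
  obtain ⟨b, hb, hbc⟩ := exists_fine_filling_of_convex hBconv hBne hδ'
    (push_mem_chainsOn_fineLists hsB (fun x hx y hy h => (hs' x hx y hy h).le) hc)
    (by rw [← push_boundary, hz, map_zero])
  refine ⟨push t b, push_mem_chainsOn_fineLists (fun w _ => htS w)
    (fun x hx y hy h => (ht' x hx y hy h).le) hb, ?_⟩
  have hid : push (t ∘ s) c = push id c := push_congr hc fun l hl x hx => hts x (hl.1.2 x hx)
  rw [← push_boundary, hbc, push_push, hid, push_id]

lemma dist_normalize_le {x y : E} (hx : 1 / 2 ≤ ‖x‖) (hy : 1 / 2 ≤ ‖y‖) :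
    dist (NormedSpace.normalize x) (NormedSpace.normalize y) ≤ 4 * dist x y := by
  have hx0 : 0 < ‖x‖ := by linarith
  have hsplit : NormedSpace.normalize x - NormedSpace.normalize y =
      ‖x‖⁻¹ • (x - y) + (‖x‖⁻¹ * (‖y‖ - ‖x‖) * ‖y‖⁻¹) • y := by
    have hcoeff : ‖x‖⁻¹ * (‖y‖ - ‖x‖) * ‖y‖⁻¹ = ‖x‖⁻¹ - ‖y‖⁻¹ := by
      have : 0 < ‖y‖ := by linarith
      field_simp
    rw [hcoeff, NormedSpace.normalize, NormedSpace.normalize, smul_sub, sub_smul]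
    abel
  have hinv : ‖x‖⁻¹ ≤ 2 := by
    rw [inv_le_comm₀ hx0 two_pos]
    linarith
  calc
    dist (NormedSpace.normalize x) (NormedSpace.normalize y)
      ≤ ‖x‖⁻¹ * ‖x - y‖ + ‖x‖⁻¹ * |‖y‖ - ‖x‖| := by
        rw [dist_eq_norm, hsplit]
        refine (norm_add_le _ _).trans_eq ?_
        simp only [norm_smul, norm_mul, norm_inv, abs_norm, Real.norm_eq_abs]
        field_simp
    _ ≤ 2 * ‖x - y‖ + 2 * ‖x - y‖ := by
        gcongr
        rw [norm_sub_rev]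
        exact abs_norm_sub_norm_le y x
    _ = 4 * dist x y := by rw [dist_eq_norm]; ring

/-- The union of the linear spans of the simplices of `c`. -/
def spanUnion (c : Chain R E) : Set E :=
  ⋃ l ∈ c.support, (Submodule.span ℝ {x | x ∈ l} : Set E)

lemma isClosed_spanUnion [FiniteDimensional ℝ E] (c : Chain R E) : IsClosed (spanUnion c) :=
  Set.Finite.isClosed_biUnion c.support.finite_toSet fun _ _ =>
    Submodule.closed_of_finiteDimensional _

lemma smul_mem_spanUnion {c : Chain R E} (a : ℝ) {x : E} (hx : x ∈ spanUnion c) :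
    a • x ∈ spanUnion c := by
  obtain ⟨l, hl, h⟩ := Set.mem_iUnion₂.1 hx
  exact Set.mem_iUnion₂.2 ⟨l, hl, Submodule.smul_mem _ _ h⟩

lemma exists_norm_eq_one_notMem_spanUnion {c : Chain R E} {n : ℕ} {S : Set E}
    (hc : c ∈ chainsOn R (listsIn S n)) (hn : n < Module.finrank ℝ E) :
    ∃ P : E, ‖P‖ = 1 ∧ P ∉ spanUnion c := by
  classical
  have hE : Nontrivial E := Module.nontrivial_of_finrank_pos (R := ℝ) (by lia)
  let T : Finset (Subspace ℝ E) :=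
    insert ⊥ (c.support.image fun l => Submodule.span ℝ {x | x ∈ l})
  have hproper : ∀ l ∈ c.support, Submodule.span ℝ {x | x ∈ l} ≠ ⊤ := by
    intro l hl htop
    have hle : Module.finrank ℝ (Submodule.span ℝ {x | x ∈ l}) ≤ l.length := by
      have hset : {x | x ∈ l} = (l.toFinset : Set E) := by ext; simp
      rw [hset]
      exact (finrank_span_finset_le_card _).trans (List.toFinset_card_le l)
    rw [htop, finrank_top, (mem_chainsOn.1 hc l hl).1] at hle
    lia
  have hT : ⊤ ∉ T := by
    simp only [T, Finset.mem_insert, Finset.mem_image, not_or, not_exists, not_and]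
    exact ⟨top_ne_bot, hproper⟩
  obtain ⟨x, hx⟩ :=
    (Set.ne_univ_iff_exists_notMem _).1 (Subspace.biUnion_ne_univ_of_top_notMem hT)
  simp only [T, Set.mem_iUnion, not_exists, Finset.mem_insert, Finset.mem_image] at hx
  have hx0 : x ≠ 0 := by simpa using hx ⊥ (Or.inl rfl)
  refine ⟨NormedSpace.normalize x, norm_normalize hx0, fun h => ?_⟩
  have hmem := smul_mem_spanUnion ‖x‖ h
  rw [norm_smul_normalize] at hmem
  obtain ⟨l, hl, hxl⟩ := Set.mem_iUnion₂.1 hmem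
  exact hx _ (Or.inr ⟨l, hl, rfl⟩) hxl

lemma exists_convex_subset_spanUnion {c : Chain R E} {n : ℕ}
    (hc : c ∈ chainsOn R (listsIn (sphere 0 1) n ∩ fineLists (1 / 2))) {l : List E}
    (hl : l ∈ c.support) :
    ∃ C : Set E, Convex ℝ C ∧ C ⊆ {x | 1 / 2 ≤ ‖x‖} ∩ spanUnion c ∧ l ∈ listsIn C n := by
  obtain ⟨⟨hlen, hsphere⟩, hfine⟩ := mem_chainsOn.1 hc l hl
  obtain rfl | hne := eq_or_ne l []
  · exact ⟨∅, convex_empty, Set.empty_subset _, hlen, by simp⟩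
  obtain ⟨x₀, hx₀⟩ := List.exists_mem_of_ne_nil l hne
  have hnorm : ‖x₀‖ = 1 := by simpa using hsphere x₀ hx₀
  refine ⟨Submodule.span ℝ {x | x ∈ l} ∩ closedBall x₀ (1 / 2),
    (Submodule.convex _).inter (convex_closedBall _ _), ?_, hlen,
    fun x hx => ⟨Submodule.subset_span hx, hfine x hx x₀ hx₀⟩⟩
  rintro x ⟨hspan, hball⟩
  refine ⟨?_, Set.mem_iUnion₂.2 ⟨l, hl, hspan⟩⟩
  rw [mem_closedBall_iff_norm'] at hball
  have htri := norm_sub_norm_le x₀ x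
  change 1 / 2 ≤ ‖x‖
  linarith

/-- The chain `c'` is the radial projection to the sphere of an iterated subdivision of `c`. -/
lemma exists_spherical_subdivision {c : Chain R E} {n : ℕ} {ε : ℝ} (hε : ε ≤ 1 / 2)
    (hc : c ∈ chainsOn R (listsIn (sphere 0 1) n ∩ fineLists ε)) (hz : boundary c = 0) {δ : ℝ}
    (hδ : 0 < δ) :
    ∃ c' ∈ chainsOn R (listsIn (sphere 0 1 ∩ spanUnion c) n ∩ fineLists δ),
      ∃ h ∈ chainsOn R (listsIn (sphere 0 1) (n + 1) ∩ fineLists (4 * ε)),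
        boundary h = c - c' := by
  set T : Set E := {x | 1 / 2 ≤ ‖x‖} ∩ spanUnion c
  have hT : Set.MapsTo NormedSpace.normalize T (sphere 0 1 ∩ spanUnion c) := by
    rintro x ⟨hx : 1 / 2 ≤ ‖x‖, hspan⟩
    have hx0 : x ≠ 0 := by rintro rfl; norm_num at hx
    exact ⟨by simpa using norm_normalize hx0, smul_mem_spanUnion _ hspan⟩
  have hlip {η η' : ℝ} (h : 4 * η ≤ η') : ∀ x ∈ T, ∀ y ∈ T, dist x y ≤ η →
      dist (NormedSpace.normalize x) (NormedSpace.normalize y) ≤ η' := fun x hx y hy hxy =>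
    (dist_normalize_le hx.1 hy.1).trans (by linarith)
  have hc_univ : c ∈ chainsOn R (listsIn Set.univ n ∩ fineLists ε) :=
    chainsOn_mono (Set.inter_subset_inter_left _ (listsIn_mono (Set.subset_univ _) n)) hc
  have hcarrier {l : List E} (hl : l ∈ c.support) := exists_convex_subset_spanUnion
    (chainsOn_mono (Set.inter_subset_inter_right _ (fineLists_mono hε)) hc) hl
  have hsubdiv (M : ℕ) : iterSubdiv M c ∈ chainsOn R (listsIn T n) := by
    refine linearMap_mem_of_mem_chainsOn (fun l hl => ?_) (mem_chainsOn_support c)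
    obtain ⟨C, hC, hCT, hlC⟩ := hcarrier hl
    exact chainsOn_mono (listsIn_mono hCT n) (iterSubdiv_mem hC M (simplex_mem_chainsOn hlC))
  have hhomotopy (M : ℕ) : iterHomotopy M c ∈ chainsOn R (listsIn T (n + 1)) := by
    refine linearMap_mem_of_mem_chainsOn (fun l hl => ?_) (mem_chainsOn_support c)
    obtain ⟨C, hC, hCT, hlC⟩ := hcarrier hl
    exact chainsOn_mono (listsIn_mono hCT _) (iterHomotopy_mem hC M (simplex_mem_chainsOn hlC))
  obtain ⟨M, hM⟩ := exists_iterSubdiv_mem_fineLists convex_univ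
    (chainsOn_mono Set.inter_subset_left hc_univ) (δ := δ / 4) (by positivity)
  refine ⟨push NormedSpace.normalize (iterSubdiv M c),
    push_mem_chainsOn_fineLists hT (hlip (η := δ / 4) (by linarith))
      (mem_chainsOn_inter (hsubdiv M) (chainsOn_mono Set.inter_subset_right hM)),
    push NormedSpace.normalize (iterHomotopy M c), push_mem_chainsOn_fineLists
      (hT.mono_right Set.inter_subset_left) (hlip le_rfl) (mem_chainsOn_inter (hhomotopy M)
        (chainsOn_mono Set.inter_subset_right
          (iterHomotopy_mem_fineLists convex_univ M hc_univ))), ?_⟩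
  have hfix : push NormedSpace.normalize c = push id c := push_congr hc fun l hl x hx =>
    normalize_eq_self_of_norm_eq_one (by simpa using hl.1.2 x hx)
  rw [← push_boundary, iterSubdiv_eq, hz, map_zero, sub_zero, map_sub, hfix, push_id,
    sub_sub_cancel]

lemma finelyAcyclic_sphere [FiniteDimensional ℝ E] {n : ℕ} (hn : n < Module.finrank ℝ E) :
    FinelyAcyclic R (sphere (0 : E) 1) n := by
  intro δ hδ
  refine ⟨min (1 / 2) (δ / 4), by positivity, fun c hc hz => ?_⟩
  obtain ⟨P, hP, hPc⟩ :=
    exists_norm_eq_one_notMem_spanUnion (chainsOn_mono Set.inter_subset_left hc) hn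
  obtain ⟨ε, hε, hfill⟩ := exists_fine_filling_of_notMem (R := R) hP
    ((isCompact_sphere 0 1).inter_right (isClosed_spanUnion c)) Set.inter_subset_left
    (fun h => hPc h.2) n hδ
  obtain ⟨c', hc', h, hh, hbh⟩ := exists_spherical_subdivision (min_le_left _ _) hc hz hε
  have hz' : boundary c' = 0 := by
    rw [← sub_sub_cancel c c', ← hbh, map_sub, hz, boundary_boundary, sub_zero]
  obtain ⟨b, hb, hbc⟩ := hfill c' hc' hz'
  have hfine : 4 * min (1 / 2) (δ / 4) ≤ δ := by
    linarith [min_le_right (1 / 2 : ℝ) (δ / 4)]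
  refine ⟨b + h, add_mem hb
    (chainsOn_mono (Set.inter_subset_inter_right _ (fineLists_mono hfine)) hh), ?_⟩
  rw [map_add, hbc, hbh, add_sub_cancel]

end Sphere

section SphereHomeo

open Metric (sphere)

variable {R V E : Type*} [CommRing R] [Fintype V] [NormedAddCommGroup E]

/-- A homeomorphism between the realization of `X` and the unit sphere of `E`. Both directions are
encoded by maps of the ambient vector spaces, whose values elsewhere are irrelevant. -/
structure SphereHomeo (X : Set (Finset V)) (E : Type*) [NormedAddCommGroup E] where
  toSphere : (V → ℝ) → E
  ofSphere : E → V → ℝ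
  continuousOn_toSphere : ContinuousOn toSphere (realization X)
  continuousOn_ofSphere : ContinuousOn ofSphere (sphere 0 1)
  mapsTo_toSphere : Set.MapsTo toSphere (realization X) (sphere 0 1)
  mapsTo_ofSphere : Set.MapsTo ofSphere (sphere 0 1) (realization X)
  ofSphere_toSphere : ∀ y ∈ realization X, ofSphere (toSphere y) = y
  toSphere_ofSphere : ∀ x ∈ sphere (0 : E) 1, toSphere (ofSphere x) = x

variable [DecidableEq V] [InnerProductSpace ℝ E] [FiniteDimensional ℝ E] {X : Set (Finset V)}

/-- The complement of the open star of `σ` avoids the barycenter of `σ`, so stereographic projection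
from the barycenter compares it with a ball. -/
lemma acyclic_costar (hX : IsLowerSet X) (φ : SphereHomeo X E) {σ : Finset V} (hσ : σ ∈ X)
    (hne : σ.Nonempty) (n : ℕ) : Acyclic R (costar X σ) n := by
  have hsub : realization (costar X σ) ⊆ realization X := realization_mono (costar_subset X σ)
  have hβ : faceBarycenter σ ∈ realization X :=
    stdFace_subset_realization hσ (faceBarycenter_mem_stdFace hne)
  have hPQ : φ.toSphere (faceBarycenter σ) ∉ φ.toSphere '' realization (costar X σ) := by
    rintro ⟨y, hy, h⟩
    have hyβ : y = faceBarycenter σ := by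
      rw [← φ.ofSphere_toSphere y (hsub hy), h, φ.ofSphere_toSphere _ hβ]
    rw [mem_realization_iff (isLowerSet_costar hX σ), hyβ, posSupport_faceBarycenter] at hy
    exact hy.2.2 Finset.Subset.rfl
  obtain ⟨B, s, t, hB, hBconv, hBne, hs, hsB, ht, htS, htP, hts⟩ := exists_stereographic_chart
    (by simpa using φ.mapsTo_toSphere hβ)
    ((isCompact_realization _).image_of_continuousOn (φ.continuousOn_toSphere.mono hsub))
    (by rintro _ ⟨y, hy, rfl⟩; exact φ.mapsTo_toSphere (hsub hy)) hPQ
  have hreal (b) : φ.ofSphere (t b) ∈ stdSimplex ℝ V ∧ posSupport (φ.ofSphere (t b)) ∈ X :=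
    (mem_realization_iff hX).1 (φ.mapsTo_ofSphere (htS b))
  refine acyclic_of_finelyAcyclic (isLowerSet_costar hX σ) hB hBne (u := s ∘ φ.toSphere)
    (κ := fun b => subtractMin hne (φ.ofSphere (t b)))
    (hs.comp (φ.continuousOn_toSphere.mono hsub) (Set.mapsTo_image _ _))
    (hsB.comp (Set.mapsTo_image _ _))
    ((continuous_subtractMin hne).comp_continuousOn
      (φ.continuousOn_ofSphere.comp ht.continuousOn fun b _ => htS b))
    (fun b _ => exists_subtractMin_pos hne (hreal b).1 fun h => htP b ?_)
    (fun b _ => ⟨hX (posSupport_subtractMin_subset hne (hreal b).1.1) (hreal b).2,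
      not_subset_posSupport_subtractMin hne _⟩)
    (fun y hy => ?_) (finelyAcyclic_of_convex hBconv hBne n)
  · rw [← h, φ.toSphere_ofSphere _ (htS b)]
  · rw [Function.comp_apply, hts _ ⟨y, hy, rfl⟩, φ.ofSphere_toSphere y (hsub hy)]
    exact posSupport_subtractMin_subset hne (realization_subset_stdSimplex X (hsub hy)).1

lemma acyclic_of_sphereHomeo (hX : IsLowerSet X) (φ : SphereHomeo X E) {n : ℕ}
    (hn : n < Module.finrank ℝ E) : Acyclic R X n := by
  have hE : Nontrivial E := Module.nontrivial_of_finrank_pos (R := ℝ) (by lia)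
  refine acyclic_of_finelyAcyclic hX (isCompact_sphere (0 : E) 1)
    (NormedSpace.sphere_nonempty.2 zero_le_one) φ.continuousOn_toSphere φ.mapsTo_toSphere
    φ.continuousOn_ofSphere (fun b hb => ?_)
    (fun b hb => ((mem_realization_iff hX).1 (φ.mapsTo_ofSphere hb)).2)
    (fun y hy => by rw [φ.ofSphere_toSphere y hy]) (finelyAcyclic_sphere hn)
  exact (posSupport_nonempty (realization_subset_stdSimplex X (φ.mapsTo_ofSphere hb))).imp
    fun _ => mem_posSupport.1

end SphereHomeo

/-! ### Links -/

section Link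

variable {R V : Type*} [CommRing R] [DecidableEq V]

/-- Deletion of the ordered simplices that have `v` as a vertex. -/
def deleteVertex (v : V) : Chain R V →ₗ[R] Chain R V :=
  Finsupp.linearCombination R fun l => if v ∈ l then 0 else simplex l

lemma deleteVertex_simplex (v : V) (l : List V) :
    deleteVertex v (simplex l : Chain R V) = if v ∈ l then 0 else simplex l := by
  simp [deleteVertex]

lemma deleteVertex_cone_self (v : V) (c : Chain R V) : deleteVertex v (cone v c) = 0 :=
  linearMap_apply_eq (F := deleteVertex v ∘ₗ cone v) (G := 0) (by simp [deleteVertex_simplex]) c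

lemma deleteVertex_cone_of_ne {v a : V} (h : v ≠ a) (c : Chain R V) :
    deleteVertex v (cone a c) = cone a (deleteVertex v c) := by
  refine linearMap_apply_eq (F := deleteVertex v ∘ₗ cone a) (G := cone a ∘ₗ deleteVertex v)
    (fun l => ?_) c
  by_cases hv : v ∈ l <;> simp [deleteVertex_simplex, h, hv]

/-- The link of `v` in a chain, as the part of the boundary of the open star of `v` that avoids `v`.
It anticommutes with the boundary. -/
def linkVertex (v : V) : Chain R V →ₗ[R] Chain R V :=
  deleteVertex v ∘ₗ boundary - boundary ∘ₗ deleteVertex v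

lemma linkVertex_apply (v : V) (c : Chain R V) :
    linkVertex v c = deleteVertex v (boundary c) - boundary (deleteVertex v c) := rfl

lemma boundary_linkVertex (v : V) (c : Chain R V) :
    boundary (linkVertex v c) = -linkVertex v (boundary c) := by
  simp [linkVertex_apply]

lemma linkVertex_nil (v : V) : linkVertex v (simplex [] : Chain R V) = 0 := by
  simp [linkVertex_apply, deleteVertex_simplex]

lemma linkVertex_cons_self (v : V) (l : List V) :
    linkVertex v (simplex (v :: l) : Chain R V) = deleteVertex v (simplex l) := by
  simp [linkVertex_apply, boundary_cons, deleteVertex_cone_self, deleteVertex_simplex v (v :: l)]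

lemma linkVertex_cons_of_ne {v a : V} (h : v ≠ a) (l : List V) :
    linkVertex v (simplex (a :: l) : Chain R V) = -cone a (linkVertex v (simplex l)) := by
  rw [linkVertex_apply, boundary_cons, map_sub, deleteVertex_cone_of_ne h, ← cone_simplex,
    deleteVertex_cone_of_ne h, boundary_cone, linkVertex_apply, map_sub]
  abel

lemma linkVertex_simplex_mem (v : V) (l : List V) :
    linkVertex v (simplex l : Chain R V) ∈
      chainsOn R {m : List V | m.length + 1 = l.length ∧ m ⊆ l ∧ v ∈ l ∧ v ∉ m} := by
  induction l with
  | nil => simp [linkVertex_nil]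
  | cons a l ih =>
    by_cases h : v = a
    · subst h
      rw [linkVertex_cons_self, deleteVertex_simplex]
      split_ifs with hv
      · exact zero_mem _
      · exact simplex_mem_chainsOn ⟨by simp, by simp, by simp, hv⟩
    · rw [linkVertex_cons_of_ne h]
      refine neg_mem (cone_mem_chainsOn ?_ ih)
      rintro m ⟨hlen, hsub, hvl, hvm⟩
      exact ⟨by simp [hlen], List.cons_subset_cons a hsub, by simp [hvl], by simp [h, hvm]⟩

/-- The iterated link of the vertices of `s` in a chain. -/
def link : List V → Chain R V →ₗ[R] Chain R V
  | [] => LinearMap.id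
  | a :: s => link s ∘ₗ linkVertex a

lemma boundary_link (s : List V) (c : Chain R V) :
    boundary (link s c) = (-1 : R) ^ s.length • link s (boundary c) := by
  induction s generalizing c with
  | nil => simp [link]
  | cons a s ih =>
    simp only [link, LinearMap.comp_apply, ih, boundary_linkVertex, map_neg, List.length_cons,
      pow_succ]
    simp

lemma link_simplex_mem (s l : List V) :
    link s (simplex l : Chain R V) ∈
      chainsOn R {m : List V | m.length + s.length = l.length ∧ m ⊆ l ∧ s ⊆ l ∧ s.Disjoint m} := by
  induction s generalizing l with
  | nil => exact simplex_mem_chainsOn ⟨by simp, by simp, by simp, by simp⟩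
  | cons a s ih =>
    refine linearMap_mem_of_mem_chainsOn (F := link s) ?_ (linkVertex_simplex_mem a l)
    rintro m ⟨hlen, hml, hal, ham⟩
    refine chainsOn_mono ?_ (ih m)
    rintro k ⟨hlen', hkm, hsm, hdisj⟩
    exact ⟨by simp; lia, List.Subset.trans hkm hml,
      List.cons_subset.2 ⟨hal, List.Subset.trans hsm hml⟩,
      List.disjoint_cons_left.2 ⟨fun h => ham (hkm h), hdisj⟩⟩

lemma link_simplex_eq_zero {s l : List V} (h : ¬ s ⊆ l) : link s (simplex l : Chain R V) = 0 :=
  linearMap_apply_eq_of_mem_chainsOn (F := LinearMap.id) (G := 0) (fun _ hm => absurd hm.2.2.1 h)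
    (link_simplex_mem s l)

lemma link_simplex_append {s l : List V} (hs : s.Nodup) (h : s.Disjoint l) :
    link s (simplex (s ++ l) : Chain R V) = simplex l := by
  induction s with
  | nil => simp [link]
  | cons a s ih =>
    obtain ⟨hal, hsl⟩ := List.disjoint_cons_left.1 h
    obtain ⟨has, hs⟩ := List.nodup_cons.1 hs
    have ha : a ∉ s ++ l := by simp [has, hal]
    simp only [link, LinearMap.comp_apply, List.cons_append, linkVertex_cons_self,
      deleteVertex_simplex, ha, if_false]
    exact ih hs hsl

/-- The ordered simplices `l` of length `n` in the link of the face `s` of `X`. -/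
def orderedLink (X : Set (Finset V)) (s : List V) (n : ℕ) : Set (List V) :=
  {l | l.length = n ∧ (s ++ l).toFinset ∈ X ∧ s.Disjoint l}

lemma link_eq_zero_of_costar {X : Set (Finset V)} {s : List V} {n : ℕ} {c : Chain R V}
    (hc : c ∈ chainsOn R (orderedFaces (costar X s.toFinset) n)) : link s c = 0 :=
  linearMap_apply_eq_of_mem_chainsOn (G := 0) (fun _ hl => link_simplex_eq_zero fun hsl =>
    hl.2.2 fun _ hx => List.mem_toFinset.2 (hsl (List.mem_toFinset.1 hx))) hc

lemma link_join {X : Set (Finset V)} {s : List V} (hs : s.Nodup) {n : ℕ} {z : Chain R V}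
    (hz : z ∈ chainsOn R (orderedLink X s n)) : link s (join (simplex s) z) = z :=
  linearMap_apply_eq_of_mem_chainsOn (F := link s ∘ₗ join (simplex s)) (G := LinearMap.id)
    (fun _ hl => by simp [link_simplex_append hs hl.2.2]) hz

variable {X : Set (Finset V)}

lemma exists_boundary_eq_join (hX : IsLowerSet X)
    (hcostar : ∀ σ ∈ X, σ.Nonempty → ∀ n, Acyclic R (costar X σ) n)
    {s : List V} (hs : s.Nodup) (hsX : s.toFinset ∈ X) {n : ℕ} {z : Chain R V}
    (hz : z ∈ chainsOn R (orderedLink X s n)) (hbz : boundary z = 0) :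
    ∃ y ∈ chainsOn R (orderedFaces (costar X s.toFinset) (s.length + n)),
      boundary y = join (boundary (simplex s)) z := by
  obtain rfl | hne := eq_or_ne s []
  · exact ⟨0, zero_mem _, by simp⟩
  obtain ⟨k, hk⟩ : ∃ k, s.length = k + 1 := Nat.exists_eq_succ_of_ne_zero (by simpa using hne)
  have hmem : join (boundary (simplex s)) z ∈
      chainsOn R (orderedFaces (costar X s.toFinset) (k + n)) := by
    refine join_mem_chainsOn ?_ (boundary_simplex_mem s) hz
    rintro m ⟨hlen, hms⟩ l ⟨rfl, hlX, hdisj⟩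
    refine ⟨by simp; lia, hX ?_ hlX, fun hsub => ?_⟩
    · simpa using Finset.union_subset_union_left
        (fun x hx => List.mem_toFinset.2 (hms.subset (List.mem_toFinset.1 hx)))
    · have hsm : s.toFinset ⊆ m.toFinset := fun x hx => by
        have hx' := hsub hx
        simp only [List.toFinset_append, Finset.mem_union, List.mem_toFinset] at hx hx' ⊢
        exact hx'.resolve_right (hdisj hx)
      have hcard := Finset.card_le_card hsm
      rw [List.toFinset_card_of_nodup hs] at hcard
      have := List.toFinset_card_le m
      lia
  have hcycle : boundary (join (boundary (simplex s)) z) = 0 := by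
    have hlen : boundary (simplex s) ∈ chainsOn R {m : List V | m.length = k} :=
      boundary_mem_chainsOn (fun l hl m _ hm => show m.length = k by rw [hl] at hm; lia)
        (simplex_mem_chainsOn (Set.mem_singleton s))
    simp [boundary_join hlen, hbz]
  obtain ⟨y, hy, hby⟩ := hcostar _ hsX (by simpa using hne) _ _ hmem hcycle
  exact ⟨y, by convert hy using 3; lia, hby⟩

lemma exists_link_filling (hX : IsLowerSet X)
    (hcostar : ∀ σ ∈ X, σ.Nonempty → ∀ n, Acyclic R (costar X σ) n)
    {v : V} {s : List V} (hs : (v :: s).Nodup) (hsX : (v :: s).toFinset ∈ X) {n : ℕ}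
    {z : Chain R V} (hz : z ∈ chainsOn R (orderedLink X s n ∩ {l | v ∉ l})) (hbz : boundary z = 0) :
    ∃ w ∈ chainsOn R (orderedLink X s (n + 1) ∩ {l | v ∉ l}), boundary w = z := by
  obtain ⟨hvs, hs'⟩ := List.nodup_cons.1 hs
  have hsub : s.toFinset ⊆ (v :: s).toFinset := by simp
  have hz' := chainsOn_mono Set.inter_subset_left hz
  obtain ⟨y, hy, hby⟩ := exists_boundary_eq_join hX hcostar hs' (hX hsub hsX) hz' hbz
  have hmem : join (simplex s) z - y ∈
      chainsOn R (orderedFaces (costar X (v :: s).toFinset) (s.length + n)) := by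
    refine sub_mem (join_mem_chainsOn (s := {s}) ?_ (simplex_mem_chainsOn rfl) hz)
      (chainsOn_mono ?_ hy)
    · simp only [Set.mem_singleton_iff, forall_eq]
      rintro l ⟨⟨hlen, hlX, -⟩, hvl⟩
      refine ⟨by simp [hlen], hlX, fun h => ?_⟩
      have hv := h (show v ∈ (v :: s).toFinset by simp)
      rw [List.mem_toFinset, List.mem_append] at hv
      exact hv.elim hvs hvl
    · exact fun l hl => ⟨hl.1, hl.2.1, fun h => hl.2.2 (hsub.trans h)⟩
  have hcycle : boundary (join (simplex s) z - y) = 0 := by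
    rw [map_sub, hby, boundary_join_simplex, hbz]
    simp
  obtain ⟨x, hx, hbx⟩ := hcostar _ hsX (by simp) _ _ hmem hcycle
  refine ⟨(-1 : R) ^ s.length • link s x,
    Submodule.smul_mem _ _ (linearMap_mem_of_mem_chainsOn ?_ hx), ?_⟩
  · rintro l ⟨hlen, hlX, hvsl⟩
    refine chainsOn_mono ?_ (link_simplex_mem s l)
    rintro m ⟨hmlen, hml, hsl, hdisj⟩
    refine ⟨⟨by lia, hX ?_ hlX, hdisj⟩, fun hv => hvsl ?_⟩
    · exact fun x hx => List.mem_toFinset.2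
        (List.append_subset.2 ⟨hsl, hml⟩ (List.mem_toFinset.1 hx))
    · exact fun x hx => List.mem_toFinset.2
        (List.cons_subset.2 ⟨hml hv, hsl⟩ (List.mem_toFinset.1 hx))
  · rw [map_smul, boundary_link, hbx, map_sub, link_eq_zero_of_costar hy, link_join hs' hz',
      sub_zero, smul_smul, ← mul_pow]
    simp

/-- The ordered simplex `s` is a cycle modulo the costar of `s`, but its link is nonzero. -/
lemma exists_cons_mem_of_acyclic [Nontrivial R] (hX : IsLowerSet X)
    (hcostar : ∀ σ ∈ X, σ.Nonempty → ∀ n, Acyclic R (costar X σ) n)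
    {s : List V} (hs : s.Nodup) (hsX : s.toFinset ∈ X) (hacyclic : Acyclic R X s.length) :
    ∃ v ∉ s, (v :: s).toFinset ∈ X := by
  by_contra! hmax
  have hnil : (simplex [] : Chain R V) ∈ chainsOn R (orderedLink X s 0) :=
    simplex_mem_chainsOn ⟨rfl, by simpa using hsX, by simp⟩
  obtain ⟨y, hy, hby⟩ := exists_boundary_eq_join hX hcostar hs hsX hnil boundary_nil
  rw [join_nil] at hby
  have hmem : simplex s - y ∈ chainsOn R (orderedFaces X s.length) := by
    refine sub_mem (simplex_mem_chainsOn ⟨rfl, hsX⟩) (chainsOn_mono ?_ hy)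
    exact fun l hl => ⟨hl.1, costar_subset X _ hl.2⟩
  obtain ⟨x, hx, hbx⟩ := hacyclic _ hmem (by rw [map_sub, hby, sub_self])
  have hlink : link s x = 0 := by
    refine linearMap_apply_eq_of_mem_chainsOn (G := 0) ?_ hx
    rintro l ⟨hlen, hlX⟩
    refine linearMap_apply_eq_of_mem_chainsOn (F := LinearMap.id) (G := 0) ?_
      (link_simplex_mem s l)
    rintro m ⟨hmlen, hml, hsl, hdisj⟩
    obtain ⟨v, rfl⟩ := List.length_eq_one_iff.1 (show m.length = 1 by lia)
    refine absurd (hX ?_ hlX) (hmax v fun hv => hdisj hv (by simp))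
    exact fun x hx => List.mem_toFinset.2
      (List.cons_subset.2 ⟨hml (by simp), hsl⟩ (List.mem_toFinset.1 hx))
  have hlink' : link s (simplex s - y) = simplex [] := by
    rw [map_sub, link_eq_zero_of_costar hy, sub_zero]
    simpa using link_join hs hnil
  have hzero := boundary_link s x
  rw [hlink, hbx, hlink', map_zero] at hzero
  have hcoeff := DFunLike.congr_fun hzero []
  simp [simplex] at hcoeff
  exact (isUnit_neg_one.pow _).ne_zero hcoeff.symm

lemma exists_nodup_list_of_acyclic [Nontrivial R] (hX : IsLowerSet X) (hempty : ∅ ∈ X)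
    (hcostar : ∀ σ ∈ X, σ.Nonempty → ∀ n, Acyclic R (costar X σ) n) {N : ℕ}
    (hacyclic : ∀ n < N, Acyclic R X n) :
    ∃ s : List V, s.Nodup ∧ s.length = N ∧ s.toFinset ∈ X := by
  induction N with
  | zero => exact ⟨[], by simp, rfl, by simpa using hempty⟩
  | succ k ih =>
    obtain ⟨s, hs, rfl, hsX⟩ := ih fun n hn => hacyclic n (by lia)
    obtain ⟨v, hv, hvX⟩ :=
      exists_cons_mem_of_acyclic hX hcostar hs hsX (hacyclic _ (Nat.lt_succ_self _))
    exact ⟨v :: s, List.nodup_cons.2 ⟨hv, hs⟩, by simp, hvX⟩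

end Link

/-! ### Colour translations -/

section Translation

lemma charP_end_chain (K W : Type*) [CommRing K] (p : ℕ) [CharP K p] :
    CharP (Module.End K (Chain K W)) p :=
  charP_of_injective_algebraMap (R := K) (fun x y h => by
    simpa [simplex] using DFunLike.congr_fun (LinearMap.congr_fun h (simplex [])) []) p

lemma sum_pow_char_of_commute {ι B : Type*} [Ring B] (p : ℕ) [Fact p.Prime] [CharP B p]
    (s : Finset ι) (f : ι → B) (h : ∀ i j, Commute (f i) (f j)) :
    (∑ i ∈ s, f i) ^ p = ∑ i ∈ s, f i ^ p := by
  classical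
  induction s using Finset.induction_on with
  | empty => simp [(Fact.out : p.Prime).ne_zero]
  | insert a s ha ih =>
    rw [Finset.sum_insert ha, Finset.sum_insert ha, ← ih]
    exact add_pow_char_of_commute p (Commute.sum_right _ _ _ fun j _ => h a j)

lemma sum_smul_sub_one_pow_char {ι K B : Type*} [Fintype ι] [CommRing K] [Ring B] [Algebra K B]
    (p : ℕ) [Fact p.Prime] [CharP B p] (b : ι → K) {t : ι → B} (hcomm : ∀ i j, Commute (t i) (t j))
    (ht : ∀ i, t i ^ p = 1) : (∑ i, b i • (t i - 1)) ^ p = 0 := by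
  rw [sum_pow_char_of_commute p]
  · refine Finset.sum_eq_zero fun i _ => ?_
    rw [smul_pow, sub_pow_char_of_commute p (Commute.one_right _), ht, one_pow, sub_self, smul_zero]
  · refine fun i j => Commute.smul_left (Commute.smul_right ?_ _) _
    exact ((hcomm i j).sub_right (Commute.one_right _)).sub_left (Commute.one_left _)

variable {A K : Type*} [CommRing K]

/-- The translation of the second coordinate, which is thought of as a colour, by `g`. -/
def translate (g : K) (x : A × K) : A × K := (x.1, g + x.2)

lemma translate_comp (g h : K) :
    (translate g : A × K → A × K) ∘ translate h = translate (g + h) := by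
  ext x <;> simp [translate, add_assoc]

lemma translate_zero : (translate (0 : K) : A × K → A × K) = id := by
  ext x <;> simp [translate]

lemma translate_injective (g : K) : Function.Injective (translate g : A × K → A × K) := by
  rintro ⟨a, c⟩ ⟨a', c'⟩ h
  simpa [translate] using h

lemma mem_map_translate {g : K} {l : List (A × K)} {a : A} {c : K} :
    (a, c) ∈ l.map (translate g) ↔ (a, c - g) ∈ l := by
  have hac : (a, c) = translate g (a, c - g) := by simp [translate]
  rw [hac, List.mem_map_of_injective (translate_injective g)]

/-- The action of a translation on chains. The coefficient ring is also the set of colours. -/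
def translateChain (g : K) : Module.End K (Chain K (A × K)) := push (translate g)

lemma translateChain_simplex (g : K) (l : List (A × K)) :
    translateChain g (simplex l) = simplex (l.map (translate g)) :=
  push_simplex _ _

lemma translateChain_mul (g h : K) :
    (translateChain g : Module.End K (Chain K (A × K))) * translateChain h =
      translateChain (g + h) :=
  LinearMap.ext fun c => by
    simp [translateChain, Module.End.mul_apply, push_push, translate_comp]

lemma translateChain_zero : (translateChain 0 : Module.End K (Chain K (A × K))) = 1 :=
  linearMap_ext fun l => by simp [translateChain_simplex, translate_zero]

lemma commute_translateChain (g h : K) :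
    Commute (translateChain g : Module.End K (Chain K (A × K))) (translateChain h) := by
  rw [Commute, SemiconjBy, translateChain_mul, translateChain_mul, add_comm]

lemma translateChain_pow (g : K) (n : ℕ) :
    (translateChain g : Module.End K (Chain K (A × K))) ^ n = translateChain (n • g) := by
  induction n with
  | zero => simp [translateChain_zero]
  | succ n ih => rw [pow_succ, ih, translateChain_mul, succ_nsmul]

variable {ι : Type*} [Fintype ι] (b : ι → K)

/-- The nilpotent operator `∑ bᵢ (Tᵢ - 1)`, where `Tᵢ` is the translation by `bᵢ`. When the `bᵢ` are
a basis of a finite field over its prime field, it plays the role of `T - 1` for a cyclic group. -/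
def diffOperator : Module.End K (Chain K (A × K)) := ∑ i, b i • (translateChain (b i) - 1)

lemma diffOperator_apply (c : Chain K (A × K)) :
    diffOperator b c = ∑ i, b i • (translateChain (b i) c - c) := by
  simp [diffOperator, LinearMap.sum_apply]

lemma diffOperator_nil : diffOperator b (simplex [] : Chain K (A × K)) = 0 := by
  simp [diffOperator_apply, translateChain_simplex]

lemma boundary_diffOperator_pow (n : ℕ) (c : Chain K (A × K)) :
    boundary ((diffOperator b ^ n) c) = (diffOperator b ^ n) (boundary c) := by
  induction n generalizing c with
  | zero => simp
  | succ n ih =>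
    simp [pow_succ, ih, diffOperator_apply, translateChain, push_boundary]

lemma diffOperator_pow_char (p : ℕ) [Fact p.Prime] [CharP K p] :
    (diffOperator b : Module.End K (Chain K (A × K))) ^ p = 0 := by
  have := charP_end_chain K (A × K) p
  refine sum_smul_sub_one_pow_char (t := fun i => translateChain (b i)) p b
    (fun i j => commute_translateChain _ _) fun i => ?_
  simp [translateChain_pow, translateChain_zero]

lemma diffOperator_pow_mem {s : Set (List (A × K))} (hs : ∀ g, ∀ l ∈ s, l.map (translate g) ∈ s)
    (n : ℕ) {c : Chain K (A × K)} (hc : c ∈ chainsOn K s) :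
    (diffOperator b ^ n) c ∈ chainsOn K s := by
  induction n with
  | zero => simpa
  | succ n ih =>
    rw [pow_succ', Module.End.mul_apply, diffOperator_apply]
    exact sum_mem fun i _ => Submodule.smul_mem _ _ (sub_mem (push_mem_chainsOn (hs _) ih) ih)

end Translation

section ColoredLists

variable {V C : Type*}

/-- The ordered simplices with coloured vertices whose underlying list of vertices is a sublist
of `s`. Vertices lie in `Option V`, where `none` is reserved for an apex. -/
def coloredLists (s : List V) : Set (List (Option V × C)) :=
  {l | (l.map Prod.fst).Sublist (s.map some)}

variable {s : List V} {l : List (Option V × C)}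

lemma length_le_of_mem_coloredLists (hl : l ∈ coloredLists s) : l.length ≤ s.length := by
  simpa using List.Sublist.length_le hl

lemma exists_mem_of_mem_coloredLists (hl : l ∈ coloredLists s) {a : Option V × C} (ha : a ∈ l) :
    ∃ v ∈ s, some v = a.1 := by
  simpa using List.Sublist.subset hl (List.mem_map_of_mem ha)

lemma mem_of_mem_coloredLists (hl : l ∈ coloredLists s) {v : V} {c : C} (h : (some v, c) ∈ l) :
    v ∈ s := by
  simpa using exists_mem_of_mem_coloredLists hl h

lemma eq_of_mem_coloredLists (hs : s.Nodup) (hl : l ∈ coloredLists s) {o : Option V} {c c' : C}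
    (h : (o, c) ∈ l) (h' : (o, c') ∈ l) : c = c' := by
  have hnodup : (l.map Prod.fst).Nodup := (hs.map (Option.some_injective V)).sublist hl
  simpa using List.inj_on_of_nodup_map hnodup h h' rfl

lemma map_translate_mem_coloredLists {K : Type*} [CommRing K] (g : K) {l : List (Option V × K)}
    (hl : l ∈ coloredLists s) : l.map (translate g) ∈ coloredLists s := by
  simpa [coloredLists, Function.comp_def, translate] using hl

lemma cons_mem_coloredLists (v : V) (c : C) (hl : l ∈ coloredLists s) :
    (some v, c) :: l ∈ coloredLists (v :: s) :=
  List.Sublist.cons_cons (some v) hl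

lemma mem_coloredLists_cons {v : V} (hl : l ∈ coloredLists (v :: s)) :
    l ∈ coloredLists s ∨ ∃ c, ∃ l' ∈ coloredLists s, l = (some v, c) :: l' := by
  rcases List.sublist_cons_iff.1 (show (l.map Prod.fst).Sublist (some v :: s.map some) from hl) with
    h | ⟨r, hr, h⟩
  · exact Or.inl h
  · obtain ⟨⟨o, c⟩, l', rfl, rfl, rfl⟩ := List.map_eq_cons_iff.1 hr
    exact Or.inr ⟨c, l', h, rfl⟩

end ColoredLists

/-! ### The coloured complex -/

section ColoredComplex

variable {R V C : Type*} [CommRing R]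

/-- The complex on `C` coloured copies of the vertices of `X` together with a coloured apex `none`,
whose faces are the sets of coloured vertices all of whose colour classes lie in faces of `X`, and
which either avoid the apex and give every vertex at most one colour, or are monochromatic. -/
def coloredComplex (X : Set (Finset V)) : Set (Finset (Option V × C)) :=
  {s | (∀ c, ∃ σ ∈ X, ∀ v, (some v, c) ∈ s → v ∈ σ) ∧
    ((∀ a ∈ s, a.1 ≠ none) ∧ (∀ v c c', (some v, c) ∈ s → (some v, c') ∈ s → c = c') ∨
      ∃ c, ∀ a ∈ s, a.2 = c)}

lemma isLowerSet_coloredComplex (X : Set (Finset V)) :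
    IsLowerSet (coloredComplex X : Set (Finset (Option V × C))) := by
  rintro s t hts ⟨hclass, hs⟩
  refine ⟨fun c => ?_, hs.imp (fun h => ⟨fun a ha => h.1 a (hts ha),
    fun v c c' hc hc' => h.2 v c c' (hts hc) (hts hc')⟩)
    fun ⟨c, h⟩ => ⟨c, fun a ha => h a (hts ha)⟩⟩
  obtain ⟨σ, hσ, h⟩ := hclass c
  exact ⟨σ, hσ, fun v hv => h v (hts hv)⟩

lemma map_translate_mem_coloredComplex {K : Type*} [CommRing K] [DecidableEq K] [DecidableEq V]
    {X : Set (Finset V)} (g : K) {l : List (Option V × K)} (hl : l.toFinset ∈ coloredComplex X) :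
    (l.map (translate g)).toFinset ∈ coloredComplex X := by
  obtain ⟨hclass, hl⟩ := hl
  simp only [List.mem_toFinset] at hclass hl
  simp only [coloredComplex, Set.mem_ofPred_eq, List.mem_toFinset, mem_map_translate, Prod.forall]
    at hl ⊢
  refine ⟨fun c => hclass (c - g), hl.imp (fun h => ⟨fun o c ha => h.1 o (c - g) ha,
    fun v c c' hc hc' => sub_left_injective (h.2 v _ _ hc hc')⟩) ?_⟩
  exact fun ⟨c, h⟩ => ⟨c + g, fun o c' ha => eq_add_of_sub_eq (h o _ ha)⟩

lemma map_translate_mem_orderedFaces {K : Type*} [CommRing K] [DecidableEq K] [DecidableEq V]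
    {X : Set (Finset V)} {n : ℕ} (g : K) :
    ∀ l ∈ orderedFaces (coloredComplex X) n, (l : List (Option V × K)).map (translate g) ∈
      orderedFaces (coloredComplex X) n :=
  fun _ hl => ⟨by simpa using hl.1, map_translate_mem_coloredComplex g hl.2⟩

variable [Zero C]

/-- The copy of a vertex in the base colour `0`. -/
def baseColor (v : V) : Option V × C := (some v, 0)

lemma baseColor_notMem {s : List V} {v : V} (hv : v ∉ s) {l : List (Option V × C)}
    (hl : l ∈ coloredLists s) : baseColor v ∉ l :=
  fun h => hv (mem_of_mem_coloredLists hl h)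

variable [DecidableEq V] [DecidableEq C] {X : Set (Finset V)}

lemma cons_apex_mem_coloredComplex {k : List V} (hk : k.toFinset ∈ X) :
    ((none, 0) :: k.map baseColor : List (Option V × C)).toFinset ∈ coloredComplex X := by
  refine ⟨fun c => ⟨k.toFinset, hk, fun v hv => ?_⟩, Or.inr ⟨0, fun a ha => ?_⟩⟩
  · simp [baseColor] at hv
    simpa using hv.1
  · simp only [List.mem_toFinset, List.mem_cons, List.mem_map] at ha
    rcases ha with rfl | ⟨v, -, rfl⟩ <;> rfl

lemma map_baseColor_append_mem_coloredComplex {s k : List V} {l : List (Option V × C)}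
    (hs : s.Nodup) (hsX : s.toFinset ∈ X) (hl : l ∈ coloredLists s) (hsk : s.Disjoint k)
    (hbase : ∃ σ ∈ X, k.toFinset ⊆ σ ∧ ∀ v, (some v, 0) ∈ l → v ∈ σ) :
    (k.map baseColor ++ l).toFinset ∈ coloredComplex X := by
  have hmap {v : V} {c : C} (h : (some v, c) ∈ k.map baseColor) : v ∈ k ∧ c = 0 := by
    obtain ⟨x, hx, hxv⟩ := List.mem_map.1 h
    simp only [baseColor, Prod.mk.injEq, Option.some.injEq] at hxv
    exact ⟨hxv.1 ▸ hx, hxv.2.symm⟩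
  simp only [coloredComplex, Set.mem_ofPred_eq, List.mem_toFinset, List.mem_append]
  refine ⟨fun c => ?_, Or.inl ⟨?_, ?_⟩⟩
  · obtain rfl | hc := eq_or_ne c 0
    · obtain ⟨σ, hσ, hkσ, hlσ⟩ := hbase
      refine ⟨σ, hσ, fun v hv => hv.elim (fun h => hkσ ?_) (hlσ v)⟩
      exact List.mem_toFinset.2 (hmap h).1
    · refine ⟨s.toFinset, hsX, fun v hv => List.mem_toFinset.2 (hv.elim (fun h => ?_) fun h => ?_)⟩
      · exact absurd (hmap h).2 hc
      · exact mem_of_mem_coloredLists hl h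
  · rintro a (ha | ha)
    · obtain ⟨v, -, rfl⟩ := List.mem_map.1 ha
      simp [baseColor]
    · obtain ⟨v, -, hv⟩ := exists_mem_of_mem_coloredLists hl ha
      simp [← hv]
  · rintro v c c' (h | h) (h' | h')
    · rw [(hmap h).2, (hmap h').2]
    · exact absurd (hmap h).1 (hsk (mem_of_mem_coloredLists hl h'))
    · exact absurd (hmap h').1 (hsk (mem_of_mem_coloredLists hl h))
    · exact eq_of_mem_coloredLists hs hl h h'

lemma toFinset_mem_coloredComplex {s : List V} (hs : s.Nodup) (hsX : s.toFinset ∈ X)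
    {l : List (Option V × C)} (hl : l ∈ coloredLists s) : l.toFinset ∈ coloredComplex X := by
  simpa using map_baseColor_append_mem_coloredComplex (k := []) hs hsX hl (by simp)
    ⟨_, hsX, by simp, fun v hv => List.mem_toFinset.2 (mem_of_mem_coloredLists hl hv)⟩

/-- One step of the recursion that caps off coloured simplices: a simplex that starts with the base
coloured `v` is sent to the previous cap of its tail, any other simplex is joined to `w`. -/
def capStep (v : V) (w : Chain R V) (Φ : Chain R (Option V × C) →ₗ[R] Chain R (Option V × C)) :
    Chain R (Option V × C) →ₗ[R] Chain R (Option V × C) :=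
  Finsupp.linearCombination R fun l =>
    if l.head? = some (baseColor v) then Φ (simplex l.tail) else join (push baseColor w) (simplex l)

variable {v : V} {w : Chain R V} {Φ : Chain R (Option V × C) →ₗ[R] Chain R (Option V × C)}

lemma capStep_cone (c : Chain R (Option V × C)) : capStep v w Φ (cone (baseColor v) c) = Φ c :=
  linearMap_apply_eq (F := capStep v w Φ ∘ₗ cone (baseColor v)) (by simp [capStep]) c

lemma capStep_simplex_of_notMem {l : List (Option V × C)} (h : baseColor v ∉ l) :
    capStep v w Φ (simplex l) = join (push baseColor w) (simplex l) := by
  rw [capStep, linearCombination_simplex, if_neg fun hl => h (List.mem_of_head? hl)]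

lemma boundary_capStep {s : List V} (hv : v ∉ s) {n : ℕ} {ρ : Chain R V}
    (hw : w ∈ chainsOn R {l : List V | l.length = n + 1}) (hbw : boundary w = ρ)
    (hΦ : ∀ l ∈ coloredLists s, boundary (Φ (simplex l)) =
      join (push baseColor (join ρ (simplex [v]) + (-1 : R) ^ (n + 1) • w)) (simplex l) +
        (-1 : R) ^ (n + 1 + 1) • Φ (boundary (simplex l)))
    {l : List (Option V × C)} (hl : l ∈ coloredLists (v :: s)) :
    boundary (capStep v w Φ (simplex l)) = join (push baseColor ρ) (simplex l) +
      (-1 : R) ^ (n + 1) • capStep v w Φ (boundary (simplex l)) := by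
  by_cases hvl : baseColor v ∈ l
  · obtain hl' | ⟨c, l, hl', rfl⟩ := mem_coloredLists_cons hl
    · exact absurd hvl (baseColor_notMem hv hl')
    have hcons : (some v, c) = (baseColor v : Option V × C) :=
      ((List.mem_cons.1 hvl).resolve_right (baseColor_notMem hv hl')).symm
    have hjoin : join (push baseColor (join ρ (simplex [v]))) (simplex l) =
        join (push baseColor ρ) (simplex (baseColor v :: l)) := by
      rw [push_join, push_simplex, join_assoc, join_simplex]
      rfl
    rw [hcons, boundary_cons, map_sub, capStep_cone, ← cone_simplex, capStep_cone, hΦ l hl',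
      capStep_simplex_of_notMem (baseColor_notMem hv hl'), cone_simplex, ← hjoin]
    simp only [map_add, map_smul, LinearMap.add_apply, LinearMap.smul_apply, pow_succ]
    module
  · have hface : capStep v w Φ (boundary (simplex l)) =
        join (push baseColor w) (boundary (simplex l)) :=
      linearMap_apply_eq_of_mem_chainsOn
        (fun _ hm => capStep_simplex_of_notMem fun h => hvl (hm.2.subset h))
        (boundary_simplex_mem l)
    have hwlen : push baseColor w ∈ chainsOn R {l : List (Option V × C) | l.length = n + 1} :=
      push_mem_chainsOn (fun m hm => by simpa using hm) hw
    rw [capStep_simplex_of_notMem hvl, hface, boundary_join hwlen, ← push_boundary, hbw]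

lemma capStep_simplex_mem {s : List V} (hs : (v :: s).Nodup)
    (hsX : (v :: s).toFinset ∈ X) {n : ℕ}
    (hw : w ∈ chainsOn R (orderedLink X s (n + 1) ∩ {l | v ∉ l}))
    (hΦ : ∀ l ∈ coloredLists s, l.length = s.length →
      Φ (simplex l) ∈ chainsOn R (orderedFaces (coloredComplex X) (n + 1 + s.length + 1)))
    {l : List (Option V × C)} (hl : l ∈ coloredLists (v :: s)) (hlen : l.length = s.length + 1) :
    capStep v w Φ (simplex l) ∈
      chainsOn R (orderedFaces (coloredComplex X) (n + (s.length + 1) + 1)) := by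
  obtain ⟨hvs, -⟩ := List.nodup_cons.1 hs
  obtain hl' | ⟨c, l, hl', rfl⟩ := mem_coloredLists_cons hl
  · have := length_le_of_mem_coloredLists hl'
    lia
  obtain rfl | hc := eq_or_ne c 0
  · rw [← cone_simplex]
    change capStep v w Φ (cone (baseColor v) _) ∈ _
    rw [capStep_cone]
    convert hΦ l hl' (by simpa using hlen) using 3
    lia
  have hvl : baseColor v ∉ (some v, c) :: l := by
    simpa [baseColor, hc.symm] using baseColor_notMem hvs hl'
  rw [capStep_simplex_of_notMem hvl]
  refine join_mem_chainsOn (s := List.map baseColor '' (orderedLink X s (n + 1) ∩ {l | v ∉ l}))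
    ?_ (push_mem_chainsOn (fun k hk => Set.mem_image_of_mem _ hk) hw)
    (simplex_mem_chainsOn (Set.mem_singleton _))
  rintro _ ⟨k, ⟨⟨hklen, hkX, hsk⟩, hvk⟩, rfl⟩ _ rfl
  refine ⟨?_, map_baseColor_append_mem_coloredComplex hs hsX hl
    (List.disjoint_cons_left.2 ⟨hvk, hsk⟩) ⟨_, hkX, by simp, fun x hx => ?_⟩⟩
  · simp only [List.length_cons, List.length_append, List.length_map] at hlen ⊢
    lia
  have hxl : (some x, 0) ∈ l := by simpa [hc.symm] using hx
  simp [mem_of_mem_coloredLists hl' hxl]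

lemma orderedLink_cons_subset (hX : IsLowerSet X) (v : V) (s : List V) (n : ℕ) :
    orderedLink X (v :: s) n ⊆ orderedLink X s n ∩ {l | v ∉ l} := by
  rintro l ⟨hlen, hlX, hdisj⟩
  obtain ⟨hvl, hsl⟩ := List.disjoint_cons_left.1 hdisj
  exact ⟨⟨hlen, hX (by simp) hlX, hsl⟩, hvl⟩

lemma join_simplex_singleton_mem_orderedLink {s : List V} (hv : v ∉ s) {n : ℕ} {ρ : Chain R V}
    (hρ : ρ ∈ chainsOn R (orderedLink X (v :: s) n)) :
    join ρ (simplex [v]) ∈ chainsOn R (orderedLink X s (n + 1)) := by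
  refine join_mem_chainsOn ?_ hρ (simplex_mem_chainsOn (Set.mem_singleton _))
  rintro l ⟨hlen, hlX, hdisj⟩ _ rfl
  obtain ⟨-, hsl⟩ := List.disjoint_cons_left.1 hdisj
  refine ⟨by simp [hlen], ?_, by simp [List.disjoint_append_right, hsl, hv]⟩
  convert hlX using 1
  ext x
  simp

/-- The induction passes from `ρ` to the sum of its join with `v` and of a filling of `ρ`, which is
again a cycle. -/
lemma exists_cap (hX : IsLowerSet X)
    (hcostar : ∀ σ ∈ X, σ.Nonempty → ∀ n, Acyclic R (costar X σ) n) (s : List V) (hs : s.Nodup)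
    (hsX : s.toFinset ∈ X) (n : ℕ) {ρ : Chain R V} (hρ : ρ ∈ chainsOn R (orderedLink X s n))
    (hbρ : boundary ρ = 0) :
    ∃ Φ : Chain R (Option V × C) →ₗ[R] Chain R (Option V × C),
      (∀ l ∈ coloredLists s, boundary (Φ (simplex l)) = join (push baseColor ρ) (simplex l) +
        (-1 : R) ^ (n + 1) • Φ (boundary (simplex l))) ∧
      ∀ l ∈ coloredLists s, l.length = s.length →
        Φ (simplex l) ∈ chainsOn R (orderedFaces (coloredComplex X) (n + s.length + 1)) := by
  induction s generalizing n ρ with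
  | nil =>
    have hnil {l : List (Option V × C)} (hl : l ∈ coloredLists []) : l = [] :=
      List.length_eq_zero_iff.1 (Nat.le_zero.1 (length_le_of_mem_coloredLists hl))
    refine ⟨Finsupp.linearCombination R fun _ => cone (none, 0) (push baseColor ρ),
      fun l hl => ?_, fun l _ _ => ?_⟩
    · simp [hnil hl, boundary_cone, ← push_boundary, hbρ, join_nil]
    · rw [linearCombination_simplex]
      refine cone_mem_chainsOn (s := List.map baseColor '' orderedLink X [] n) ?_
        (push_mem_chainsOn (fun k hk => Set.mem_image_of_mem _ hk) hρ)
      rintro _ ⟨k, ⟨hk, hkX, -⟩, rfl⟩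
      exact ⟨by simp [hk], cons_apex_mem_coloredComplex hkX⟩
  | cons v s ih =>
    obtain ⟨hvs, hs'⟩ := List.nodup_cons.1 hs
    have hsX' : s.toFinset ∈ X := hX (by simp) hsX
    obtain ⟨w, hw, hbw⟩ := exists_link_filling hX hcostar hs hsX
      (chainsOn_mono (orderedLink_cons_subset hX v s n) hρ) hbρ
    have hjoin := join_simplex_singleton_mem_orderedLink hvs hρ
    have hρlen := chainsOn_mono (fun l (hl : l ∈ orderedLink X (v :: s) n) => hl.1) hρ
    obtain ⟨Φ, hbΦ, hΦ⟩ := ih hs' hsX' (n + 1) (ρ := join ρ (simplex [v]) + (-1 : R) ^ (n + 1) • w)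
      (add_mem hjoin (Submodule.smul_mem _ _ (chainsOn_mono Set.inter_subset_left hw))) (by
        rw [map_add, map_smul, hbw, boundary_join hρlen, hbρ, boundary_cons]
        simp [pow_succ, join_nil])
    exact ⟨capStep v w Φ,
      fun l => boundary_capStep hvs (chainsOn_mono (fun k hk => hk.1.1) hw) hbw hbΦ,
      fun l => capStep_simplex_mem hs hsX hw hΦ⟩

end ColoredComplex

section Zigzag

/-- The exponents `1` and `p - 1` with which the difference operator occurs, alternately, in the
differentials of the standard resolution of a cyclic group of order `p`. -/
def zigzagExp (p i : ℕ) : ℕ := if Even i then p - 1 else 1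

lemma zigzagExp_succ_add {p : ℕ} (hp : 1 ≤ p) (i : ℕ) :
    zigzagExp p (i + 1) + zigzagExp p i = p := by
  by_cases hi : Even i <;> simp [zigzagExp, hi, Nat.even_add_one] <;> lia

variable {V K ι : Type*} [CommRing K] [Fintype ι]

/-- The chain on the colourings of the vertices of `s` and of `v` that starts with the base coloured
`v` and is continued by alternating powers of the difference operator and cones. -/
def zigzag (b : ι → K) (p : ℕ) (v : V) : List V → Chain K (Option V × K)
  | [] => simplex [baseColor v]
  | w :: s => cone (baseColor w) ((diffOperator b ^ zigzagExp p (s.length + 1)) (zigzag b p v s))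

variable {b : ι → K} {p : ℕ} {v : V}

lemma diffOperator_pow_mem_coloredLists {s : List V} (n k : ℕ) {c : Chain K (Option V × K)}
    (hc : c ∈ chainsOn K (coloredLists s ∩ {l | l.length = n})) :
    (diffOperator b ^ k) c ∈ chainsOn K (coloredLists s ∩ {l | l.length = n}) := by
  refine diffOperator_pow_mem b ?_ k hc
  rintro g l ⟨hl, hlen⟩
  exact ⟨map_translate_mem_coloredLists g hl, by simpa using hlen⟩

lemma zigzag_mem (s : List V) :
    zigzag b p v s ∈ chainsOn K (coloredLists (s ++ [v]) ∩ {l | l.length = s.length + 1}) := by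
  induction s with
  | nil =>
    exact simplex_mem_chainsOn ⟨cons_mem_coloredLists v 0 (by simp [coloredLists]), by simp⟩
  | cons w s ih =>
    refine cone_mem_chainsOn ?_ (diffOperator_pow_mem_coloredLists _ _ ih)
    rintro l ⟨hl, hlen⟩
    exact ⟨cons_mem_coloredLists w 0 hl, by simpa using hlen⟩

variable [Fact p.Prime] [CharP K p]

lemma boundary_diffOperator_pow_zigzag (s : List V) :
    boundary ((diffOperator b ^ zigzagExp p (s.length + 1)) (zigzag b p v s)) = 0 := by
  induction s with
  | nil =>
    rw [boundary_diffOperator_pow, zigzag, boundary_cons]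
    simp [zigzagExp, diffOperator_nil]
  | cons w s ih =>
    rw [boundary_diffOperator_pow, zigzag, boundary_cone, ih, map_zero, sub_zero,
      ← Module.End.mul_apply, ← pow_add, List.length_cons,
      zigzagExp_succ_add (Fact.out : p.Prime).one_le, diffOperator_pow_char, LinearMap.zero_apply]

lemma boundary_zigzag_cons (w : V) (s : List V) :
    boundary (zigzag b p v (w :: s)) =
      (diffOperator b ^ zigzagExp p (s.length + 1)) (zigzag b p v s) := by
  rw [zigzag, boundary_cone, boundary_diffOperator_pow_zigzag, map_zero, sub_zero]

variable [DecidableEq V] [DecidableEq K] {X : Set (Finset V)}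

lemma exists_boundary_eq_of_mem_coloredLists (hX : IsLowerSet X)
    (hcostar : ∀ σ ∈ X, σ.Nonempty → ∀ n, Acyclic K (costar X σ) n) {s : List V} (hs : s.Nodup)
    (hsX : s.toFinset ∈ X) {z : Chain K (Option V × K)}
    (hz : z ∈ chainsOn K (coloredLists s ∩ {l | l.length = s.length})) (hbz : boundary z = 0) :
    ∃ c ∈ chainsOn K (orderedFaces (coloredComplex X) (s.length + 1)), boundary c = z := by
  have hnil : (simplex [] : Chain K V) ∈ chainsOn K (orderedLink X s 0) :=
    simplex_mem_chainsOn ⟨rfl, by simpa, by simp⟩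
  obtain ⟨Φ, hbΦ, hΦ⟩ := exists_cap (C := K) hX hcostar s hs hsX 0 hnil (by simp)
  refine ⟨Φ z, linearMap_mem_of_mem_chainsOn (fun l hl => ?_) hz, ?_⟩
  · simpa using hΦ l hl.1 hl.2
  · have hbdry := linearMap_apply_eq_of_mem_chainsOn (F := boundary ∘ₗ Φ)
      (G := LinearMap.id - Φ ∘ₗ boundary) (fun l hl => by
        simpa [sub_eq_add_neg] using hbΦ l hl.1) hz
    simpa [hbz] using hbdry

lemma exists_zigzag (b : ι → K) (p : ℕ) [Fact p.Prime] [CharP K p] (hX : IsLowerSet X)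
    (hcostar : ∀ σ ∈ X, σ.Nonempty → ∀ n, Acyclic K (costar X σ) n) {s : List V} (hs : s.Nodup)
    (hne : s ≠ []) (hsX : s.toFinset ∈ X) :
    ∃ c : ℕ → Chain K (Option V × K),
      (∀ i ≤ s.length, c i ∈ chainsOn K (orderedFaces (coloredComplex X) (i + 1))) ∧
      boundary (c 0) = simplex [] ∧
      ∀ i < s.length, boundary (c (i + 1)) = (diffOperator b ^ zigzagExp p (i + 1)) (c i) := by
  obtain ⟨s, v, rfl⟩ := (List.eq_nil_or_concat s).resolve_left hne
  rw [List.concat_eq_append] at *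
  have hlen : (s ++ [v]).length = s.length + 1 := by simp
  obtain ⟨c, hc, hbc⟩ := exists_boundary_eq_of_mem_coloredLists hX hcostar hs hsX
    (z := (diffOperator b ^ zigzagExp p (s.length + 1)) (zigzag b p v s))
    (diffOperator_pow_mem_coloredLists _ _ (hlen ▸ zigzag_mem s))
    (boundary_diffOperator_pow_zigzag s)
  rw [hlen] at hc ⊢
  refine ⟨fun i => if i = s.length + 1 then c else zigzag b p v (s.drop (s.length - i)),
    fun i hi => ?_, ?_, fun i hi => ?_⟩
  · dsimp only
    split_ifs with h
    · rwa [h]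
    · refine chainsOn_mono ?_ (zigzag_mem _)
      rintro l ⟨hl, hll⟩
      refine ⟨?_, toFinset_mem_coloredComplex hs hsX
        (List.Sublist.trans hl (((s.drop_sublist _).append_right _).map _))⟩
      simp only [Set.mem_ofPred_eq, List.length_drop] at hll
      lia
  · simp [zigzag, boundary_cons]
  · dsimp only
    rw [if_neg hi.ne]
    obtain rfl | hi := eq_or_ne i s.length
    · simpa using hbc
    · have hdrop := List.drop_eq_getElem_cons (l := s) (i := s.length - (i + 1)) (by lia)
      rw [show s.length - (i + 1) + 1 = s.length - i by lia] at hdrop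
      rw [if_neg (by lia), hdrop, boundary_zigzag_cons]
      have hlen_drop : (s.drop (s.length - i)).length = i := by
        rw [List.length_drop]
        lia
      rw [hlen_drop]

end Zigzag

/-! ### Weyl pairs -/

section WeylPair

variable {K M : Type*} [Field K] [AddCommGroup M] [Module K M]

/-- Operators `x` and `y` that preserve the submodules `D` and `S`, and that satisfy the relation
`x y - y x = -1` of the Weyl algebra on `S`. In characteristic `p`, such a `y` makes the sequence of
alternating powers `x` and `x ^ (p - 1)` exact on `S` modulo `D`. -/
structure IsWeylPair (x y : Module.End K M) (D S : Submodule K M) : Prop where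
  left_mem_D : ∀ v ∈ D, x v ∈ D
  right_mem_D : ∀ v ∈ D, y v ∈ D
  left_mem_S : ∀ v ∈ S, x v ∈ S
  right_mem_S : ∀ v ∈ S, y v ∈ S
  left_right : ∀ v ∈ S, x (y v) = y (x v) - v

namespace IsWeylPair

variable {x y : Module.End K M} {D S : Submodule K M} (h : IsWeylPair x y D S) {v : M} (hv : v ∈ S)
include h hv

lemma right_pow_mem (k : ℕ) : (y ^ k) v ∈ S :=
  Module.End.pow_apply_mem_of_forall_mem k h.right_mem_S v hv

lemma left_right_pow_succ_mem (hxv : x v ∈ D) (k : ℕ) :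
    x ((y ^ (k + 1)) v) + ((k : K) + 1) • (y ^ k) v ∈ D := by
  induction k with
  | zero => simpa [h.left_right v hv] using h.right_mem_D _ hxv
  | succ k ih =>
    convert h.right_mem_D _ ih using 1
    rw [pow_succ' y (k + 1), Module.End.mul_apply, h.left_right _ (h.right_pow_mem hv _), map_add,
      map_smul, ← Module.End.mul_apply y (y ^ k), ← pow_succ']
    push_cast
    module

lemma left_pow_right_pow_sub_mem (hxv : x v ∈ D) (k : ℕ) :
    (x ^ k) ((y ^ k) v) - ((-1 : K) ^ k * k.factorial) • v ∈ D := by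
  induction k with
  | zero => simp
  | succ k ih =>
    have hpow := Module.End.pow_apply_mem_of_forall_mem k h.left_mem_D _
      (h.left_right_pow_succ_mem hv hxv k)
    convert sub_mem hpow (D.smul_mem ((k : K) + 1) ih) using 1
    rw [map_add, map_smul, pow_succ x k, Module.End.mul_apply, Nat.factorial_succ, pow_succ]
    push_cast
    module

lemma left_pow_succ_right (k : ℕ) :
    (x ^ (k + 1)) (y v) = y ((x ^ (k + 1)) v) - ((k : K) + 1) • (x ^ k) v := by
  induction k with
  | zero => simp [h.left_right v hv]
  | succ k ih =>
    have hmem := Module.End.pow_apply_mem_of_forall_mem (k + 1) h.left_mem_S v hv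
    rw [pow_succ' x (k + 1), Module.End.mul_apply, ih, map_sub, map_smul, h.left_right _ hmem,
      Module.End.mul_apply, ← Module.End.mul_apply x (x ^ k), ← pow_succ']
    push_cast
    module

variable (p : ℕ) [CharP K p]

lemma exists_sub_mem_of_pow_mem {k : ℕ} (hk : k < p) (hxv : (x ^ k) v ∈ D) :
    ∃ u ∈ S, v - x u ∈ D := by
  induction k generalizing v with
  | zero => exact ⟨0, zero_mem _, by simpa using hxv⟩
  | succ k ih =>
    set a : K := (k : K) + 1
    have ha : a ≠ 0 := by
      rw [show a = (k + 1 : ℕ) by simp [a], Ne, CharP.cast_eq_zero_iff K p]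
      exact Nat.not_dvd_of_pos_of_lt k.succ_pos hk
    have hpow : (x ^ k) (v + a⁻¹ • x (y v)) = a⁻¹ • y ((x ^ (k + 1)) v) := by
      rw [map_add, map_smul, ← Module.End.mul_apply (x ^ k) x, ← pow_succ,
        h.left_pow_succ_right hv, smul_sub, smul_smul, inv_mul_cancel₀ ha]
      module
    obtain ⟨u, hu, hvu⟩ := ih (v := v + a⁻¹ • x (y v))
      (add_mem hv (S.smul_mem _ (h.left_mem_S _ (h.right_mem_S _ hv)))) (by lia)
      (hpow ▸ D.smul_mem _ (h.right_mem_D _ hxv))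
    refine ⟨u - a⁻¹ • y v, sub_mem hu (S.smul_mem _ (h.right_mem_S _ hv)), ?_⟩
    convert hvu using 1
    rw [map_sub, map_smul]
    abel

variable [Fact p.Prime]

lemma exists_sub_pow_pred_mem (hxv : x v ∈ D) : ∃ u ∈ S, v - (x ^ (p - 1)) u ∈ D := by
  have hp : p.Prime := Fact.out
  set a : K := (-1) ^ (p - 1) * (p - 1).factorial
  have ha : a ≠ 0 := by
    refine mul_ne_zero (pow_ne_zero _ (by simp)) ?_
    rw [Ne, CharP.cast_eq_zero_iff K p, hp.dvd_factorial]
    have := hp.pos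
    lia
  refine ⟨a⁻¹ • (y ^ (p - 1)) v, S.smul_mem _ (h.right_pow_mem hv _), ?_⟩
  convert D.smul_mem (-a⁻¹) (h.left_pow_right_pow_sub_mem hv hxv (p - 1)) using 1
  rw [map_smul, smul_sub, smul_smul, neg_mul, inv_mul_cancel₀ ha]
  module

lemma exists_sub_pow_zigzagExp_mem {i : ℕ} (hxv : (x ^ zigzagExp p (i + 1)) v ∈ D) :
    ∃ u ∈ S, v - (x ^ zigzagExp p i) u ∈ D := by
  have hp : 0 < p := (Fact.out : p.Prime).pos
  by_cases hi : Even i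
  · rw [zigzagExp, if_pos hi]
    exact h.exists_sub_pow_pred_mem hv p (by simpa [zigzagExp, Nat.even_add_one, hi] using hxv)
  · rw [zigzagExp, if_neg hi, pow_one]
    rw [zigzagExp, if_pos (Nat.even_add_one.2 hi)] at hxv
    exact h.exists_sub_mem_of_pow_mem hv p (by lia) hxv

end IsWeylPair

end WeylPair

section Degenerate

variable {K W : Type*} [CommRing K]

/-- The relations that say that an ordered edge with equal ends is degenerate and that the two
orderings of an edge differ by a sign. -/
def edgeRelations (K W : Type*) [CommRing K] : Set (Chain K W) :=
  {q | (∃ a, q = simplex [a, a]) ∨ ∃ a b, q = simplex [a, b] + simplex [b, a]}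

/-- The chains that vanish in the alternating chain complex: those generated by the edge relations
under joins on both sides. -/
def degenerate (K W : Type*) [CommRing K] : Submodule K (Chain K W) :=
  Submodule.span K {c | ∃ l m : List W, ∃ q ∈ edgeRelations K W,
    c = join (simplex l) (join q (simplex m))}

lemma linearMap_mem_of_mem_degenerate {M : Type*} [AddCommGroup M] [Module K M]
    {F : Chain K W →ₗ[K] M} {P : Submodule K M}
    (h : ∀ l m, ∀ q ∈ edgeRelations K W, F (join (simplex l) (join q (simplex m))) ∈ P)
    {c : Chain K W} (hc : c ∈ degenerate K W) : F c ∈ P := by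
  refine (Submodule.span_le (p := P.comap F)).2 ?_ hc
  rintro _ ⟨l, m, q, hq, rfl⟩
  exact h l m q hq

lemma join_mem_degenerate {q : Chain K W} (hq : q ∈ edgeRelations K W) (c e : Chain K W) :
    join c (join q e) ∈ degenerate K W := by
  refine linearMap_mem_of_mem_chainsOn (F := join.flip (join q e)) (fun l _ => ?_)
    (mem_chainsOn_support c)
  refine linearMap_mem_of_mem_chainsOn (F := join (simplex l) ∘ₗ join q) (fun m _ => ?_)
    (mem_chainsOn_support e)
  exact Submodule.subset_span ⟨l, m, q, hq, rfl⟩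

lemma cone_mem_degenerate (a : W) {c : Chain K W} (hc : c ∈ degenerate K W) :
    cone a c ∈ degenerate K W := by
  refine linearMap_mem_of_mem_degenerate (fun l m q hq => ?_) hc
  rw [cone, ← join_assoc]
  exact join_mem_degenerate hq _ _

lemma boundary_mem_degenerate {c : Chain K W} (hc : c ∈ degenerate K W) :
    boundary c ∈ degenerate K W := by
  refine linearMap_mem_of_mem_degenerate (fun l m q hq => ?_) hc
  have hq_boundary : boundary q = 0 := by
    rcases hq with ⟨a, rfl⟩ | ⟨a, b, rfl⟩ <;> simp [boundary_cons]
  have hq_length : q ∈ chainsOn K {l : List W | l.length = 2} := by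
    rcases hq with ⟨a, rfl⟩ | ⟨a, b, rfl⟩
    · exact simplex_mem_chainsOn rfl
    · exact add_mem (simplex_mem_chainsOn rfl) (simplex_mem_chainsOn rfl)
  rw [boundary_join_simplex, boundary_join hq_length, hq_boundary, map_zero, LinearMap.zero_apply,
    zero_add, map_smul]
  exact add_mem (join_mem_degenerate hq _ _)
    (Submodule.smul_mem _ _ (Submodule.smul_mem _ _ (join_mem_degenerate hq _ _)))

lemma push_mem_degenerate {W' : Type*} (f : W → W') {c : Chain K W} (hc : c ∈ degenerate K W) :
    push f c ∈ degenerate K W' := by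
  refine linearMap_mem_of_mem_degenerate (fun l m q hq => ?_) hc
  rw [push_join, push_join]
  refine join_mem_degenerate ?_ _ _
  rcases hq with ⟨a, rfl⟩ | ⟨a, b, rfl⟩
  · exact Or.inl ⟨f a, by simp⟩
  · exact Or.inr ⟨f a, f b, by simp⟩

lemma simplex_cons_append_cons_mem_degenerate (a : W) (l m : List W) :
    (simplex (a :: (l ++ a :: m)) : Chain K W) ∈ degenerate K W := by
  induction l with
  | nil =>
    simpa using join_mem_degenerate (K := K) (Or.inl ⟨a, rfl⟩) (simplex []) (simplex m)
  | cons b l ih =>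
    have hswap := join_mem_degenerate (K := K) (Or.inr ⟨a, b, rfl⟩) (simplex [])
      (simplex (l ++ a :: m))
    simpa using sub_mem hswap (cone_mem_degenerate b ih)

lemma simplex_mem_degenerate {l : List W} (hl : ¬ l.Nodup) :
    (simplex l : Chain K W) ∈ degenerate K W := by
  induction l with
  | nil => simp at hl
  | cons a l ih =>
    by_cases ha : a ∈ l
    · obtain ⟨s, t, rfl⟩ := List.append_of_mem ha
      exact simplex_cons_append_cons_mem_degenerate a s t
    · simpa using cone_mem_degenerate a (ih fun hl' => hl (List.nodup_cons.2 ⟨ha, hl'⟩))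

lemma simplex_nil_notMem_degenerate [Nontrivial K] :
    (simplex [] : Chain K W) ∉ degenerate K W := fun h => by
  have hcoeff := linearMap_mem_of_mem_degenerate (F := Finsupp.lapply []) (P := ⊥)
    (fun l m q hq => by
      rcases hq with ⟨a, rfl⟩ | ⟨a, b, rfl⟩ <;>
        simp only [map_add, LinearMap.add_apply, join_simplex] <;> simp [simplex]) h
  simp [simplex] at hcoeff

variable [DecidableEq W]

/-- The operator that multiplies an ordered simplex by a function of its set of vertices. -/
def diagonal (θ : Finset W → K) : Module.End K (Chain K W) :=
  Finsupp.linearCombination K fun l => θ l.toFinset • simplex l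

lemma diagonal_simplex (θ : Finset W → K) (l : List W) :
    diagonal θ (simplex l) = θ l.toFinset • simplex l :=
  linearCombination_simplex _ _

lemma diagonal_mul (θ θ' : Finset W → K) :
    diagonal θ * diagonal θ' = diagonal fun s => θ s * θ' s :=
  linearMap_ext fun l => by
    simp [Module.End.mul_apply, diagonal_simplex, smul_smul, mul_comm]

lemma commute_diagonal (θ θ' : Finset W → K) : Commute (diagonal θ) (diagonal θ') := by
  simp only [Commute, SemiconjBy, diagonal_mul, mul_comm]

lemma diagonal_pow (θ : Finset W → K) (n : ℕ) : diagonal θ ^ n = diagonal fun s => θ s ^ n := by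
  induction n with
  | zero => exact linearMap_ext fun l => by simp [diagonal_simplex]
  | succ n ih => simp only [pow_succ, ih, diagonal_mul]

lemma diagonal_mem_chainsOn (θ : Finset W → K) {s : Set (List W)} {c : Chain K W}
    (hc : c ∈ chainsOn K s) : diagonal θ c ∈ chainsOn K s := by
  refine linearMap_mem_of_mem_chainsOn (fun l hl => ?_) hc
  rw [diagonal_simplex]
  exact Submodule.smul_mem _ _ (simplex_mem_chainsOn hl)

lemma diagonal_mem_degenerate (θ : Finset W → K) {c : Chain K W} (hc : c ∈ degenerate K W) :
    diagonal θ c ∈ degenerate K W := by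
  refine linearMap_mem_of_mem_degenerate (fun l m q hq => ?_) hc
  have hmem := join_mem_degenerate hq (simplex l) (simplex m)
  rcases hq with ⟨a, rfl⟩ | ⟨a, b, rfl⟩
  · simp only [join_simplex, diagonal_simplex] at hmem ⊢
    exact Submodule.smul_mem _ _ hmem
  · have hset : (l ++ ([b, a] ++ m)).toFinset = (l ++ ([a, b] ++ m)).toFinset := by
      ext x
      simp [or_left_comm]
    simp only [map_add, LinearMap.add_apply, join_simplex, diagonal_simplex] at hmem ⊢
    rw [hset, ← smul_add]
    exact Submodule.smul_mem _ _ hmem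

end Degenerate

section CharacterSelection

variable {K : Type*} [AddCommGroup K] (p : ℕ) [Fact p.Prime] [Module (ZMod p) K]

lemma exists_linearMap_zmod_eq_zero_on (H : AddSubgroup K) :
    ∃ ℓ : K →ₗ[ZMod p] ZMod p, (∀ g ∈ H, ℓ g = 0) ∧ (H ≠ ⊤ → ℓ ≠ 0) := by
  by_cases h : H = ⊤
  · exact ⟨0, by simp, fun h' => absurd h h'⟩
  · have hlt : AddSubgroup.toZModSubmodule p H < ⊤ := by
      rw [lt_top_iff_ne_top]
      intro htop
      refine h (eq_top_iff.2 fun g _ => ?_)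
      have hg : g ∈ AddSubgroup.toZModSubmodule p H := htop ▸ Submodule.mem_top
      exact hg
    obtain ⟨ℓ, hℓ, hle⟩ := Submodule.exists_le_ker_of_lt_top _ hlt
    exact ⟨ℓ, fun g hg => hle hg, fun _ => hℓ⟩

lemma exists_cocycle_of_stabilizer_ne_top (Ω : Type*) [AddAction K Ω] :
    ∃ (φ : Ω → ZMod p) (ℓ : Ω → K →ₗ[ZMod p] ZMod p), (∀ (g : K) ω, ℓ (g +ᵥ ω) = ℓ ω) ∧
      (∀ (g : K) ω, φ (g +ᵥ ω) = φ ω + ℓ ω g) ∧ ∀ ω, AddAction.stabilizer K ω ≠ ⊤ → ℓ ω ≠ 0 := by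
  choose L hL hL_ne using exists_linearMap_zmod_eq_zero_on (K := K) p
  let rep (ω : Ω) : Ω := (Quotient.mk (AddAction.orbitRel K Ω) ω).out
  have hrep (ω : Ω) : ∃ g : K, g +ᵥ rep ω = ω :=
    (AddAction.orbitRel K Ω).symm (Quotient.mk_out (s := AddAction.orbitRel K Ω) ω)
  have hrep_vadd (g : K) (ω : Ω) : rep (g +ᵥ ω) = rep ω :=
    congrArg Quotient.out (Quotient.sound (s := AddAction.orbitRel K Ω) ⟨g, rfl⟩)
  choose γ hγ using hrep
  have hstab (g : K) (ω : Ω) : AddAction.stabilizer K (g +ᵥ ω) = AddAction.stabilizer K ω :=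
    AddAction.stabilizer_vadd_eq_right g ω
  refine ⟨fun ω => L (AddAction.stabilizer K ω) (γ ω), fun ω => L (AddAction.stabilizer K ω),
    fun g ω => by simp only [hstab], fun g ω => ?_, fun ω => hL_ne _⟩
  have hγ_vadd : γ (g +ᵥ ω) - (γ ω + g) ∈ AddAction.stabilizer K ω := by
    rw [← hγ ω, hstab, hγ ω, AddAction.mem_stabilizer_iff, sub_eq_neg_add, add_vadd,
      neg_vadd_eq_iff, add_comm, add_vadd, hγ, ← hrep_vadd g, hγ]
  simp only [hstab]
  rw [← map_add, ← sub_eq_zero, ← map_sub]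
  exact hL _ _ hγ_vadd

end CharacterSelection

section TwistedSum

lemma commute_sum_smul_sub_one {ι K B : Type*} [Fintype ι] [CommRing K] [Ring B] [Algebra K B]
    (b : ι → K) {t : ι → B} {z : B} (h : ∀ i, Commute (t i) z) :
    Commute (∑ i, b i • (t i - 1)) z :=
  Commute.sum_left _ _ _ fun i _ => ((h i).sub_left (Commute.one_left z)).smul_left _

variable {A K ι : Type*} [CommRing K] [Fintype ι] {b : ι → K}

lemma commute_diffOperator {z : Module.End K (Chain K (A × K))}
    (hz : ∀ g, Commute (translateChain g) z) : Commute (diffOperator b) z :=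
  commute_sum_smul_sub_one (B := Module.End K (Chain K (A × K))) b fun i => hz (b i)

lemma diffOperator_mem_degenerate {c : Chain K (A × K)} (hc : c ∈ degenerate K (A × K)) :
    diffOperator b c ∈ degenerate K (A × K) := by
  rw [diffOperator_apply]
  exact sum_mem fun i _ => Submodule.smul_mem _ _ (sub_mem (push_mem_degenerate _ hc) hc)

variable [DecidableEq A] [DecidableEq K]

/-- The action of the additive group of colours on finite sets of coloured vertices. -/
abbrev translateFinsetAction (A K : Type*) [DecidableEq A] [CommRing K] [DecidableEq K] :
    AddAction K (Finset (A × K)) where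
  vadd g s := s.image (translate g)
  zero_vadd s := by
    change s.image (translate 0) = s
    rw [translate_zero, Finset.image_id]
  add_vadd g h s := by
    change s.image (translate (g + h)) = (s.image (translate h)).image (translate g)
    rw [Finset.image_image, translate_comp]

lemma toFinset_map_translate (g : K) (l : List (A × K)) :
    (l.map (translate g)).toFinset = l.toFinset.image (translate g) := by
  ext x
  simp

lemma commute_translateChain_diagonal {g : K} {θ : Finset (A × K) → K}
    (hθ : ∀ s, θ (s.image (translate g)) = θ s) : Commute (translateChain g) (diagonal θ) :=
  linearMap_ext fun l => by
    simp [Module.End.mul_apply, diagonal_simplex, translateChain_simplex, toFinset_map_translate,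
      hθ]

/-- The sum `∑ bᵢ Tᵢ Θᵢ`, where `Tᵢ` is the translation by `bᵢ` and `Θᵢ` is the diagonal operator
of `θᵢ`. -/
def twistedSum (b : ι → K) (θ : ι → Finset (A × K) → K) : Module.End K (Chain K (A × K)) :=
  ∑ i, b i • (translateChain (b i) * diagonal (θ i))

lemma twistedSum_apply (θ : ι → Finset (A × K) → K) (c : Chain K (A × K)) :
    twistedSum b θ c = ∑ i, b i • translateChain (b i) (diagonal (θ i) c) := by
  simp [twistedSum, LinearMap.sum_apply]

lemma commute_twistedSum {θ : ι → Finset (A × K) → K} {z : Module.End K (Chain K (A × K))}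
    (hz : ∀ g, Commute (translateChain g) z) (hθz : ∀ i, Commute (diagonal (θ i)) z) :
    Commute (twistedSum b θ) z :=
  Commute.sum_left _ _ _ fun i _ => Commute.smul_left ((hz _).mul_left (hθz i)) _

lemma diffOperator_mul_diagonal {φ : Finset (A × K) → K} {θ : ι → Finset (A × K) → K}
    (hφ : ∀ i s, φ (s.image (translate (b i))) = φ s + θ i s) :
    diffOperator b * diagonal φ = diagonal φ * diffOperator b - twistedSum b θ := by
  refine linearMap_ext fun l => ?_
  simp only [LinearMap.sub_apply, Module.End.mul_apply, diagonal_simplex, map_smul,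
    diffOperator_apply, twistedSum_apply, map_sum, map_sub, translateChain_simplex,
    toFinset_map_translate, hφ, Finset.smul_sum, ← Finset.sum_sub_distrib]
  exact Finset.sum_congr rfl fun i _ => by module

lemma twistedSum_mem_degenerate (θ : ι → Finset (A × K) → K) {c : Chain K (A × K)}
    (hc : c ∈ degenerate K (A × K)) : twistedSum b θ c ∈ degenerate K (A × K) := by
  rw [twistedSum_apply]
  exact sum_mem fun i _ =>
    Submodule.smul_mem _ _ (push_mem_degenerate _ (diagonal_mem_degenerate _ hc))

lemma twistedSum_mem_chainsOn (θ : ι → Finset (A × K) → K) {s : Set (List (A × K))}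
    (hs : ∀ g, ∀ l ∈ s, l.map (translate g) ∈ s) {c : Chain K (A × K)} (hc : c ∈ chainsOn K s) :
    twistedSum b θ c ∈ chainsOn K s := by
  rw [twistedSum_apply]
  exact sum_mem fun i _ =>
    Submodule.smul_mem _ _ (push_mem_chainsOn (hs _) (diagonal_mem_chainsOn _ hc))

lemma twistedSum_pow_char (p : ℕ) [Fact p.Prime] [CharP K p] {θ : ι → Finset (A × K) → K}
    (hθ : ∀ i g s, θ i (s.image (translate g)) = θ i s) :
    twistedSum b θ ^ p = diagonal fun s => (∑ i, b i * θ i s) ^ p := by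
  have := charP_end_chain K (A × K) p
  have hcomm (g : K) (i : ι) : Commute (translateChain g) (diagonal (θ i)) :=
    commute_translateChain_diagonal (hθ i g)
  have hsummand (i : ι) : (b i • (translateChain (b i) * diagonal (θ i))) ^ p =
      diagonal fun s => (b i * θ i s) ^ p := by
    rw [smul_pow, (hcomm _ _).mul_pow, translateChain_pow, nsmul_eq_mul, CharP.cast_eq_zero,
      zero_mul, translateChain_zero, one_mul, diagonal_pow]
    exact linearMap_ext fun l => by simp [diagonal_simplex, smul_smul, mul_pow]
  have hsummands_commute (i j : ι) : Commute (b i • (translateChain (b i) * diagonal (θ i)))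
      (b j • (translateChain (b j) * diagonal (θ j))) :=
    ((((commute_translateChain _ _).mul_right (hcomm _ _)).mul_left
      ((hcomm _ _).symm.mul_right (commute_diagonal _ _))).smul_right _).smul_left _
  refine (sum_pow_char_of_commute (B := Module.End K (Chain K (A × K))) p Finset.univ _
    fun i j => hsummands_commute i j).trans (linearMap_ext fun l => ?_)
  simp only [hsummand, LinearMap.sum_apply, diagonal_simplex, sum_pow_char, Finset.sum_smul]

end TwistedSum

/-! ### Deficient chains -/

section WeylOperator

lemma mul_mul_mul_pow_eq_sub {B : Type*} [Ring B] {x f m u : B} (hxf : x * f = f * x - u)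
    (hxm : Commute x m) (hxu : Commute x u) (hum : Commute u m) (n : ℕ) :
    x * (f * m * u ^ n) = f * m * u ^ n * x - m * u ^ (n + 1) := by
  calc x * (f * m * u ^ n) = x * f * (m * u ^ n) := by noncomm_ring
    _ = f * (x * (m * u ^ n)) - u * m * u ^ n := by rw [hxf]; noncomm_ring
    _ = f * m * u ^ n * x - m * u ^ (n + 1) := by
      rw [(hxm.mul_right (hxu.pow_right n)).eq, hum.eq, pow_succ']
      noncomm_ring

variable {A K ι : Type*} [DecidableEq A] [Field K] [DecidableEq K] [Fintype ι] {b : ι → K}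
  (p : ℕ) [Fact p.Prime] [CharP K p]

lemma isWeylPair_diffOperator {φ : Finset (A × K) → K} {θ : ι → Finset (A × K) → K}
    (hφ : ∀ i s, φ (s.image (translate (b i))) = φ s + θ i s)
    (hθ : ∀ i g s, θ i (s.image (translate g)) = θ i s) {S : Set (List (A × K))}
    (hS : ∀ g, ∀ l ∈ S, l.map (translate g) ∈ S)
    (hne : ∀ l ∈ S, ∑ i, b i * θ i l.toFinset ≠ 0) :
    IsWeylPair (diffOperator b)
      (diagonal φ * diagonal (fun s => ((∑ i, b i * θ i s) ^ p)⁻¹) * twistedSum b θ ^ (p - 1))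
      (degenerate K (A × K)) (chainsOn K S) where
  left_mem_D _ := diffOperator_mem_degenerate
  right_mem_D v hv := diagonal_mem_degenerate _ (diagonal_mem_degenerate _
    (Module.End.pow_apply_mem_of_forall_mem _ (fun _ => twistedSum_mem_degenerate θ) v hv))
  left_mem_S v hv := by simpa using diffOperator_pow_mem b hS 1 hv
  right_mem_S v hv := diagonal_mem_chainsOn _ (diagonal_mem_chainsOn _
    (Module.End.pow_apply_mem_of_forall_mem _ (fun _ => twistedSum_mem_chainsOn θ hS) v hv))
  left_right v hv := by
    set m : Finset (A × K) → K := fun s => ((∑ i, b i * θ i s) ^ p)⁻¹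
    have htranslate_m (g : K) : Commute (translateChain g) (diagonal m) :=
      commute_translateChain_diagonal fun s => by simp only [m, hθ]
    have htranslate_twistedSum (g : K) : Commute (translateChain g) (twistedSum b θ) :=
      (commute_twistedSum (fun h => commute_translateChain h g) fun i =>
        (commute_translateChain_diagonal (hθ i g)).symm).symm
    have hcomm := mul_mul_mul_pow_eq_sub (B := Module.End K (Chain K (A × K)))
      (diffOperator_mul_diagonal hφ)
      (commute_diffOperator htranslate_m) (commute_diffOperator htranslate_twistedSum)
      (commute_twistedSum htranslate_m fun i => commute_diagonal _ _) (p - 1)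
    rw [Nat.sub_add_cancel (Fact.out : p.Prime).one_le, twistedSum_pow_char p hθ,
      diagonal_mul m] at hcomm
    have hid : diagonal (fun s => m s * (∑ i, b i * θ i s) ^ p) v = v :=
      linearMap_apply_eq_of_mem_chainsOn (G := LinearMap.id) (fun l hl => by
        simp [diagonal_simplex, m, inv_mul_cancel₀ (pow_ne_zero p (hne l hl))]) hv
    refine (LinearMap.congr_fun hcomm v).trans ?_
    rw [LinearMap.sub_apply, hid]
    rfl

end WeylOperator

section DeficientLists

variable {A K : Type*}

/-- The ordered simplices of length `n` on coloured points in which each point misses a colour. -/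
def deficientLists (A K : Type*) (n : ℕ) : Set (List (A × K)) :=
  {l | l.length = n ∧ ∀ a, ∃ c, (a, c) ∉ l}

lemma boundary_mem_chainsOn_deficientLists [CommRing K] {n : ℕ} {c : Chain K (A × K)}
    (hc : c ∈ chainsOn K (deficientLists A K (n + 1))) :
    boundary c ∈ chainsOn K (deficientLists A K n) := by
  refine boundary_mem_chainsOn ?_ hc
  rintro l ⟨hlength, hl⟩ m hm hml
  refine ⟨by lia, fun a => ?_⟩
  obtain ⟨c, hc⟩ := hl a
  exact ⟨c, fun h => hc (hm.subset h)⟩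

lemma chainsOn_deficientLists_le_degenerate [CommRing K] [Fintype A] [Fintype K] {n : ℕ}
    (hn : Fintype.card A * (Fintype.card K - 1) < n) :
    chainsOn K (deficientLists A K n) ≤ degenerate K (A × K) := by
  classical
  refine fun c => linearMap_mem_of_mem_chainsOn (F := LinearMap.id) ?_
  rintro l ⟨hlength, hl⟩
  refine simplex_mem_degenerate fun hnodup => hn.not_ge ?_
  choose c hc using hl
  have hsubset : l.toFinset ⊆ (Finset.univ.sigma fun a => Finset.univ.erase (c a)).map
      (Equiv.sigmaEquivProd A K).toEmbedding := by
    rintro ⟨a, k⟩ hak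
    simp only [Finset.mem_map_equiv, Finset.mem_sigma, Finset.mem_univ, true_and,
      Finset.mem_erase, and_true]
    intro (hk : k = c a)
    exact hc a (by simpa [← hk] using hak)
  simpa [List.toFinset_card_of_nodup hnodup, hlength] using Finset.card_le_card hsubset

variable [CommRing K]

lemma map_translate_mem_deficientLists {n : ℕ} (g : K) {l : List (A × K)}
    (hl : l ∈ deficientLists A K n) : l.map (translate g) ∈ deficientLists A K n := by
  refine ⟨by simpa using hl.1, fun a => ?_⟩
  obtain ⟨c, hc⟩ := hl.2 a
  exact ⟨c + g, by rwa [mem_map_translate, add_sub_cancel_right]⟩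

variable [DecidableEq A] [DecidableEq K]

lemma exists_image_translate_ne {n : ℕ} {l : List (A × K)} (hl : l ∈ deficientLists A K (n + 1)) :
    ∃ g, l.toFinset.image (translate g) ≠ l.toFinset := by
  obtain ⟨⟨a, c⟩, hac⟩ := List.exists_mem_of_ne_nil l (List.ne_nil_of_length_eq_add_one hl.1)
  obtain ⟨c', hc'⟩ := hl.2 a
  refine ⟨c' - c, fun h => hc' ?_⟩
  rwa [← List.mem_toFinset, ← h, ← toFinset_map_translate, List.mem_toFinset, mem_map_translate,
    sub_sub_cancel]

end DeficientLists

section Dold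

variable {A K ι : Type*} [Field K] [Fintype ι] {p : ℕ} [Fact p.Prime] [Algebra (ZMod p) K]

lemma exists_isWeylPair_diffOperator (b : Module.Basis ι (ZMod p) K) (n : ℕ) :
    ∃ y, IsWeylPair (diffOperator b) y (degenerate K (A × K))
      (chainsOn K (deficientLists A K (n + 1))) := by
  classical
  have := charP_of_injective_algebraMap (algebraMap (ZMod p) K).injective p
  let _ := translateFinsetAction A K
  obtain ⟨φ, ℓ, hℓ, hφ, hℓ_ne⟩ := exists_cocycle_of_stabilizer_ne_top (K := K) p (Finset (A × K))
  refine ⟨_, isWeylPair_diffOperator (φ := fun s => algebraMap (ZMod p) K (φ s))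
    (θ := fun i s => algebraMap (ZMod p) K (ℓ s (b i))) p (fun i s => ?_) (fun i g s => ?_)
    (fun g l => map_translate_mem_deficientLists g) fun l hl hzero => ?_⟩
  · rw [← map_add]
    exact congrArg _ (hφ (b i) s)
  · exact congrArg (fun f => algebraMap (ZMod p) K (f (b i))) (hℓ g s)
  · obtain ⟨g, hg⟩ := exists_image_translate_ne hl
    refine hℓ_ne l.toFinset (fun htop => hg ?_) (b.ext fun i => ?_)
    · exact AddAction.mem_stabilizer_iff.1 (htop ▸ AddSubgroup.mem_top g)
    · refine Fintype.linearIndependent_iff.1 b.linearIndependent (fun i => ℓ l.toFinset (b i)) ?_ i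
      simpa only [Algebra.smul_def, mul_comm] using hzero

/-- The chains `c i` are the image of the zigzag under an equivariant chain map. Exactness of the
alternating powers of `diffOperator b` on nondegenerate chains, applied from the top dimension down,
would make the empty simplex degenerate. -/
lemma not_exists_zigzag_deficientLists [Fintype A] [Fintype K] (b : Module.Basis ι (ZMod p) K)
    {N : ℕ} (hN : Fintype.card A * (Fintype.card K - 1) ≤ N) :
    ¬ ∃ c : ℕ → Chain K (A × K), (∀ i ≤ N, c i ∈ chainsOn K (deficientLists A K (i + 1))) ∧
      boundary (c 0) = simplex [] ∧
      ∀ i < N, boundary (c (i + 1)) = (diffOperator b ^ zigzagExp p (i + 1)) (c i) := by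
  rintro ⟨c, hc, hc_zero, hc_succ⟩
  have := charP_of_injective_algebraMap (algebraMap (ZMod p) K).injective p
  have hexact (i : ℕ) (hi : i ≤ N) : ∃ u ∈ chainsOn K (deficientLists A K (i + 2)),
      ∃ u' ∈ chainsOn K (deficientLists A K (i + 1)),
        c i - boundary u - (diffOperator b ^ zigzagExp p i) u' ∈ degenerate K (A × K) := by
    induction hi using Nat.decreasingInduction with
    | self =>
      refine ⟨0, zero_mem _, 0, zero_mem _, ?_⟩
      simpa using chainsOn_deficientLists_le_degenerate (by lia) (hc N le_rfl)
    | of_succ i hi ih =>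
      obtain ⟨u, -, u', hu', hmem⟩ := ih
      have hboundary := boundary_mem_degenerate hmem
      rw [map_sub, map_sub, boundary_boundary, sub_zero, hc_succ i hi,
        boundary_diffOperator_pow, ← map_sub] at hboundary
      obtain ⟨y, hy⟩ := exists_isWeylPair_diffOperator (A := A) b i
      obtain ⟨w, hw, hcw⟩ := hy.exists_sub_pow_zigzagExp_mem
        (sub_mem (hc i hi.le) (boundary_mem_chainsOn_deficientLists hu')) p hboundary
      exact ⟨u', hu', w, hw, hcw⟩
  obtain ⟨u, -, u', hu', hmem⟩ := hexact 0 N.zero_le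
  have hboundary := boundary_mem_degenerate hmem
  have hpow_boundary : (diffOperator b ^ zigzagExp p 0) (boundary u') = 0 := by
    refine linearMap_apply_eq_of_mem_chainsOn (G := 0) (fun l hl => ?_)
      (boundary_mem_chainsOn_deficientLists hu')
    obtain ⟨q, hq⟩ := Nat.exists_eq_add_of_le' (show 1 ≤ zigzagExp p 0 by
      have := (Fact.out : p.Prime).two_le
      simp only [zigzagExp, Even.zero, if_true]
      lia)
    rw [List.length_eq_zero_iff.1 hl.1, hq, pow_succ, Module.End.mul_apply, diffOperator_nil,
      map_zero, LinearMap.zero_apply]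
  rw [map_sub, map_sub, boundary_boundary, sub_zero, hc_zero, boundary_diffOperator_pow,
    hpow_boundary, sub_zero] at hboundary
  exact simplex_nil_notMem_degenerate hboundary

end Dold

section EquivariantSelection

lemma exists_equivariant_selection {G Ω I : Type*} [AddGroup G] [AddAction G Ω] [AddAction G I]
    [Nonempty I] {B : Set Ω} (hB : ∀ (g : G), ∀ y ∈ B, g +ᵥ y ∈ B)
    (hfree : ∀ (g : G), ∀ y ∈ B, g +ᵥ y = y → g = 0) {P : Ω → I → Prop}
    (hP : ∀ (g : G) y i, P y i → P (g +ᵥ y) (g +ᵥ i)) (h : ∀ y ∈ B, ∃ i, P y i) :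
    ∃ η : Ω → I, (∀ y ∈ B, P y (η y)) ∧ ∀ (g : G), ∀ y ∈ B, η (g +ᵥ y) = g +ᵥ η y := by
  let rep (y : Ω) : Ω := (Quotient.mk (AddAction.orbitRel G Ω) y).out
  have hrep (y : Ω) : ∃ g : G, g +ᵥ rep y = y :=
    (AddAction.orbitRel G Ω).symm (Quotient.mk_out (s := AddAction.orbitRel G Ω) y)
  have hrep_vadd (g : G) (y : Ω) : rep (g +ᵥ y) = rep y :=
    congrArg Quotient.out (Quotient.sound (s := AddAction.orbitRel G Ω) ⟨g, rfl⟩)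
  choose γ hγ using hrep
  have hrep_mem (y : Ω) (hy : y ∈ B) : rep y ∈ B := by
    rw [show rep y = -γ y +ᵥ y from (eq_neg_vadd_iff.2 (hγ y))]
    exact hB _ y hy
  have hcancel (g g' : G) (y : Ω) (hy : y ∈ B) (hgg' : g +ᵥ y = g' +ᵥ y) : g = g' := by
    rw [← neg_vadd_eq_iff, ← add_vadd] at hgg'
    exact (neg_add_eq_zero.1 (hfree _ y hy hgg')).symm
  choose! η₀ hη₀ using h
  refine ⟨fun y => γ y +ᵥ η₀ (rep y), fun y hy => ?_, fun g y hy => ?_⟩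
  · simpa only [hγ] using hP (γ y) _ _ (hη₀ _ (hrep_mem y hy))
  · have hγ_vadd : γ (g +ᵥ y) = g + γ y := by
      refine hcancel _ _ _ (hrep_mem y hy) ?_
      rw [add_vadd, hγ, ← hrep_vadd g, hγ]
    simp only [hrep_vadd, hγ_vadd, add_vadd]

variable {A K : Type*} [CommRing K]

/-- The action of the additive group of colours on coloured vertices. -/
abbrev translateVertexAction (A K : Type*) [CommRing K] : AddAction K (A × K) where
  vadd := translate
  zero_vadd := congrFun translate_zero
  add_vadd g h a := (congrFun (translate_comp g h) a).symm

/-- The linear extension of a translation of coloured vertices to the points of the standard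
simplex. -/
def translatePoint (g : K) : (A × K → ℝ) →ₗ[ℝ] (A × K → ℝ) :=
  LinearMap.funLeft ℝ ℝ (translate (-g))

lemma translatePoint_apply (g : K) (y : A × K → ℝ) (a : A) (c : K) :
    translatePoint g y (a, c) = y (a, c - g) := by
  simp [translatePoint, LinearMap.funLeft_apply, translate, sub_eq_neg_add]

/-- The action of the additive group of colours on the points of the standard simplex. -/
abbrev translatePointAction (A K : Type*) [CommRing K] : AddAction K (A × K → ℝ) where
  vadd g y := translatePoint g y
  zero_vadd y := funext fun ⟨a, c⟩ => (translatePoint_apply 0 y a c).trans (by rw [sub_zero])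
  add_vadd g h y := funext fun ⟨a, c⟩ => by
    change translatePoint (g + h) y (a, c) = translatePoint g (translatePoint h y) (a, c)
    simp only [translatePoint_apply, sub_sub]

lemma translatePoint_vertex [DecidableEq A] [DecidableEq K] (g : K) (a : A × K) :
    translatePoint g (vertex a) = vertex (translate g a) := by
  obtain ⟨a, c⟩ := a
  ext ⟨a', c'⟩
  simp only [translatePoint_apply, vertex, translate, Pi.single_apply, Prod.mk.injEq,
    sub_eq_iff_eq_add, add_comm g c]

variable [Fintype A] [Fintype K]

lemma translatePoint_mem_stdSimplex (g : K) {y : A × K → ℝ} (hy : y ∈ stdSimplex ℝ (A × K)) :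
    translatePoint g y ∈ stdSimplex ℝ (A × K) := by
  refine ⟨fun ⟨a, c⟩ => ?_, ?_⟩
  · rw [translatePoint_apply]
    exact hy.1 _
  · rw [← hy.2, Fintype.sum_prod_type, Fintype.sum_prod_type]
    refine Finset.sum_congr rfl fun a _ => ?_
    simp only [translatePoint_apply]
    exact Equiv.sum_comp (Equiv.subRight g) fun c => y (a, c)

lemma translatePoint_mem_stdFace [DecidableEq A] [DecidableEq K] (g : K) {l : List (A × K)}
    {y : A × K → ℝ} (hy : y ∈ stdFace l.toFinset) :
    translatePoint g y ∈ stdFace (l.map (translate g)).toFinset := by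
  refine ⟨translatePoint_mem_stdSimplex g hy.1, fun ⟨a, c⟩ hac => ?_⟩
  rw [List.mem_toFinset, mem_map_translate] at hac
  rw [translatePoint_apply]
  exact hy.2 _ (by simpa using hac)

end EquivariantSelection

section ColoredPoints

variable {K V : Type*} [CommRing K] [Fintype K] [Fintype V] {X : Set (Finset V)}
  {y : Option V × K → ℝ}

lemma translatePoint_mem_realization (g : K) (hy : y ∈ realization (coloredComplex X)) :
    translatePoint g y ∈ realization (coloredComplex X) := by
  classical
  obtain ⟨s, hs, hys⟩ := Set.mem_iUnion₂.1 hy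
  rw [← s.toList_toFinset] at hs hys
  exact stdFace_subset_realization (map_translate_mem_coloredComplex g hs)
    (translatePoint_mem_stdFace g hys)

lemma eq_zero_of_translatePoint_eq {g : K} (hy : y ∈ realization (coloredComplex X))
    (h : translatePoint g y = y) : g = 0 := by
  obtain ⟨hsimplex, -, hcolor⟩ := (mem_realization_iff (isLowerSet_coloredComplex X)).1 hy
  obtain ⟨⟨o, c⟩, hc⟩ := posSupport_nonempty hsimplex
  have hcg : (o, c + g) ∈ posSupport y := by
    rw [mem_posSupport, ← h, translatePoint_apply, add_sub_cancel_right]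
    exact mem_posSupport.1 hc
  have hcolors : c = c + g := by
    rcases hcolor with ⟨hapex, hunique⟩ | ⟨c', hmono⟩
    · cases o with
      | none => exact absurd rfl (hapex _ hc)
      | some v => exact hunique v _ _ hc hcg
    · exact (hmono _ hc).trans (hmono _ hcg).symm
  simpa using hcolors

end ColoredPoints

/-! ### The test map -/

section TestMap

lemma continuousOn_mul_apply_inv_smul {Y E F : Type*} [TopologicalSpace Y] [AddCommGroup E]
    [Module ℝ E] [TopologicalSpace E] [ContinuousSMul ℝ E] [SeminormedAddCommGroup F]
    [NormedSpace ℝ F] {S : Set Y} {B : Set E} (hB : IsCompact B) {s : Y → ℝ} {z : Y → E}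
    {g : E → F} (hs : ContinuousOn s S) (hz : ContinuousOn z S) (hg : ContinuousOn g B)
    (h : ∀ y ∈ S, s y ≠ 0 → (s y)⁻¹ • z y ∈ B) :
    ContinuousOn (fun y => s y • g ((s y)⁻¹ • z y)) S := by
  obtain ⟨b, hb⟩ := hB.exists_bound_of_continuousOn hg
  intro y hy
  by_cases hsy : s y = 0
  · have hlim : Filter.Tendsto (fun x => |s x| * |b|) (nhdsWithin y S) (nhds 0) := by
      simpa [hsy] using ((hs y hy).abs.mul_const |b|).tendsto
    rw [ContinuousWithinAt, hsy, zero_smul]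
    refine squeeze_zero_norm' ?_ hlim
    filter_upwards [self_mem_nhdsWithin] with x hx
    by_cases hsx : s x = 0
    · simp [hsx]
    · rw [norm_smul, Real.norm_eq_abs]
      gcongr
      exact (hb _ (h x hx hsx)).trans (le_abs_self _)
  · refine (hs y hy).smul ((hg _ (h y hy hsy)).tendsto.comp (tendsto_nhdsWithin_iff.2
      ⟨((hs y hy).inv₀ hsy).smul (hz y hy), ?_⟩))
    filter_upwards [self_mem_nhdsWithin, (hs y hy).eventually_ne hsy] with x hx hsx
    exact h x hx hsx

variable {V C D : Type*} [Fintype V] {X : Set (Finset V)} {f : (V → ℝ) → D → ℝ}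
  {y : Option V × C → ℝ}

/-- The coordinates of `y` at the non-apex vertices of colour `c`. -/
def slice (y : Option V × C → ℝ) (c : C) : V → ℝ := fun v => y (some v, c)

/-- The total weight that `y` gives to the non-apex vertices of colour `c`. -/
def mass (y : Option V × C → ℝ) (c : C) : ℝ := ∑ v, slice y c v

/-- The test map induced by `f`. Its entry at `none` is the total weight of a colour, and its entry
at `some j` is the `j`-th coordinate of `f` at the normalized slice of that colour, scaled by the
mass of the slice; where the mass vanishes, the value `0⁻¹ = 0` inside `f` is irrelevant. -/
def testMap (f : (V → ℝ) → D → ℝ) (y : Option V × C → ℝ) : Option D → C → ℝ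
  | none, c => ∑ o, y (o, c)
  | some j, c => mass y c * f ((mass y c)⁻¹ • slice y c) j

lemma inv_mass_smul_slice_mem_realization [Fintype C] (hy : y ∈ realization (coloredComplex X))
    {c : C} (hc : mass y c ≠ 0) : (mass y c)⁻¹ • slice y c ∈ realization X := by
  obtain ⟨s, ⟨hclass, -⟩, hys⟩ := Set.mem_iUnion₂.1 hy
  obtain ⟨σ, hσ, hsσ⟩ := hclass c
  have hmass : 0 ≤ mass y c := Finset.sum_nonneg fun v _ => hys.1.1 _
  refine stdFace_subset_realization hσ ⟨⟨fun v => ?_, ?_⟩, fun v hv => ?_⟩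
  · exact mul_nonneg (inv_nonneg.2 hmass) (hys.1.1 _)
  · simp only [Pi.smul_apply, smul_eq_mul, ← Finset.mul_sum]
    exact inv_mul_cancel₀ hc
  · simp [slice, hys.2 _ fun hvs => hv (hsσ v hvs)]

lemma continuousOn_testMap [Fintype C] (hf : ContinuousOn f (realization X)) (j : Option D)
    (c : C) : ContinuousOn (fun y => testMap f y j c) (realization (coloredComplex X)) := by
  have hslice : Continuous fun y : Option V × C → ℝ => slice y c := by
    unfold slice
    fun_prop
  cases j with
  | none => exact (continuous_finsetSum _ fun o _ => continuous_apply (o, c)).continuousOn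
  | some j =>
    have hmass : Continuous fun y : Option V × C → ℝ => mass y c :=
      continuous_finsetSum _ fun v _ => (continuous_apply v).comp hslice
    exact continuousOn_mul_apply_inv_smul (isCompact_realization X) hmass.continuousOn
      hslice.continuousOn (continuousOn_pi.1 hf j)
      fun _ hy => inv_mass_smul_slice_mem_realization hy

lemma testMap_translatePoint {K : Type*} [CommRing K] (g : K) (y : Option V × K → ℝ)
    (j : Option D) (c : K) : testMap f (translatePoint g y) j c = testMap f y j (c - g) := by
  have hslice : slice (translatePoint g y) c = slice y (c - g) :=
    funext fun v => translatePoint_apply g y (some v) c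
  cases j with
  | none => simp only [testMap, translatePoint_apply]
  | some j => simp only [testMap, mass, hslice]

variable [Fintype C]

/-- The amounts by which the entries of the test map exceed their minimum over all colours. They
all vanish if and only if the test map does not depend on the colour. -/
def excess [Nonempty C] (f : (V → ℝ) → D → ℝ) (y : Option V × C → ℝ) (a : Option D × C) : ℝ :=
  testMap f y a.1 a.2 - Finset.univ.inf' Finset.univ_nonempty (testMap f y a.1)

lemma exists_excess_eq_zero [Nonempty C] (f : (V → ℝ) → D → ℝ) (y : Option V × C → ℝ)
    (j : Option D) : ∃ c, excess f y (j, c) = 0 := by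
  obtain ⟨c, -, hc⟩ := Finset.exists_mem_eq_inf' Finset.univ_nonempty (testMap f y j)
  exact ⟨c, sub_eq_zero.2 hc.symm⟩

lemma continuousOn_excess [Nonempty C] (hf : ContinuousOn f (realization X)) :
    ContinuousOn (excess (C := C) f) (realization (coloredComplex X)) :=
  continuousOn_pi.2 fun _ => (continuousOn_testMap hf _ _).sub
    (ContinuousOn.finset_inf'_apply _ fun c _ => continuousOn_testMap hf _ c)

lemma excess_translatePoint {K : Type*} [CommRing K] [Fintype K] (g : K) (y : Option V × K → ℝ)
    (a : Option D × K) : excess f (translatePoint g y) (translate g a) = excess f y a := by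
  have hinf : ⨅ c, testMap f y a.1 (c - g) = ⨅ c, testMap f y a.1 c := (Equiv.subRight g).iInf_comp
  simp only [excess, translate, Finset.inf'_univ_eq_ciInf, testMap_translatePoint, hinf,
    add_sub_cancel_left]

lemma testMap_eq_of_excess_nonpos [Nonempty C] (h : ∀ a, excess f y a ≤ 0) (j : Option D)
    (c c' : C) : testMap f y j c = testMap f y j c' := by
  have hle (c c' : C) : testMap f y j c ≤ testMap f y j c' :=
    (sub_nonpos.1 (h (j, c))).trans (Finset.inf'_le _ (Finset.mem_univ c'))
  exact (hle c c').antisymm (hle c' c)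

lemma testMap_none_pos (hy : y ∈ stdSimplex ℝ (Option V × C))
    (h : ∀ c c', testMap f y none c = testMap f y none c') (c : C) : 0 < testMap f y none c := by
  by_contra! hc
  have hsum : ∑ c', testMap f y none c' = 1 :=
    (Fintype.sum_prod_type_right y).symm.trans hy.2
  linarith [Finset.sum_nonpos fun c' (_ : c' ∈ Finset.univ) => (h c' c).trans_le hc]

lemma mass_eq_testMap_none (hy : 0 ≤ y) (hapex : ∀ a ∈ posSupport y, a.1 ≠ none) (c : C) :
    mass y c = testMap f y none c := by
  have hnone : y (none, c) = 0 :=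
    le_antisymm (not_lt.1 fun h => hapex _ (mem_posSupport.2 h) rfl) (hy _)
  simp only [testMap, Fintype.sum_option, hnone, zero_add, mass, slice]

lemma disjoint_posSupport_smul_slice
    (hy : ∀ v c c', (some v, c) ∈ posSupport y → (some v, c') ∈ posSupport y → c = c')
    {a : C → ℝ} (ha : ∀ c, 0 ≤ a c) {c c' : C} (hc : c ≠ c') :
    Disjoint (posSupport (a c • slice y c)) (posSupport (a c' • slice y c')) := by
  have hmem (c : C) (v : V) (hv : v ∈ posSupport (a c • slice y c)) : (some v, c) ∈ posSupport y :=
    have hv' : 0 < (a c • slice y c) v := mem_posSupport.1 hv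
    mem_posSupport.2 (pos_of_mul_pos_right hv' (ha c))
  exact Finset.disjoint_left.2 fun v hvc hvd => hc (hy v c c' (hmem c v hvc) (hmem c' v hvd))

/-- The points of a Tverberg coincidence of `f` on the realization of `X`: points indexed by `C`
with pairwise disjoint carriers and with the same image under `f`. -/
def HasTverbergPoints {F : Type*} (C : Type*) (X : Set (Finset V)) (f : (V → ℝ) → F) : Prop :=
  ∃ x : C → V → ℝ, (∀ c, x c ∈ realization X) ∧
    Pairwise (fun c c' => Disjoint (posSupport (x c)) (posSupport (x c'))) ∧
    ∀ c c', f (x c) = f (x c')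

lemma hasTverbergPoints_of_excess_nonpos [Nontrivial C] (hy : y ∈ realization (coloredComplex X))
    (h : ∀ a, excess f y a ≤ 0) : HasTverbergPoints C X f := by
  obtain ⟨hsimplex, -, hcolor⟩ := (mem_realization_iff (isLowerSet_coloredComplex X)).1 hy
  have hconst := testMap_eq_of_excess_nonpos h
  have hweight := testMap_none_pos hsimplex (hconst none)
  rcases hcolor with ⟨hapex, hunique⟩ | ⟨c, hmono⟩
  · have hmass := mass_eq_testMap_none (f := f) hsimplex.1 hapex
    have hpos (c : C) : 0 < mass y c := (hweight c).trans_eq (hmass c).symm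
    refine ⟨fun c => (mass y c)⁻¹ • slice y c,
      fun c => inv_mass_smul_slice_mem_realization hy (hpos c).ne',
      fun c c' => disjoint_posSupport_smul_slice hunique fun c => inv_nonneg.2 (hpos c).le,
      fun c c' => funext fun j => mul_left_cancel₀ (hpos c).ne' ?_⟩
    calc mass y c * f ((mass y c)⁻¹ • slice y c) j
        = mass y c' * f ((mass y c')⁻¹ • slice y c') j := hconst (some j) c c'
      _ = mass y c * f ((mass y c')⁻¹ • slice y c') j := by
        rw [hmass c, hmass c', hconst none c c']
  · obtain ⟨c', hc'⟩ := exists_ne c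
    obtain ⟨o, -, ho⟩ := Finset.exists_lt_of_sum_lt (s := Finset.univ) (f := fun _ => (0 : ℝ))
      (g := fun o => y (o, c')) (by simpa [testMap] using hweight c')
    exact absurd (hmono _ (mem_posSupport.2 ho)) hc'

end TestMap

section Tverberg

lemma approx_simplex_mem_deficientLists {R W A C : Type*} [CommRing R] [Fintype W] [DecidableEq W]
    [Fintype A] [Fintype C] {B : Set (Finset W)} {κ : (W → ℝ) → A × C → ℝ}
    {η : (W → ℝ) → A × C} {τ δ : ℝ} (hκ : ∀ y a, ∃ c, κ y (a, c) ≤ 0)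
    (hη : ∀ y ∈ realization B, τ ≤ κ y (η y))
    (hδ : ∀ x ∈ realization B, ∀ y ∈ realization B, dist x y ≤ δ → dist (κ x) (κ y) < τ)
    {M : ℕ} {l : List W} (hl : l.toFinset ∈ B)
    (hM : iterSubdiv M (simplex (l.map vertex) : Chain R (W → ℝ)) ∈
      chainsOn R (listsIn (stdFace l.toFinset) l.length ∩ fineLists δ)) :
    approx η M (simplex l : Chain R W) ∈ chainsOn R (deficientLists A C l.length) := by
  rw [approx_apply, push_simplex]
  refine push_mem_chainsOn ?_ hM
  rintro m ⟨⟨hlen, hmem⟩, hfine⟩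
  refine ⟨by simpa using hlen, fun a => ?_⟩
  rcases m with _ | ⟨y, m⟩
  · obtain ⟨c, -⟩ := hκ 0 a
    exact ⟨c, by simp⟩
  obtain ⟨c, hc⟩ := hκ y a
  refine ⟨c, fun hac => ?_⟩
  obtain ⟨x, hx, hxc⟩ := List.mem_map.1 hac
  have hface (z) (hz : z ∈ y :: m) : z ∈ realization B :=
    stdFace_subset_realization hl (hmem z hz)
  have hclose := (dist_le_pi_dist (κ x) (κ y) (a, c)).trans_lt
    (hδ x (hface x hx) y (hface y (by simp)) (hfine x hx y (by simp)))
  rw [Real.dist_eq, abs_lt] at hclose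
  have hlarge := hη x (hface x hx)
  rw [hxc] at hlarge
  linarith

variable {K V A : Type*} [CommRing K] [Fintype K] [Fintype V] {X : Set (Finset V)}

lemma exists_equivariant_label {κ : (Option V × K → ℝ) → A × K → ℝ} [Nonempty A] {τ : ℝ}
    (hκ : ∀ (g : K) y a, κ (translatePoint g y) (translate g a) = κ y a)
    (hτ : ∀ y ∈ realization (coloredComplex X), ∃ a, τ ≤ κ y a) :
    ∃ η : (Option V × K → ℝ) → A × K,
      (∀ y ∈ realization (coloredComplex X), τ ≤ κ y (η y)) ∧
      ∀ g, ∀ y ∈ realization (coloredComplex X), η (translatePoint g y) = translate g (η y) := by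
  let := translatePointAction (Option V) K
  let := translateVertexAction A K
  exact exists_equivariant_selection (fun g y hy => translatePoint_mem_realization g hy)
    (fun g y hy h => eq_zero_of_translatePoint_eq hy h) (P := fun y a => τ ≤ κ y a)
    (fun g y a h => h.trans_eq (hκ g y a).symm) hτ

variable [DecidableEq K] [DecidableEq V] {η : (Option V × K → ℝ) → A × K}

lemma approx_translateChain (hη : ∀ g, ∀ y ∈ realization (coloredComplex X),
      η (translatePoint g y) = translate g (η y))
    (M : ℕ) (g : K) {n : ℕ} {c : Chain K (Option V × K)}
    (hc : c ∈ chainsOn K (orderedFaces (coloredComplex X) n)) :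
    approx η M (translateChain g c) = translateChain g (approx η M c) := by
  refine linearMap_apply_eq_of_mem_chainsOn (F := approx η M ∘ₗ translateChain g)
    (G := translateChain g ∘ₗ approx η M) ?_ hc
  rintro l ⟨-, hl⟩
  have hvertex : vertex ∘ translate g = translatePoint g ∘ (vertex : Option V × K → _) :=
    funext fun a => (translatePoint_vertex g a).symm
  calc approx η M (translateChain g (simplex l))
      = push η (iterSubdiv M (push (translatePoint g) (push vertex (simplex l)))) := by
        rw [approx_apply, translateChain, push_push, push_push, hvertex]
    _ = push (η ∘ translatePoint g) (iterSubdiv M (simplex (l.map vertex))) := by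
        rw [← push_iterSubdiv, push_push, push_simplex]
    _ = push (translate g ∘ η) (iterSubdiv M (simplex (l.map vertex))) :=
        push_congr (iterSubdiv_vertices_mem M l) fun m hm y hy =>
          hη g y (stdFace_subset_realization hl (hm.2 y hy))
    _ = translateChain g (approx η M (simplex l)) := by
        rw [approx_apply, translateChain, push_push, push_simplex]

lemma approx_diffOperator_pow (hη : ∀ g, ∀ y ∈ realization (coloredComplex X),
      η (translatePoint g y) = translate g (η y))
    (M : ℕ) {ι : Type*} [Fintype ι] (b : ι → K) {n : ℕ} (k : ℕ) {c : Chain K (Option V × K)}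
    (hc : c ∈ chainsOn K (orderedFaces (coloredComplex X) n)) :
    approx η M ((diffOperator b ^ k) c) = (diffOperator b ^ k) (approx η M c) := by
  induction k with
  | zero => simp
  | succ k ih =>
    have hmem := diffOperator_pow_mem b map_translate_mem_orderedFaces k hc
    simp only [pow_succ', Module.End.mul_apply, ← ih, diffOperator_apply, map_sum, map_smul,
      map_sub, approx_translateChain hη M _ hmem]

/-- Without Tverberg points, the test map would turn the zigzag of chains of the coloured complex
into one of deficient chains. -/
lemma hasTverbergPoints_of_acyclic {K D : Type*} [Field K] [Fintype K] [Fintype D] (p : ℕ)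
    [Fact p.Prime] [Algebra (ZMod p) K] {s : List V} (hX : IsLowerSet X)
    (hcostar : ∀ σ ∈ X, σ.Nonempty → ∀ n, Acyclic K (costar X σ) n) (hs : s.Nodup) (hne : s ≠ [])
    (hsX : s.toFinset ∈ X) (hcard : Fintype.card (Option D) * (Fintype.card K - 1) ≤ s.length)
    {f : (V → ℝ) → D → ℝ} (hf : ContinuousOn f (realization X)) : HasTverbergPoints K X f := by
  classical
  by_contra hno
  have : CharP K p := charP_of_injective_algebraMap (algebraMap (ZMod p) K).injective p
  let b := Module.finBasis (ZMod p) K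
  obtain ⟨c, hc, hc_zero, hc_succ⟩ := exists_zigzag b p hX hcostar hs hne hsX
  obtain ⟨τ, hτ, hexcess⟩ := exists_pos_forall_exists_le (isCompact_realization _)
    (continuousOn_excess (C := K) hf) fun y hy => by
      by_contra! h
      exact hno (hasTverbergPoints_of_excess_nonpos hy h)
  obtain ⟨η, hη, hη_translate⟩ := exists_equivariant_label excess_translatePoint hexcess
  obtain ⟨δ, hδ, hδ_excess⟩ := exists_dist_lt_of_continuousOn (isCompact_realization _)
    (continuousOn_excess (C := K) hf) hτ
  obtain ⟨M, hM⟩ := exists_iterSubdiv_vertices_mem K (V := Option V × K) (s.length + 1) hδ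
  refine not_exists_zigzag_deficientLists b hcard
    ⟨fun i => approx η M (c i), fun i hi => linearMap_mem_of_mem_chainsOn ?_ (hc i hi), ?_,
      fun i hi => ?_⟩
  · rintro l ⟨hlen, hl⟩
    rw [← hlen]
    exact approx_simplex_mem_deficientLists
      (fun y j => (exists_excess_eq_zero f y j).imp fun _ h => h.le) hη hδ_excess hl (hM l (by lia))
  · rw [boundary_approx, hc_zero, approx_nil]
  · rw [boundary_approx, hc_succ i hi, approx_diffOperator_pow hη_translate M b _ (hc i hi.le)]

end Tverberg

/-! ### Geometric complexes -/

section BarycentricCoordinates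

variable {V E : Type*} [Fintype V] [AddCommGroup E] [Module ℝ E] {p : V → E} {s : Finset V}

lemma linearCombination_mem_convexHull {y : V → ℝ} (hy : y ∈ stdFace s) :
    Fintype.linearCombination ℝ p y ∈ convexHull ℝ (p '' s) := by
  have hoff : ∀ v ∈ Finset.univ, v ∉ s → y v = 0 := fun v _ hv => hy.2 v hv
  rw [Fintype.linearCombination_apply, ← Finset.sum_subset s.subset_univ
    fun v hv hvs => by rw [hoff v hv hvs, zero_smul]]
  exact (convex_convexHull ℝ _).sum_mem (fun v _ => hy.1.1 v)
    ((Finset.sum_subset s.subset_univ hoff).trans hy.1.2)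
    fun v hv => subset_convexHull ℝ _ (Set.mem_image_of_mem p hv)

lemma image_linearCombination_stdFace (p : V → E) (s : Finset V) :
    Fintype.linearCombination ℝ p '' stdFace s = convexHull ℝ (p '' s) := by
  classical
  refine (Set.image_subset_iff.2 fun y => linearCombination_mem_convexHull).antisymm
    (convexHull_min ?_ ((convex_stdFace s).linear_image _))
  rintro _ ⟨v, hv, rfl⟩
  exact ⟨vertex v, vertex_mem_stdFace hv, by simp [vertex]⟩

lemma injOn_linearCombination_stdFace (hp : AffineIndependent ℝ fun v : s => p v) :
    Set.InjOn (Fintype.linearCombination ℝ p) (stdFace s) := by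
  intro y hy y' hy' h
  have hoff (v : V) (hv : v ∉ s) : y v - y' v = 0 := by rw [hy.2 v hv, hy'.2 v hv, sub_zero]
  have hsum : ∑ v : s, (y v - y' v) = 0 := by
    rw [Finset.sum_coe_sort s fun v => y v - y' v,
      Finset.sum_subset s.subset_univ fun v _ => hoff v, Finset.sum_sub_distrib, hy.1.2, hy'.1.2,
      sub_self]
  have hsum_smul : ∑ v : s, (y v - y' v) • p v = 0 := by
    rw [Finset.sum_coe_sort s fun v => (y v - y' v) • p v,
      Finset.sum_subset s.subset_univ fun v _ hv => by rw [hoff v hv, zero_smul]]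
    simpa [Fintype.linearCombination_apply, sub_smul, sub_eq_zero] using h
  ext v
  by_cases hv : v ∈ s
  · exact sub_eq_zero.1 (affineIndependent_iff.1 hp Finset.univ (fun v => y v - y' v) hsum
      hsum_smul ⟨v, hv⟩ (Finset.mem_univ _))
  · exact sub_eq_zero.1 (hoff v hv)

end BarycentricCoordinates

section GeometricComplex

variable {E : Type*} [AddCommGroup E] [Module ℝ E] {K : SimplicialComplex ℝ E}

/-- The set of points of `E` underlying a set of vertices of `K`. -/
def vertexPoints (s : Finset K.vertices) : Finset E := s.map (Function.Embedding.subtype _)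

lemma coe_vertexPoints (s : Finset K.vertices) :
    (vertexPoints s : Set E) = Subtype.val '' (s : Set K.vertices) :=
  Finset.coe_map _ _

/-- The abstract simplicial complex of `K`, on its set of vertices. By convention it contains the
empty face, which is not a face of `K`. -/
def abstractFaces (K : SimplicialComplex ℝ E) : Set (Finset K.vertices) :=
  {s | s = ∅ ∨ vertexPoints s ∈ K.faces}

lemma isLowerSet_abstractFaces (K : SimplicialComplex ℝ E) : IsLowerSet (abstractFaces K) := by
  intro s t hts hs
  rcases t.eq_empty_or_nonempty with ht | ht
  · exact Or.inl ht
  · exact Or.inr (K.down_closed (hs.resolve_left (ht.mono hts).ne_empty)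
      (Finset.map_subset_map.2 hts) (ht.map))

lemma exists_vertexPoints_eq {s : Finset E} (hs : s ∈ K.faces) :
    ∃ t : Finset K.vertices, vertexPoints t = s := by
  classical
  refine ⟨s.subtype (· ∈ K.vertices), Finset.subtype_map_of_mem fun x hx => ?_⟩
  rw [K.vertices_eq]
  exact Set.mem_biUnion hs hx

lemma finite_vertices (hK : K.faces.Finite) : K.vertices.Finite := by
  rw [K.vertices_eq]
  exact hK.biUnion fun s _ => s.finite_toSet

variable [Fintype K.vertices]

lemma vertexPoints_posSupport_mem_faces {y : K.vertices → ℝ}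
    (hy : y ∈ realization (abstractFaces K)) : vertexPoints (posSupport y) ∈ K.faces := by
  obtain ⟨hsimplex, hface⟩ := (mem_realization_iff (isLowerSet_abstractFaces K)).1 hy
  exact hface.resolve_left (posSupport_nonempty hsimplex).ne_empty

variable (K) in
/-- The map from barycentric coordinates to points of `E`. -/
def barycentricMap : (K.vertices → ℝ) →ₗ[ℝ] E := Fintype.linearCombination ℝ (↑)

lemma image_barycentricMap_stdFace (s : Finset K.vertices) :
    barycentricMap K '' stdFace s = convexHull ℝ (vertexPoints s : Set E) := by
  rw [coe_vertexPoints]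
  exact image_linearCombination_stdFace _ s

lemma injOn_barycentricMap_stdFace {s : Finset K.vertices} (hs : vertexPoints s ∈ K.faces) :
    Set.InjOn (barycentricMap K) (stdFace s) := by
  let g : s ↪ vertexPoints s :=
    ⟨fun v => ⟨v, Finset.mem_map_of_mem _ v.2⟩,
      fun _ _ h => Subtype.ext (Subtype.ext (Subtype.mk.inj h))⟩
  exact injOn_linearCombination_stdFace ((K.indep hs).comp_embedding g)

lemma barycentricMap_mem_convexHull {y : K.vertices → ℝ} (hy : y ∈ realization (abstractFaces K)) :
    barycentricMap K y ∈ convexHull ℝ (vertexPoints (posSupport y) : Set E) := by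
  rw [← image_barycentricMap_stdFace]
  exact Set.mem_image_of_mem _ (mem_stdFace_posSupport (realization_subset_stdSimplex _ hy))

variable (K) in
lemma bijOn_barycentricMap :
    Set.BijOn (barycentricMap K) (realization (abstractFaces K)) K.space := by
  classical
  refine ⟨fun y hy => K.convexHull_subset_space (vertexPoints_posSupport_mem_faces hy)
    (barycentricMap_mem_convexHull hy), fun y hy y' hy' h => ?_, fun x hx => ?_⟩
  · have hface := vertexPoints_posSupport_mem_faces hy
    have hface' := vertexPoints_posSupport_mem_faces hy'
    have hinter := K.inter_subset_convexHull hface hface'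
      ⟨barycentricMap_mem_convexHull hy, h ▸ barycentricMap_mem_convexHull hy'⟩
    rw [← Finset.coe_inter, vertexPoints, vertexPoints, ← Finset.map_inter, ← vertexPoints,
      ← image_barycentricMap_stdFace] at hinter
    obtain ⟨z, hz, hzy⟩ := hinter
    calc y = z := (injOn_barycentricMap_stdFace hface (stdFace_mono Finset.inter_subset_left hz)
          (mem_stdFace_posSupport (realization_subset_stdSimplex _ hy)) hzy).symm
      _ = y' := injOn_barycentricMap_stdFace hface' (stdFace_mono Finset.inter_subset_right hz)
          (mem_stdFace_posSupport (realization_subset_stdSimplex _ hy')) (hzy.trans h)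
  · obtain ⟨s, hs, hxs⟩ := K.mem_space_iff.1 hx
    obtain ⟨t, rfl⟩ := exists_vertexPoints_eq hs
    rw [← image_barycentricMap_stdFace] at hxs
    exact Set.image_mono (stdFace_subset_realization (Or.inr hs)) hxs

variable (K) in
/-- The realization of the abstract complex of `K` is homeomorphic to the body of `K`. -/
def realizationHomeo [TopologicalSpace E] [ContinuousAdd E] [ContinuousSMul ℝ E] [T2Space E] :
    realization (abstractFaces K) ≃ₜ K.space :=
  have : CompactSpace (realization (abstractFaces K)) :=
    isCompact_iff_compactSpace.1 (isCompact_realization _)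
  Continuous.homeoOfEquivCompactToT2 (f := (bijOn_barycentricMap K).equiv) <| by
    refine Continuous.subtype_mk ?_ _
    simp only [barycentricMap, Fintype.linearCombination_apply]
    exact continuous_finsetSum _ fun v _ =>
      ((continuous_apply v).comp continuous_subtype_val).smul continuous_const

end GeometricComplex

section PrimePower

lemma exists_continuousOn_forall_coe_eq {Y Z : Type*} [TopologicalSpace Y] [TopologicalSpace Z]
    [Nonempty Z] {S : Set Y} {g : S → Z} (hg : Continuous g) :
    ∃ G : Y → Z, ContinuousOn G S ∧ ∀ y : S, G y = g y := by
  let G : Y → Z := Function.extend Subtype.val g fun _ => Classical.arbitrary Z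
  have hG (y : S) : G y = g y := Subtype.val_injective.extend_apply _ _ y
  exact ⟨G, continuousOn_iff_continuous_domRestrict.2 (hg.congr fun y => (hG y).symm), hG⟩

variable {V E : Type*} [Fintype V] [NormedAddCommGroup E] {X : Set (Finset V)}

lemma nonempty_sphereHomeo (e : realization X ≃ₜ Metric.sphere (0 : E) 1) :
    Nonempty (SphereHomeo X E) := by
  obtain ⟨u, hu, hue⟩ :=
    exists_continuousOn_forall_coe_eq (continuous_subtype_val.comp e.continuous)
  obtain ⟨v, hv, hve⟩ :=
    exists_continuousOn_forall_coe_eq (continuous_subtype_val.comp e.symm.continuous)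
  simp only [Subtype.forall, Function.comp_apply] at hue hve
  exact ⟨u, v, hu, hv, fun y hy => hue y hy ▸ (e ⟨y, hy⟩).2,
    fun x hx => hve x hx ▸ (e.symm ⟨x, hx⟩).2,
    fun y hy => by rw [hue y hy, hve _ (e ⟨y, hy⟩).2, Subtype.coe_eta, e.symm_apply_apply],
    fun x hx => by rw [hve x hx, hue _ (e.symm ⟨x, hx⟩).2, Subtype.coe_eta, e.apply_symm_apply]⟩

lemma HasTverbergPoints.reindex {F C C' : Type*} {f : (V → ℝ) → F} (h : HasTverbergPoints C X f)
    (e : C' ↪ C) : HasTverbergPoints C' X f := by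
  obtain ⟨x, hx, hdisj, hfx⟩ := h
  exact ⟨x ∘ e, fun c => hx _, fun c c' hc => hdisj (e.injective.ne hc), fun c c' => hfx _ _⟩

lemma hasTverbergPoints_of_sphereHomeo {C D : Type*} [Fintype C] [Fintype D]
    [InnerProductSpace ℝ E] [FiniteDimensional ℝ E] (hC : IsPrimePow (Fintype.card C))
    (hX : IsLowerSet X) (hempty : ∅ ∈ X) (φ : SphereHomeo X E)
    (hE : Module.finrank ℝ E = (Fintype.card D + 1) * (Fintype.card C - 1))
    {f : (V → ℝ) → D → ℝ} (hf : ContinuousOn f (realization X)) : HasTverbergPoints C X f := by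
  classical
  obtain ⟨p, k, hp, hk, hcard⟩ := (isPrimePow_nat_iff _).1 hC
  have : Fact p.Prime := ⟨hp⟩
  have : Fintype (GaloisField p k) := Fintype.ofFinite _
  have hcard_field : Fintype.card (GaloisField p k) = Fintype.card C := by
    rw [← Nat.card_eq_fintype_card, GaloisField.card p k hk.ne', hcard]
  have hcostar (σ) (hσ : σ ∈ X) (hne : σ.Nonempty) (n : ℕ) :
      Acyclic (GaloisField p k) (costar X σ) n := acyclic_costar hX φ hσ hne n
  obtain ⟨s, hs, hlen, hsX⟩ := exists_nodup_list_of_acyclic hX hempty hcostar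
    fun n hn => acyclic_of_sphereHomeo hX φ hn
  have hlen_pos : 0 < s.length := by
    rw [hlen, hE]
    exact Nat.mul_pos (Nat.succ_pos _) (Nat.sub_pos_of_lt hC.one_lt)
  have hpoints : HasTverbergPoints (GaloisField p k) X f :=
    hasTverbergPoints_of_acyclic p hX hcostar hs (List.length_pos_iff.1 hlen_pos) hsX
      (by rw [hlen, hE, hcard_field, Fintype.card_option]) hf
  exact hpoints.reindex (Fintype.equivOfCardEq hcard_field.symm).toEmbedding

end PrimePower

end Tverberg

open Tverberg in
theorem tverberg_for_simplicial_spheres_general {E : Type*} [AddCommGroup E] [Module ℝ E]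
    [TopologicalSpace E] [ContinuousAdd E] [ContinuousSMul ℝ E] [T2Space E]
    (r d : ℕ) (hr : IsPrimePow r) (K : SimplicialComplex ℝ E) (hKfin : K.faces.Finite)
    (hsphere : Nonempty ((K.space : Set E) ≃ₜ
      (Metric.sphere (0 : EuclideanSpace ℝ (Fin ((d + 1) * (r - 1)))) 1 : Set _)))
    (f : K.space → EuclideanSpace ℝ (Fin d)) (hf : Continuous f) :
    ∃ σ : Fin r → Finset E, (∀ i, σ i ∈ K.faces) ∧
      (Pairwise fun i j => Disjoint (σ i) (σ j)) ∧
      (⋂ i, f '' {x : K.space | (x : E) ∈ convexHull ℝ ((σ i : Set E))}).Nonempty := by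
  have := (finite_vertices hKfin).fintype
  obtain ⟨e⟩ := hsphere
  let h := realizationHomeo K
  obtain ⟨φ⟩ := nonempty_sphereHomeo (h.trans e)
  obtain ⟨F, hF, hFf⟩ := exists_continuousOn_forall_coe_eq
    ((PiLp.continuous_ofLp 2 _).comp (hf.comp h.continuous))
  obtain ⟨x, hx, hdisj, hFx⟩ := hasTverbergPoints_of_sphereHomeo (C := Fin r) (by simpa using hr)
    (isLowerSet_abstractFaces K) (Or.inl rfl) φ (by simp) hF
  have hfx (i j) : f (h ⟨x i, hx i⟩) = f (h ⟨x j, hx j⟩) := WithLp.ofLp_injective 2 <|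
    (hFf ⟨x i, hx i⟩).symm.trans ((hFx i j).trans (hFf ⟨x j, hx j⟩))
  refine ⟨fun i => vertexPoints (posSupport (x i)),
    fun i => vertexPoints_posSupport_mem_faces (hx i),
    fun i j hij => (Finset.disjoint_map _).2 (hdisj hij), f (h ⟨x ⟨0, hr.pos⟩, hx _⟩),
    Set.mem_iInter.2 fun i => ⟨h ⟨x i, hx i⟩, barycentricMap_mem_convexHull (hx i), hfx _ _⟩⟩

end

theorem tverberg_for_simplicial_spheres
    {E : Type} [NormedAddCommGroup E] [NormedSpace ℝ E]
    (r d : ℕ) (hr : IsPrimePow r) (hd : 1 ≤ d)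
    (K : SimplicialComplex ℝ E) (hKfin : K.faces.Finite)
    (hsphere : Nonempty
      ((K.space : Set E) ≃ₜ
        (Metric.sphere (0 : EuclideanSpace ℝ (Fin ((d + 1) * (r - 1)))) 1 : Set _)))
    (f : K.space → EuclideanSpace ℝ (Fin d)) (hf : Continuous f) :
    ∃ σ : Fin r → Finset E, (∀ i, σ i ∈ K.faces) ∧
      (Pairwise fun i j => Disjoint (σ i) (σ j)) ∧
      (⋂ i, f '' {x : K.space | (x : E) ∈ convexHull ℝ ((σ i : Set E))}).Nonempty :=
  tverberg_for_simplicial_spheres_general r d hr K hKfin hsphere f hf
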